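/- arXiv:1712.03504 — 2 statements merged into one kernel-verified Lean document; each statement's English description precedes it below -/
import Mathlib

section
/- Let G be a finite connected simple graph. Suppose that (i) G has at least two distinct cycles of length 6, (ii) G has no cycle of length 4, and (iii) G has no even cycle of length ≥ 8. Then deg(P_G) ≥ 3. -/
open MvPolynomial Pointwise

/-- `ρ({i,j}) = e_i + e_j` : the 0/1 (incidence) vector of an edge. -/
noncomputable def rho {N : ℕ} (e : Sym2 (Fin N)) : Fin N → ℝ :=
  fun v => if v ∈ e then 1 else 0

/-- The edge polytope of a graph on `Fin N`. -/
noncomputable def edgePolytope {N : ℕ} (G : SimpleGraph (Fin N)) : Set (Fin N → ℝ) :=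
  convexHull ℝ (rho '' G.edgeSet)

/-- Number of lattice points of the `t`-th dilation (`= 1` for `t = 0`). -/
noncomputable def ehr {N : ℕ} (P : Set (Fin N → ℝ)) (t : ℕ) : ℕ :=
  if t = 0 then 1 else Nat.card {x : Fin N → ℤ // (fun i => (x i : ℝ)) ∈ (t : ℝ) • P}

/-- The dimension of a polytope: the rank of the direction of its affine span. -/
noncomputable def polyDim {N : ℕ} (P : Set (Fin N → ℝ)) : ℕ :=
  Module.finrank ℝ (affineSpan ℝ P).direction

/-- The `i`-th coefficient of `(1-λ)^{d+1} (1 + Σ_{t≥1} |tP ∩ Z^N| λ^t)`. -/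
noncomputable def deltaCoeff {N : ℕ} (P : Set (Fin N → ℝ)) (i : ℕ) : ℤ :=
  ∑ j ∈ Finset.range (i + 1),
    (-1 : ℤ) ^ j * (Nat.choose (polyDim P + 1) j : ℤ) * (ehr P (i - j) : ℤ)

/-- The degree of the δ-polynomial of `P`. -/
noncomputable def polyDeg {N : ℕ} (P : Set (Fin N → ℝ)) : ℕ :=
  sSup {i : ℕ | deltaCoeff P i ≠ 0}

/-- The monomial `t_i t_j s` attached to an edge `{i,j}`; `s` is the variable `none`. -/
noncomputable def edgeMonom (K : Type*) [Field K] {V : Type*} (e : Sym2 V) :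
    MvPolynomial (Option V) K :=
  Sym2.lift ⟨fun i j => X (some i) * X (some j) * X none, fun i j => by ring⟩ e

/-- The edge ring `K[G]`, the subalgebra generated by the monomials `t^{ρ(e)} s`. -/
noncomputable def edgeRing (K : Type*) [Field K] {V : Type*} (G : SimpleGraph V) :
    Subalgebra K (MvPolynomial (Option V) K) :=
  Algebra.adjoin K (edgeMonom K '' G.edgeSet)

/-- The toric ideal `I_G`: kernel of `x_e ↦ t^{ρ(e)} s`. -/
noncomputable def toricIdeal (K : Type*) [Field K] {V : Type*} (G : SimpleGraph V) :
    Ideal (MvPolynomial G.edgeSet K) :=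
  RingHom.ker (MvPolynomial.aeval (fun e : G.edgeSet => edgeMonom K (e : Sym2 V)) :
    MvPolynomial G.edgeSet K →ₐ[K] MvPolynomial (Option V) K)

/-- `S/I` has a `q`-linear (minimal graded free) resolution: there is a graded free
resolution of `S/I` in which the free module at homological step `i ≥ 1` is generated
in the single degree `q + i - 1`; equivalently all Betti numbers `β_{i,j}` with
`j ≠ q + i - 1` vanish. -/
def HasLinearResolution {σ K : Type*} [Field K] (q : ℕ)
    (I : Ideal (MvPolynomial σ K)) : Prop :=
  ∃ (b : ℕ → ℕ)
    (φ₀ : (Fin (b 0) →₀ MvPolynomial σ K) →ₗ[MvPolynomial σ K] MvPolynomial σ K)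
    (φ : ∀ i : ℕ,
      (Fin (b (i + 1)) →₀ MvPolynomial σ K) →ₗ[MvPolynomial σ K]
        (Fin (b i) →₀ MvPolynomial σ K)),
    LinearMap.range φ₀ = I ∧
    LinearMap.ker φ₀ = LinearMap.range (φ 0) ∧
    (∀ i, LinearMap.ker (φ i) = LinearMap.range (φ (i + 1))) ∧
    (∀ j, (φ₀ (Finsupp.single j 1)).IsHomogeneous q) ∧
    (∀ i j k, ((φ i (Finsupp.single j 1)) k).IsHomogeneous 1)

section ConeDecomposition

set_option linter.unusedSectionVars false

variable {ι V : Type*} [Fintype ι] [DecidableEq ι] [AddCommGroup V] [Module ℝ V]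

/-- The convex cone generated by a finite family of vectors. -/
def genCone (v : ι → V) : Set V :=
  {x | ∃ c : ι → ℝ, (∀ i, 0 ≤ c i) ∧ x = ∑ i, c i • v i}

lemma self_mem_genCone (v : ι → V) (i : ι) : v i ∈ genCone v := by
  refine ⟨Pi.single i 1, fun j => ?_, ?_⟩
  · by_cases h : j = i
    · subst h; simp
    · simp [h]
  · simp [Pi.single_apply, ite_smul]

lemma add_mem_genCone {v : ι → V} {x y : V} (hx : x ∈ genCone v) (hy : y ∈ genCone v) :
    x + y ∈ genCone v := by
  obtain ⟨c, hc, rfl⟩ := hx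
  obtain ⟨d, hd, rfl⟩ := hy
  exact ⟨c + d, fun i => add_nonneg (hc i) (hd i), by simp [add_smul, Finset.sum_add_distrib]⟩

lemma smul_mem_genCone {v : ι → V} {x : V} {r : ℝ} (hr : 0 ≤ r) (hx : x ∈ genCone v) :
    r • x ∈ genCone v := by
  obtain ⟨c, hc, rfl⟩ := hx
  exact ⟨r • c, fun i => mul_nonneg hr (hc i), by simp [mul_smul, Finset.smul_sum]⟩

lemma zero_mem_genCone (v : ι → V) : (0 : V) ∈ genCone v :=
  ⟨0, fun _ => le_rfl, by simp⟩

lemma sum_mem_genCone {v : ι → V} {α : Type*} (s : Finset α) (f : α → V)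
    (h : ∀ a ∈ s, f a ∈ genCone v) : ∑ a ∈ s, f a ∈ genCone v := by
  classical
  induction s using Finset.induction_on with
  | empty => simpa using zero_mem_genCone v
  | insert a s ha ih =>
    rw [Finset.sum_insert ha]
    exact add_mem_genCone (h a (Finset.mem_insert_self a s))
      (ih fun b hb => h b (Finset.mem_insert_of_mem hb))

lemma genCone_subset_span {v : ι → V} {x : V} (hx : x ∈ genCone v) :
    x ∈ Submodule.span ℝ (Set.range v) := by
  obtain ⟨c, -, rfl⟩ := hx
  exact Submodule.sum_mem _ fun i _ => Submodule.smul_mem _ _ (Submodule.subset_span ⟨i, rfl⟩)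

lemma card_eq_finrank_span_of_linearIndepOn {v : ι → V} {σ : Finset ι}
    (h : LinearIndepOn ℝ v (σ : Set ι)) :
    σ.card = Module.finrank ℝ (Submodule.span ℝ (v '' (σ : Set ι))) := by
  have h1 := linearIndependent_iff_card_eq_finrank_span.1 h
  rw [← Nat.card_eq_fintype_card, Nat.card_eq_card_toFinset, Finset.toFinset_coe] at h1
  rw [h1, Set.finrank, Set.image_eq_range]

/-- `σ` indexes a basis of the span of the family `v`. -/
structure IsBasisSet (v : ι → V) (σ : Finset ι) : Prop where
  indep : LinearIndepOn ℝ v (σ : Set ι)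
  span_eq : Submodule.span ℝ (v '' (σ : Set ι)) = Submodule.span ℝ (Set.range v)

lemma IsBasisSet.card_eq {v : ι → V} {σ : Finset ι} (h : IsBasisSet v σ) :
    σ.card = Module.finrank ℝ (Submodule.span ℝ (Set.range v)) := by
  rw [card_eq_finrank_span_of_linearIndepOn h.indep, h.span_eq]

lemma isBasisSet_of_card {v : ι → V} {σ : Finset ι}
    (hspan : Submodule.span ℝ (v '' (σ : Set ι)) = Submodule.span ℝ (Set.range v))
    (hcard : σ.card = Module.finrank ℝ (Submodule.span ℝ (Set.range v))) : IsBasisSet v σ := by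
  refine ⟨?_, hspan⟩
  refine linearIndependent_iff_card_eq_finrank_span.2 ?_
  rw [← Nat.card_eq_fintype_card, Nat.card_eq_card_toFinset, Finset.toFinset_coe, hcard,
    ← hspan, Set.finrank]
  rw [Set.image_eq_range]

lemma exists_dual_of_linearIndepOn {v : ι → V} {σ : Finset ι}
    (h : LinearIndepOn ℝ v (σ : Set ι)) :
    ∃ κ : ι → V →ₗ[ℝ] ℝ, ∀ i ∈ σ, ∀ j ∈ σ, κ i (v j) = if i = j then 1 else 0 := by
  have h' : LinearIndependent ℝ (fun i : σ => v i) := h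
  choose F hF using fun i : σ =>
    LinearMap.exists_extend ((Finsupp.lapply i : (σ →₀ ℝ) →ₗ[ℝ] ℝ) ∘ₗ h'.repr)
  refine ⟨fun i => if hi : i ∈ σ then F ⟨i, hi⟩ else 0, fun i hi j hj => ?_⟩
  have hmem : v j ∈ Submodule.span ℝ (Set.range fun i : σ => v i) :=
    Submodule.subset_span ⟨⟨j, hj⟩, rfl⟩
  have h1 := LinearMap.congr_fun (hF ⟨i, hi⟩) ⟨v j, hmem⟩
  have h2 : h'.repr ⟨v j, hmem⟩ = Finsupp.single ⟨j, hj⟩ 1 :=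
    h'.repr_eq_single ⟨j, hj⟩ ⟨v j, hmem⟩ rfl
  simp only [LinearMap.comp_apply, Submodule.subtype_apply, h2, Finsupp.lapply_apply] at h1
  simp only [hi, dif_pos, h1, Finsupp.single_apply, Subtype.mk.injEq, eq_comm]

/-- Coordinate functionals dual to the vectors indexed by `σ`. -/
noncomputable def coord (v : ι → V) (σ : Finset ι) : ι → V →ₗ[ℝ] ℝ :=
  Classical.epsilon fun κ : ι → V →ₗ[ℝ] ℝ =>
    ∀ i ∈ σ, ∀ j ∈ σ, κ i (v j) = if i = j then 1 else 0

namespace IsBasisSet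

variable {v : ι → V} {σ : Finset ι}

lemma coord_self (h : IsBasisSet v σ) {i j : ι} (hi : i ∈ σ) (hj : j ∈ σ) :
    coord v σ i (v j) = if i = j then 1 else 0 :=
  Classical.epsilon_spec (exists_dual_of_linearIndepOn h.indep) i hi j hj

lemma coord_sum (h : IsBasisSet v σ) {i : ι} (hi : i ∈ σ) (c : ι → ℝ) :
    coord v σ i (∑ j ∈ σ, c j • v j) = c i := by
  rw [map_sum, Finset.sum_eq_single_of_mem i hi]
  · simp [h.coord_self hi hi]
  · intro j hj hne
    simp [h.coord_self hi hj, hne.symm]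

lemma sum_coord (h : IsBasisSet v σ) {x : V} (hx : x ∈ Submodule.span ℝ (Set.range v)) :
    ∑ i ∈ σ, coord v σ i x • v i = x := by
  rw [← h.span_eq] at hx
  obtain ⟨c, rfl⟩ := (Submodule.mem_span_image_finset_iff_exists_fun ℝ).1 hx
  have hc : ∑ i : σ, c i • v i = ∑ i ∈ σ, (if hi : i ∈ σ then c ⟨i, hi⟩ else 0) • v i := by
    rw [← Finset.sum_coe_sort σ]
    exact Finset.sum_congr rfl fun i _ => by simp
  rw [hc]
  exact Finset.sum_congr rfl fun i hi => by
    rw [h.coord_sum hi fun i => if hi : i ∈ σ then c ⟨i, hi⟩ else 0]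

lemma sum_coord_height (h : IsBasisSet v σ) {η : V →ₗ[ℝ] ℝ} (hη : ∀ i, η (v i) = 1) {x : V}
    (hx : x ∈ Submodule.span ℝ (Set.range v)) : ∑ i ∈ σ, coord v σ i x = η x := by
  conv_rhs => rw [← h.sum_coord hx]
  simp [hη]

lemma mem_genCone (h : IsBasisSet v σ) {x : V} (hx : x ∈ Submodule.span ℝ (Set.range v))
    (hpos : ∀ i ∈ σ, 0 ≤ coord v σ i x) : x ∈ genCone v := by
  rw [← h.sum_coord hx]
  exact sum_mem_genCone _ _ fun i hi => smul_mem_genCone (hpos i hi) (self_mem_genCone v i)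

end IsBasisSet

/-- The ratio test of the simplex method. -/
lemma exists_ratio {T : Finset ι} {c g : ι → ℝ} (hc : ∀ i ∈ T, 0 ≤ c i)
    (hg : ∃ i ∈ T, 0 < g i) :
    ∃ i ∈ T, 0 < g i ∧ ∀ j ∈ T, 0 ≤ c j - c i / g i * g j := by
  obtain ⟨i₀, hi₀, hgi₀⟩ := hg
  obtain ⟨i, hi, hmin⟩ := Finset.exists_min_image (T.filter fun i => 0 < g i)
    (fun i => c i / g i) ⟨i₀, by simp [hi₀, hgi₀]⟩
  simp only [Finset.mem_filter] at hi hmin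
  refine ⟨i, hi.1, hi.2, fun j hj => ?_⟩
  rcases lt_or_ge 0 (g j) with h | h
  · have := hmin j ⟨hj, h⟩
    rw [le_div_iff₀ h] at this
    linarith
  · have h1 : 0 ≤ c i / g i := div_nonneg (hc i hi.1) hi.2.le
    nlinarith [hc j hj, mul_nonneg h1 (neg_nonneg.2 h)]

/-- Carathéodory's theorem for cones: every point of the cone is a nonnegative combination of
a basis. -/
lemma exists_isBasisSet_coord_nonneg {v : ι → V} {η : V →ₗ[ℝ] ℝ} (hη : ∀ i, η (v i) = 1) {x : V}
    (hx : x ∈ genCone v) : ∃ σ, IsBasisSet v σ ∧ ∀ i ∈ σ, 0 ≤ coord v σ i x := by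
  classical
  have hex : ∃ T : Finset ι, ∃ c : ι → ℝ, (∀ i ∈ T, 0 ≤ c i) ∧ x = ∑ i ∈ T, c i • v i := by
    obtain ⟨c, hc, rfl⟩ := hx
    exact ⟨Finset.univ, c, fun i _ => hc i, rfl⟩
  obtain ⟨T, hT, hmin⟩ := Finset.exists_min_image
    (Finset.univ.filter fun T : Finset ι =>
      ∃ c : ι → ℝ, (∀ i ∈ T, 0 ≤ c i) ∧ x = ∑ i ∈ T, c i • v i) Finset.card
    (by obtain ⟨T, hT⟩ := hex; exact ⟨T, by simpa using hT⟩)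
  simp only [Finset.mem_filter, Finset.mem_univ, true_and] at hT hmin
  obtain ⟨c, hc, hcx⟩ := hT
  have hT : LinearIndepOn ℝ v (T : Set ι) := by
    by_contra hdep
    obtain ⟨g, hg, i₁, hi₁, hgi₁⟩ := not_linearIndepOn_finset_iff.1 hdep
    have hsum : ∑ i ∈ T, g i = 0 := by
      have := congrArg η hg
      simpa [hη] using this
    have hpos : ∃ i ∈ T, 0 < g i := by
      by_contra hno
      push Not at hno
      exact hgi₁ ((Finset.sum_eq_zero_iff_of_nonpos hno).1 hsum i₁ hi₁)
    obtain ⟨i, hi, hgi, hall⟩ := exists_ratio hc hpos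
    have hle := hmin (T.erase i) ⟨fun j => c j - c i / g i * g j,
      fun j hj => hall j (Finset.mem_of_mem_erase hj), ?_⟩
    · have := Finset.card_erase_lt_of_mem hi
      omega
    · have h1 : ∑ j ∈ T, (c j - c i / g i * g j) • v j = x := by
        simp only [sub_smul, mul_smul, Finset.sum_sub_distrib, ← Finset.smul_sum]
        rw [hg, ← hcx, smul_zero, sub_zero]
      rw [← h1, ← Finset.add_sum_erase T _ hi]
      have : c i - c i / g i * g i = 0 := by field_simp; ring
      simp [this]
  obtain ⟨b, -, hTb, hspan, hb⟩ := exists_linearIndepOn_extension hT (Set.subset_univ _)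
  have hσ : IsBasisSet v b.toFinset := by
    refine ⟨by simpa using hb, ?_⟩
    simp only [Set.coe_toFinset]
    refine le_antisymm (Submodule.span_mono (Set.image_subset_range _ _)) ?_
    rw [Submodule.span_le, ← Set.image_univ]
    exact hspan
  refine ⟨b.toFinset, hσ, fun i hi => ?_⟩
  have hTσ : T ⊆ b.toFinset := fun j hj => by simpa using hTb hj
  have h1 : x = ∑ j ∈ b.toFinset, (if j ∈ T then c j else 0) • v j := by
    rw [hcx, ← Finset.sum_subset hTσ]
    · exact Finset.sum_congr rfl fun j hj => by rw [if_pos hj]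
    · intro j _ hj; simp [hj]
  rw [h1, hσ.coord_sum hi fun j => if j ∈ T then c j else 0]
  split_ifs with h
  · exact hc i h
  · exact le_rfl

/-- The linear functional taking the value `ω i` at `v i` for every `i` in the basis `σ`. -/
noncomputable def basisCost (v : ι → V) (ω : ι → ℝ) (σ : Finset ι) : V →ₗ[ℝ] ℝ :=
  ∑ i ∈ σ, ω i • coord v σ i

lemma basisCost_apply (v : ι → V) (ω : ι → ℝ) (σ : Finset ι) (x : V) :
    basisCost v ω σ x = ∑ i ∈ σ, ω i * coord v σ i x := by
  simp [basisCost]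

/-- The bases lying on the lower hull of the lifting by `ω`, which form a regular triangulation. -/
structure IsLowerBasis (v : ι → V) (ω : ι → ℝ) (σ : Finset ι) : Prop extends IsBasisSet v σ where
  lower : ∀ e ∉ σ, basisCost v ω σ (v e) < ω e

lemma IsBasisSet.basisCost_self {v : ι → V} {σ : Finset ι} (h : IsBasisSet v σ) (ω : ι → ℝ)
    {i : ι} (hi : i ∈ σ) : basisCost v ω σ (v i) = ω i := by
  rw [basisCost_apply, Finset.sum_eq_single_of_mem i hi]
  · simp [h.coord_self hi hi]
  · intro j hj hne
    simp [h.coord_self hj hi, hne]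

lemma IsLowerBasis.subset_of_cost_le {v : ι → V} {ω : ι → ℝ} {σ τ : Finset ι}
    (hσ : IsLowerBasis v ω σ) (hτ : IsBasisSet v τ) {y : V}
    (hy : y ∈ Submodule.span ℝ (Set.range v)) (hpos : ∀ i ∈ τ, 0 < coord v τ i y)
    (hle : basisCost v ω τ y ≤ basisCost v ω σ y) : τ ⊆ σ := by
  intro j hj
  by_contra hjσ
  have h1 : basisCost v ω σ y = ∑ i ∈ τ, coord v τ i y * basisCost v ω σ (v i) := by
    conv_lhs => rw [← hτ.sum_coord hy]
    simp
  have h2 : ∑ i ∈ τ, coord v τ i y * basisCost v ω σ (v i) < ∑ i ∈ τ, ω i * coord v τ i y := by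
    refine Finset.sum_lt_sum (fun i hi => ?_) ⟨j, hj, ?_⟩
    · rw [mul_comm]
      refine mul_le_mul_of_nonneg_right ?_ (hpos i hi).le
      by_cases h : i ∈ σ
      · exact (hσ.basisCost_self ω h).le
      · exact (hσ.lower i h).le
    · rw [mul_comm]
      exact mul_lt_mul_of_pos_right (hσ.lower j hjσ) (hpos j hj)
  rw [← basisCost_apply, ← h1] at h2
  exact absurd h2 (not_lt.2 hle)

lemma IsLowerBasis.eq_of_pos {v : ι → V} {ω : ι → ℝ} {σ τ : Finset ι}
    (hσ : IsLowerBasis v ω σ) (hτ : IsLowerBasis v ω τ) {y : V}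
    (hy : y ∈ Submodule.span ℝ (Set.range v)) (hpσ : ∀ i ∈ σ, 0 < coord v σ i y)
    (hpτ : ∀ i ∈ τ, 0 < coord v τ i y) : σ = τ := by
  have hcard : σ.card = τ.card := by rw [hσ.card_eq, hτ.card_eq]
  rcases le_total (basisCost v ω σ y) (basisCost v ω τ y) with h | h
  · exact Finset.eq_of_subset_of_card_le (hτ.subset_of_cost_le hσ.toIsBasisSet hy hpσ h) hcard.ge
  · exact (Finset.eq_of_subset_of_card_le
      (hσ.subset_of_cost_le hτ.toIsBasisSet hy hpτ h) hcard.le).symm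

/-- Exchanging one element of a basis. -/
lemma IsBasisSet.exchange {v : ι → V} {σ : Finset ι} (h : IsBasisSet v σ) {i e : ι} (hi : i ∈ σ)
    (he : e ∉ σ) (hne : coord v σ i (v e) ≠ 0) : IsBasisSet v (insert e (σ.erase i)) := by
  apply isBasisSet_of_card
  · refine le_antisymm (Submodule.span_mono (Set.image_subset_range _ _)) ?_
    rw [← h.span_eq, Submodule.span_le]
    have hmem : v i ∈ Submodule.span ℝ (insert (v e) (v '' (σ.erase i : Finset ι))) := by
      refine mem_span_insert_exchange ?_ ?_
      · rw [← Set.image_insert_eq, ← Finset.coe_insert, Finset.insert_erase hi, h.span_eq]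
        exact Submodule.subset_span ⟨e, rfl⟩
      · intro hcon
        have hle : Submodule.span ℝ (v '' (σ.erase i : Finset ι)) ≤
            LinearMap.ker (coord v σ i) := by
          rw [Submodule.span_le]
          rintro _ ⟨j, hj, rfl⟩
          have hj' := Finset.mem_erase.1 (Finset.mem_coe.1 hj)
          simp [h.coord_self hi hj'.2, hj'.1.symm]
        exact hne (hle hcon)
    rintro _ ⟨j, hj, rfl⟩
    rw [Finset.coe_insert, Set.image_insert_eq]
    by_cases hji : j = i
    · rw [hji]; exact hmem
    · exact Submodule.subset_span (Or.inr ⟨j, by simpa [hji] using hj, rfl⟩)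
  · rw [Finset.card_insert_of_notMem (fun hcon => he (Finset.mem_of_mem_erase hcon)),
      Finset.card_erase_add_one hi, h.card_eq]

lemma sum_pivot {M : Type*} [AddCommGroup M] [Module ℝ M] (f : ι → M) {σ : Finset ι} {i e : ι}
    (hi : i ∈ σ) (he : e ∉ σ) {c g : ι → ℝ} {s : ℝ} (hzero : c i - s * g i = 0) :
    ∑ j ∈ insert e (σ.erase i), (if j = e then s else c j - s * g j) • f j =
      ∑ j ∈ σ, c j • f j + s • (f e - ∑ j ∈ σ, g j • f j) := by
  have heσ : e ∉ σ.erase i := fun hcon => he (Finset.mem_of_mem_erase hcon)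
  have h1 : ∑ j ∈ σ.erase i, (if j = e then s else c j - s * g j) • f j =
      ∑ j ∈ σ, (c j - s * g j) • f j := by
    rw [← Finset.add_sum_erase σ _ hi, hzero, zero_smul, zero_add]
    refine Finset.sum_congr rfl fun j hj => ?_
    have : j ≠ e := fun h => heσ (h ▸ hj)
    simp [this]
  rw [Finset.sum_insert heσ, h1]
  simp only [sub_smul, mul_smul, Finset.sum_sub_distrib, ← Finset.smul_sum, smul_sub, if_true]
  abel

/-- Every generic point of the cone lies in the interior of the cone over some lower basis. -/
lemma exists_isLowerBasis_pos {v : ι → V} {η : V →ₗ[ℝ] ℝ} (hη : ∀ i, η (v i) = 1) {ω : ι → ℝ}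
    (hω : ∀ σ, IsBasisSet v σ → ∀ e ∉ σ, basisCost v ω σ (v e) ≠ ω e) {y : V}
    (hy : y ∈ genCone v) (hgen : ∀ σ, IsBasisSet v σ → ∀ i ∈ σ, coord v σ i y ≠ 0) :
    ∃ σ, IsLowerBasis v ω σ ∧ ∀ i ∈ σ, 0 < coord v σ i y := by
  classical
  have hspan := genCone_subset_span hy
  obtain ⟨σ₀, hσ₀, hnn₀⟩ := exists_isBasisSet_coord_nonneg hη hy
  obtain ⟨σ, hσ, hmin⟩ := Finset.exists_min_image
    (Finset.univ.filter fun σ : Finset ι => IsBasisSet v σ ∧ ∀ i ∈ σ, 0 ≤ coord v σ i y)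
    (fun σ => basisCost v ω σ y) ⟨σ₀, by simpa using ⟨hσ₀, hnn₀⟩⟩
  simp only [Finset.mem_filter, Finset.mem_univ, true_and] at hσ hmin
  obtain ⟨hσ, hnn⟩ := hσ
  have hpos : ∀ i ∈ σ, 0 < coord v σ i y := fun i hi =>
    lt_of_le_of_ne (hnn i hi) (hgen σ hσ i hi).symm
  refine ⟨σ, ⟨hσ, fun e he => ?_⟩, hpos⟩
  by_contra hcost
  have hlt : ω e < basisCost v ω σ (v e) :=
    lt_of_le_of_ne (not_lt.1 hcost) (hω σ hσ e he).symm
  have hve : v e ∈ Submodule.span ℝ (Set.range v) := Submodule.subset_span ⟨e, rfl⟩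
  have hsum1 : ∑ i ∈ σ, coord v σ i (v e) = 1 := by rw [hσ.sum_coord_height hη hve, hη]
  have hex : ∃ i ∈ σ, 0 < coord v σ i (v e) := by
    by_contra hno
    push Not at hno
    linarith [Finset.sum_nonpos hno]
  obtain ⟨i, hi, hgi, hall⟩ := exists_ratio (c := fun i => coord v σ i y)
    (g := fun i => coord v σ i (v e)) hnn hex
  set s : ℝ := coord v σ i y / coord v σ i (v e) with hs
  have hspos : 0 < s := div_pos (hpos i hi) hgi
  have hτ := hσ.exchange hi he hgi.ne'
  set τ := insert e (σ.erase i) with hτdef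
  set c' : ι → ℝ := fun j => if j = e then s else coord v σ j y - s * coord v σ j (v e) with hc'
  have hzero : coord v σ i y - s * coord v σ i (v e) = 0 := by
    rw [hs]; field_simp; ring
  have hy' : y = ∑ j ∈ τ, c' j • v j := by
    rw [hτdef, hc', sum_pivot v hi he hzero, hσ.sum_coord hspan, hσ.sum_coord hve]; simp
  have hcoord : ∀ j ∈ τ, coord v τ j y = c' j := fun j hj => by
    conv_lhs => rw [hy']
    exact hτ.coord_sum hj c'
  have hle := hmin τ ⟨hτ, fun j hj => ?_⟩
  · have hcostτ : basisCost v ω τ y = ∑ j ∈ τ, c' j • ω j := by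
      rw [basisCost_apply]
      exact Finset.sum_congr rfl fun j hj => by rw [hcoord j hj, smul_eq_mul, mul_comm]
    have hflip : ∀ x, basisCost v ω σ x = ∑ j ∈ σ, coord v σ j x • ω j := fun x => by
      rw [basisCost_apply]
      exact Finset.sum_congr rfl fun j _ => by rw [smul_eq_mul, mul_comm]
    rw [hcostτ, hτdef, hc', sum_pivot ω hi he hzero, ← hflip, ← hflip, smul_eq_mul] at hle
    nlinarith [mul_pos hspos (sub_pos.2 hlt)]
  · rw [hcoord j hj]
    by_cases hje : j = e
    · simp [hc', hje, hspos.le]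
    · simp only [hc', hje, if_false]
      have : j ∈ σ.erase i := (Finset.mem_insert.1 hj).resolve_left hje
      exact hall j (Finset.mem_of_mem_erase this)

/-- A positive vector avoiding finitely many hyperplanes. -/
lemma exists_pos_forall_sum_ne_zero {α : Type*} [Finite α] (g : α → ι → ℝ) (hg : ∀ a, g a ≠ 0) :
    ∃ k : ι → ℝ, (∀ i, 0 < k i) ∧ ∀ a, ∑ i, g a i * k i ≠ 0 := by
  have := Fintype.ofFinite α
  let idx : ι → ℕ := fun i => Fintype.equivFin ι i
  have hidx : Function.Injective idx :=
    Fin.val_injective.comp (Fintype.equivFin ι).injective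
  let p : α → Polynomial ℝ := fun a => ∑ i, Polynomial.monomial (idx i) (g a i)
  have hp : ∀ a, p a ≠ 0 := by
    intro a ha
    obtain ⟨i, hi⟩ := Function.ne_iff.1 (hg a)
    apply hi
    have h1 : (p a).coeff (idx i) = 0 := by rw [ha, Polynomial.coeff_zero]
    simp only [p, Polynomial.finsetSum_coeff, Polynomial.coeff_monomial, hidx.eq_iff] at h1
    simpa using h1
  have hprod : (∏ a, p a) ≠ 0 := Finset.prod_ne_zero_iff.2 fun a _ => hp a
  obtain ⟨T, hT, hroot⟩ := ((Set.Ioi_infinite (0 : ℝ)).sdiff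
    (Polynomial.finite_setOfPred_isRoot hprod)).nonempty
  refine ⟨fun i => T ^ idx i, fun i => pow_pos hT _, fun a ha => hroot ?_⟩
  simp only [Set.mem_ofPred_eq, Polynomial.IsRoot.def, Polynomial.eval_prod]
  refine Finset.prod_eq_zero (Finset.mem_univ a) ?_
  simpa [p, Polynomial.eval_finsetSum, Polynomial.eval_monomial] using ha

lemma exists_generic_weight (v : ι → V) :
    ∃ ω : ι → ℝ, ∀ σ, IsBasisSet v σ → ∀ e ∉ σ, basisCost v ω σ (v e) ≠ ω e := by
  obtain ⟨ω, -, hω⟩ := exists_pos_forall_sum_ne_zero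
    (α := {a : Finset ι × ι // a.2 ∉ a.1})
    (fun a i => (if i ∈ a.1.1 then coord v a.1.1 i (v a.1.2) else 0) - if i = a.1.2 then 1 else 0)
    (fun a h => by
      have := congrFun h a.1.2
      simp [a.2] at this)
  refine ⟨ω, fun σ _ e he h => hω ⟨(σ, e), he⟩ ?_⟩
  rw [basisCost_apply] at h
  simp only [sub_mul, ite_mul, zero_mul, one_mul, Finset.sum_sub_distrib, Finset.sum_ite_mem,
    Finset.univ_inter, Finset.sum_ite_eq', Finset.mem_univ, if_true]
  rw [← h, sub_eq_zero]
  exact Finset.sum_congr rfl fun i _ => mul_comm _ _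

lemma exists_generic_direction (v : ι → V) :
    ∃ k : ι → ℝ, (∀ i, 0 < k i) ∧
      ∀ σ, IsBasisSet v σ → ∀ i ∈ σ, coord v σ i (∑ e, k e • v e) ≠ 0 := by
  obtain ⟨k, hk, hne⟩ := exists_pos_forall_sum_ne_zero
    (α := {a : Finset ι × ι // IsBasisSet v a.1 ∧ a.2 ∈ a.1})
    (fun a e => coord v a.1.1 a.1.2 (v e))
    (fun a h => by
      have := congrFun h a.1.2
      simp [a.2.1.coord_self a.2.2 a.2.2] at this)
  refine ⟨k, hk, fun σ hσ i hi h => hne ⟨(σ, i), hσ, hi⟩ ?_⟩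
  rw [← h]
  simp [mul_comm]

/-- `x + ε * q` is positive for all small positive `ε`. -/
def LexPos (x q : ℝ) : Prop := 0 < x ∨ (x = 0 ∧ 0 < q)

open Filter Topology in
lemma eventually_lexPos (x : ℝ) {q : ℝ} (hq : q ≠ 0) :
    ∀ᶠ ε in 𝓝[>] (0 : ℝ), (0 < x + ε * q ↔ LexPos x q) ∧ x + ε * q ≠ 0 := by
  have hcont : Tendsto (fun ε : ℝ => x + ε * q) (𝓝[>] 0) (𝓝 x) := by
    have : Continuous fun ε : ℝ => x + ε * q := by fun_prop
    simpa using (this.tendsto 0).mono_left nhdsWithin_le_nhds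
  rcases lt_trichotomy x 0 with h | h | h
  · filter_upwards [hcont.eventually (gt_mem_nhds h)] with ε hε
    exact ⟨⟨fun h' => absurd h' hε.not_gt, by rintro (h' | h') <;> linarith⟩, hε.ne⟩
  · subst h
    filter_upwards [self_mem_nhdsWithin] with ε (hε : 0 < ε)
    simp [LexPos, hε, hε.ne', hq]
  · filter_upwards [hcont.eventually (lt_mem_nhds h)] with ε hε
    exact ⟨⟨fun _ => Or.inl h, fun _ => hε⟩, hε.ne'⟩

open Filter Topology in
lemma eventually_coord_lexPos {v : ι → V} (x : V) {p : V}
    (hp : ∀ σ, IsBasisSet v σ → ∀ i ∈ σ, coord v σ i p ≠ 0) :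
    ∀ᶠ ε in 𝓝[>] (0 : ℝ), ∀ σ, IsBasisSet v σ → ∀ i ∈ σ,
      (0 < coord v σ i (x + ε • p) ↔ LexPos (coord v σ i x) (coord v σ i p)) ∧
        coord v σ i (x + ε • p) ≠ 0 := by
  simp only [map_add, map_smul, smul_eq_mul]
  refine eventually_all.2 fun σ => ?_
  by_cases hσ : IsBasisSet v σ
  · refine (eventually_all.2 fun i => ?_).mono fun ε h _ => h
    by_cases hi : i ∈ σ
    · exact (eventually_lexPos _ (hp σ hσ i hi)).mono fun ε h _ => h
    · exact Eventually.of_forall fun ε h => absurd h hi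
  · exact Eventually.of_forall fun ε h => absurd h hσ

open Filter Topology in
lemma exists_isLowerBasis_lexPos {v : ι → V} {η : V →ₗ[ℝ] ℝ} (hη : ∀ i, η (v i) = 1) {ω : ι → ℝ}
    (hω : ∀ σ, IsBasisSet v σ → ∀ e ∉ σ, basisCost v ω σ (v e) ≠ ω e) {x p : V}
    (hp : ∀ σ, IsBasisSet v σ → ∀ i ∈ σ, coord v σ i p ≠ 0)
    (hx : ∀ᶠ ε in 𝓝[>] (0 : ℝ), x + ε • p ∈ genCone v) :
    ∃ σ, IsLowerBasis v ω σ ∧ ∀ i ∈ σ, LexPos (coord v σ i x) (coord v σ i p) := by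
  obtain ⟨ε, hmem, hε⟩ := (hx.and (eventually_coord_lexPos x hp)).exists
  obtain ⟨σ, hσ, hpos⟩ := exists_isLowerBasis_pos hη hω hmem fun σ hσ i hi => (hε σ hσ i hi).2
  exact ⟨σ, hσ, fun i hi => (hε σ hσ.toIsBasisSet i hi).1.1 (hpos i hi)⟩

lemma IsLowerBasis.eq_of_lexPos {v : ι → V} {ω : ι → ℝ} {x p : V}
    (hp : ∀ σ, IsBasisSet v σ → ∀ i ∈ σ, coord v σ i p ≠ 0)
    (hx : x ∈ Submodule.span ℝ (Set.range v)) (hps : p ∈ Submodule.span ℝ (Set.range v))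
    {σ τ : Finset ι} (hσ : IsLowerBasis v ω σ) (hτ : IsLowerBasis v ω τ)
    (hxσ : ∀ i ∈ σ, LexPos (coord v σ i x) (coord v σ i p))
    (hxτ : ∀ i ∈ τ, LexPos (coord v τ i x) (coord v τ i p)) : σ = τ := by
  obtain ⟨ε, hε⟩ := (eventually_coord_lexPos x hp).exists
  exact hσ.eq_of_pos hτ (Submodule.add_mem _ hx (Submodule.smul_mem _ ε hps))
    (fun i hi => (hε σ hσ.toIsBasisSet i hi).1.2 (hxσ i hi))
    (fun i hi => (hε τ hτ.toIsBasisSet i hi).1.2 (hxτ i hi))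

/-- Membership in the half-open unit interval that is closed at the end determined by the sign
of `q`. -/
def InUnit (q x : ℝ) : Prop := (0 < q ∧ 0 ≤ x ∧ x < 1) ∨ (q < 0 ∧ 0 < x ∧ x ≤ 1)

lemma InUnit.nonneg {q x : ℝ} (h : InUnit q x) : 0 ≤ x := by
  rcases h with h | h <;> linarith

lemma InUnit.le_one {q x : ℝ} (h : InUnit q x) : x ≤ 1 := by
  rcases h with h | h <;> linarith

lemma InUnit.one_sub {q x : ℝ} (h : InUnit (-q) x) : InUnit q (1 - x) := by
  rcases h with h | h
  · exact Or.inr ⟨by linarith, by linarith, by linarith⟩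
  · exact Or.inl ⟨by linarith, by linarith, by linarith⟩

lemma InUnit.lexPos {q x : ℝ} (h : InUnit q x) (n : ℕ) : LexPos (x + n) q := by
  have hn : (0 : ℝ) ≤ n := n.cast_nonneg
  rcases h with ⟨h1, h2, h3⟩ | ⟨h1, h2, h3⟩
  · rcases (add_nonneg h2 hn).eq_or_lt with h | h
    · exact Or.inr ⟨h.symm, h1⟩
    · exact Or.inl h
  · exact Or.inl (by linarith)

lemma InUnit.unique {q x y : ℝ} (hx : InUnit q x) (hy : InUnit q y) {m n : ℕ}
    (h : x + m = y + n) : m = n := by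
  have h1 : (m : ℝ) < n + 1 := by rcases hx with hx | hx <;> rcases hy with hy | hy <;> linarith
  have h2 : (n : ℝ) < m + 1 := by rcases hx with hx | hx <;> rcases hy with hy | hy <;> linarith
  have h1' : m < n + 1 := by exact_mod_cast h1
  have h2' : n < m + 1 := by exact_mod_cast h2
  omega

lemma LexPos.exists_inUnit {q x : ℝ} (h : LexPos x q) (hq : q ≠ 0) :
    ∃ n : ℕ, InUnit q (x - n) := by
  have hx : 0 ≤ x := by rcases h with h | h <;> linarith
  rcases hq.lt_or_gt with hq | hq
  · have hx' : 0 < x := by rcases h with h | h <;> linarith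
    have hc : 0 < ⌈x⌉₊ := Nat.ceil_pos.2 hx'
    have h1 := Nat.le_ceil x
    have h2 := Nat.ceil_lt_add_one hx
    refine ⟨⌈x⌉₊ - 1, Or.inr ⟨hq, ?_, ?_⟩⟩ <;> rw [Nat.cast_sub hc] <;> push_cast <;> linarith
  · exact ⟨⌊x⌋₊, Or.inl ⟨hq, by linarith [Nat.floor_le hx], by linarith [Nat.lt_floor_add_one x]⟩⟩

/-- One can move from `m` a little in the direction `-u` and stay inside the cone. -/
def ConeAbsorbs (v : ι → V) (m u : V) : Prop := ∃ ε : ℝ, 0 < ε ∧ m - ε • u ∈ genCone v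

lemma ConeAbsorbs.add {v : ι → V} {m u w : V} (hu : ConeAbsorbs v m u) (hw : ConeAbsorbs v m w) :
    ConeAbsorbs v m (u + w) := by
  obtain ⟨ε, hε, h⟩ := hu
  obtain ⟨δ, hδ, h'⟩ := hw
  refine ⟨ε * δ / (ε + δ), by positivity, ?_⟩
  have := add_mem_genCone (smul_mem_genCone (r := δ / (ε + δ)) (by positivity) h)
    (smul_mem_genCone (r := ε / (ε + δ)) (by positivity) h')
  convert this using 1
  have h1 : δ / (ε + δ) + ε / (ε + δ) = 1 := by field_simp; ring
  have h2 : δ / (ε + δ) * ε = ε * δ / (ε + δ) := by ring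
  have h3 : ε / (ε + δ) * δ = ε * δ / (ε + δ) := by ring
  rw [smul_sub, smul_sub, smul_smul, smul_smul, h2, h3, smul_add, sub_add_sub_comm, ← add_smul, h1,
    one_smul]

lemma ConeAbsorbs.smul {v : ι → V} {m u : V} (hm : m ∈ genCone v) (hu : ConeAbsorbs v m u) {r : ℝ}
    (hr : 0 ≤ r) : ConeAbsorbs v m (r • u) := by
  rcases hr.eq_or_lt with rfl | hr
  · exact ⟨1, one_pos, by simpa using hm⟩
  · obtain ⟨ε, hε, h⟩ := hu
    exact ⟨ε / r, by positivity, by rwa [smul_smul, div_mul_cancel₀ _ hr.ne']⟩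

lemma coneAbsorbs_neg {v : ι → V} {m u : V} (hm : m ∈ genCone v) (hu : u ∈ genCone v) :
    ConeAbsorbs v m (-u) :=
  ⟨1, one_pos, by simpa using add_mem_genCone hm hu⟩

lemma ConeAbsorbs.add_left {v : ι → V} {m u w : V} (h : ConeAbsorbs v m u) (hw : w ∈ genCone v) :
    ConeAbsorbs v (m + w) u := by
  obtain ⟨ε, hε, h⟩ := h
  refine ⟨ε, hε, ?_⟩
  rw [add_sub_right_comm]
  exact add_mem_genCone h hw

/-- The directions in which one can move from `m` both ways inside the cone. -/
def absorbedSubmodule (v : ι → V) (m : V) (hm : m ∈ genCone v) : Submodule ℝ V where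
  carrier := {u | ConeAbsorbs v m u ∧ ConeAbsorbs v m (-u)}
  zero_mem' := by
    have : ConeAbsorbs v m 0 := ⟨1, one_pos, by simpa using hm⟩
    simpa using this
  add_mem' := fun {a b} ha hb => ⟨ha.1.add hb.1, by rw [neg_add]; exact ha.2.add hb.2⟩
  smul_mem' := fun r u hu => by
    rcases le_total 0 r with hr | hr
    · exact ⟨hu.1.smul hm hr, by rw [← smul_neg]; exact hu.2.smul hm hr⟩
    · refine ⟨?_, ?_⟩
      · have := hu.2.smul hm (neg_nonneg.2 hr)
        simpa using this
      · have := hu.1.smul hm (neg_nonneg.2 hr)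
        simpa using this

lemma coneAbsorbs_of_mem_span {v : ι → V} {m : V} (hm : m ∈ genCone v) {T : Set ι}
    (hT : ∀ e ∈ T, ConeAbsorbs v m (v e)) {u : V} (hu : u ∈ Submodule.span ℝ (v '' T)) :
    ConeAbsorbs v m u := by
  have hle : Submodule.span ℝ (v '' T) ≤ absorbedSubmodule v m hm := by
    rw [Submodule.span_le]
    rintro _ ⟨e, he, rfl⟩
    exact ⟨hT e he, coneAbsorbs_neg hm (self_mem_genCone v e)⟩
  exact (hle hu).1

open Filter Topology in
lemma ConeAbsorbs.eventually {v : ι → V} {m u : V} (hm : m ∈ genCone v) (hu : ConeAbsorbs v m u) :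
    ∀ᶠ ε in 𝓝[>] (0 : ℝ), m + ε • (-u) ∈ genCone v := by
  obtain ⟨δ, hδ, h⟩ := hu
  filter_upwards [Ioo_mem_nhdsGT hδ] with ε hε
  have := add_mem_genCone (smul_mem_genCone (r := 1 - ε / δ)
    (by rw [sub_nonneg, div_le_one hδ]; exact hε.2.le) hm)
    (smul_mem_genCone (r := ε / δ) (div_nonneg hε.1.le hδ.le) h)
  convert this using 1
  rw [smul_sub, smul_smul, div_mul_cancel₀ _ hδ.ne', sub_smul, one_smul, smul_neg]
  abel

/-- A box point: a basis of the triangulation together with a lattice point in the half-open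
parallelepiped spanned by this basis. -/
structure IsBoxPoint (v : ι → V) (ω : ι → ℝ) (Λ : AddSubgroup V) (p : V) (b : Finset ι × V) :
    Prop where
  lower : IsLowerBasis v ω b.1
  mem_lattice : b.2 ∈ Λ
  mem_span : b.2 ∈ Submodule.span ℝ (Set.range v)
  inUnit : ∀ i ∈ b.1, InUnit (coord v b.1 i p) (coord v b.1 i b.2)

lemma natCombination_mem_span (v : ι → V) (σ : Finset ι) (z : ι → ℕ) :
    ∑ i ∈ σ, (z i : ℝ) • v i ∈ Submodule.span ℝ (Set.range v) :=
  Submodule.sum_mem _ fun i _ => Submodule.smul_mem _ _ (Submodule.subset_span ⟨i, rfl⟩)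

lemma natCombination_mem_lattice {v : ι → V} {Λ : AddSubgroup V} (hΛ : ∀ i, v i ∈ Λ)
    (σ : Finset ι) (z : ι → ℕ) : ∑ i ∈ σ, (z i : ℝ) • v i ∈ Λ :=
  sum_mem fun i _ => by
    rw [Nat.cast_smul_eq_nsmul]
    exact nsmul_mem (hΛ i) _

open Filter Topology in
lemma exists_isBoxPoint_add {v : ι → V} {η : V →ₗ[ℝ] ℝ} (hη : ∀ i, η (v i) = 1) {ω : ι → ℝ}
    (hω : ∀ σ, IsBasisSet v σ → ∀ e ∉ σ, basisCost v ω σ (v e) ≠ ω e)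
    {Λ : AddSubgroup V} (hΛ : ∀ i, v i ∈ Λ) {x p : V}
    (hp : ∀ σ, IsBasisSet v σ → ∀ i ∈ σ, coord v σ i p ≠ 0)
    (hx : ∀ᶠ ε in 𝓝[>] (0 : ℝ), x + ε • p ∈ genCone v) (hxΛ : x ∈ Λ)
    (hxs : x ∈ Submodule.span ℝ (Set.range v)) :
    ∃ b, IsBoxPoint v ω Λ p b ∧
      ∃ z : ι →₀ ℕ, z.support ⊆ b.1 ∧ b.2 + ∑ i ∈ b.1, (z i : ℝ) • v i = x := by
  obtain ⟨σ, hσ, hlex⟩ := exists_isLowerBasis_lexPos hη hω hp hx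
  have hex : ∀ i, ∃ n : ℕ, i ∈ σ → InUnit (coord v σ i p) (coord v σ i x - n) := fun i => by
    by_cases hi : i ∈ σ
    · obtain ⟨n, hn⟩ := (hlex i hi).exists_inUnit (hp σ hσ.toIsBasisSet i hi)
      exact ⟨n, fun _ => hn⟩
    · exact ⟨0, fun h => absurd h hi⟩
  choose n hn using hex
  let z : ι →₀ ℕ := Finsupp.onFinset σ (fun i => if i ∈ σ then n i else 0) (by intro i; simp; tauto)
  have hz : ∀ i ∈ σ, z i = n i := fun i hi => by simp [z, hi]
  refine ⟨(σ, x - ∑ i ∈ σ, (z i : ℝ) • v i), ⟨hσ, ?_, ?_, fun i hi => ?_⟩, z, ?_, ?_⟩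
  · exact sub_mem hxΛ (natCombination_mem_lattice hΛ σ z)
  · exact sub_mem hxs (natCombination_mem_span v σ z)
  · rw [map_sub, hσ.toIsBasisSet.coord_sum hi (fun i => (z i : ℝ)), hz i hi]
    exact hn i hi
  · exact Finsupp.support_onFinset_subset
  · exact sub_add_cancel _ _

lemma IsBoxPoint.coord_add {v : ι → V} {ω : ι → ℝ} {Λ : AddSubgroup V} {p : V}
    {b : Finset ι × V} (hb : IsBoxPoint v ω Λ p b) (z : ι → ℕ) {i : ι} (hi : i ∈ b.1) :
    coord v b.1 i (b.2 + ∑ i ∈ b.1, (z i : ℝ) • v i) = coord v b.1 i b.2 + z i := by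
  rw [map_add, hb.lower.toIsBasisSet.coord_sum hi (fun i => (z i : ℝ))]

lemma IsBoxPoint.add_injective {v : ι → V} {ω : ι → ℝ} {Λ : AddSubgroup V} {p : V}
    (hp : ∀ σ, IsBasisSet v σ → ∀ i ∈ σ, coord v σ i p ≠ 0)
    (hps : p ∈ Submodule.span ℝ (Set.range v)) {b b' : Finset ι × V}
    (hb : IsBoxPoint v ω Λ p b) (hb' : IsBoxPoint v ω Λ p b') {z z' : ι →₀ ℕ}
    (hz : z.support ⊆ b.1) (hz' : z'.support ⊆ b'.1)
    (h : b.2 + ∑ i ∈ b.1, (z i : ℝ) • v i = b'.2 + ∑ i ∈ b'.1, (z' i : ℝ) • v i) :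
    b = b' ∧ z = z' := by
  obtain ⟨σ, y⟩ := b
  obtain ⟨τ, y'⟩ := b'
  obtain rfl : σ = τ := by
    refine IsLowerBasis.eq_of_lexPos (x := y + ∑ i ∈ σ, (z i : ℝ) • v i) hp
      (add_mem hb.mem_span (natCombination_mem_span v _ z)) hps hb.lower hb'.lower
      (fun i hi => ?_) (fun i hi => ?_)
    · have := hb.coord_add z hi
      dsimp only at this
      rw [this]
      exact (hb.inUnit i hi).lexPos _
    · have := hb'.coord_add z' hi
      dsimp only at this h
      rw [h, this]
      exact (hb'.inUnit i hi).lexPos _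
  have hzz : z = z' := by
    ext i
    by_cases hi : i ∈ σ
    · refine (hb.inUnit i hi).unique (hb'.inUnit i hi) ?_
      rw [← hb.coord_add z hi, ← hb'.coord_add z' hi, h]
    · rw [Finsupp.notMem_support_iff.1 fun h => hi (hz h),
        Finsupp.notMem_support_iff.1 fun h => hi (hz' h)]
  subst hzz
  exact ⟨Prod.ext rfl (add_right_cancel h), rfl⟩

lemma IsBoxPoint.mem_genCone {v : ι → V} {ω : ι → ℝ} {Λ : AddSubgroup V} {p : V}
    {b : Finset ι × V} (hb : IsBoxPoint v ω Λ p b) : b.2 ∈ genCone v :=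
  hb.lower.toIsBasisSet.mem_genCone hb.mem_span fun i hi => (hb.inUnit i hi).nonneg

lemma height_nonneg {v : ι → V} {η : V →ₗ[ℝ] ℝ} (hη : ∀ i, η (v i) = 1) {x : V}
    (hx : x ∈ genCone v) : 0 ≤ η x := by
  obtain ⟨c, hc, rfl⟩ := hx
  simpa [hη] using Finset.sum_nonneg fun i _ => hc i

lemma IsBoxPoint.height_le {v : ι → V} {η : V →ₗ[ℝ] ℝ} (hη : ∀ i, η (v i) = 1) {ω : ι → ℝ}
    {Λ : AddSubgroup V} {p : V} {b : Finset ι × V} (hb : IsBoxPoint v ω Λ p b) :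
    η b.2 ≤ Module.finrank ℝ (Submodule.span ℝ (Set.range v)) := by
  rw [← hb.lower.toIsBasisSet.sum_coord_height hη hb.mem_span, ← hb.lower.toIsBasisSet.card_eq]
  simpa using Finset.sum_le_sum fun i hi => (hb.inUnit i hi).le_one

lemma exists_nat_height {v : ι → V} {η : V →ₗ[ℝ] ℝ} (hη : ∀ i, η (v i) = 1) {Λ : AddSubgroup V}
    (hinteger : ∀ x ∈ Λ, ∃ k : ℤ, η x = k) {x : V} (hx : x ∈ Λ) (hxc : x ∈ genCone v) :
    ∃ k : ℕ, η x = k := by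
  obtain ⟨k, hk⟩ := hinteger x hx
  have h0 := height_nonneg hη hxc
  rw [hk] at h0
  lift k to ℕ using (by exact_mod_cast h0)
  exact ⟨k, by simpa using hk⟩

lemma IsBoxPoint.finite {v : ι → V} {η : V →ₗ[ℝ] ℝ} (hη : ∀ i, η (v i) = 1) {ω : ι → ℝ}
    {Λ : AddSubgroup V} {p : V} (hinteger : ∀ x ∈ Λ, ∃ k : ℤ, η x = k)
    (hfin : ∀ t : ℕ, {x | x ∈ Λ ∧ x ∈ genCone v ∧ η x = t}.Finite) :
    {b | IsBoxPoint v ω Λ p b}.Finite := by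
  let n := Module.finrank ℝ (Submodule.span ℝ (Set.range v))
  refine ((Set.finite_univ (α := Finset ι)).prod
    ((Set.finite_Iic n).biUnion fun t _ => hfin t)).subset fun b hb => ⟨trivial, ?_⟩
  obtain ⟨k, hk⟩ := exists_nat_height hη hinteger hb.mem_lattice hb.mem_genCone
  refine Set.mem_biUnion (x := k) ?_ ⟨hb.mem_lattice, hb.mem_genCone, hk⟩
  have := hb.height_le hη
  rw [hk] at this
  exact_mod_cast this

open Filter Topology in
/-- The generating function of the lattice points of a cone as a sum over box points. -/
lemma mk_card_lattice_eq_sum_isBoxPoint {v : ι → V} {η : V →ₗ[ℝ] ℝ} (hη : ∀ i, η (v i) = 1)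
    {ω : ι → ℝ} (hω : ∀ σ, IsBasisSet v σ → ∀ e ∉ σ, basisCost v ω σ (v e) ≠ ω e)
    {Λ : AddSubgroup V} (hΛ : ∀ i, v i ∈ Λ) {q : V}
    (hq : ∀ σ, IsBasisSet v σ → ∀ i ∈ σ, coord v σ i q ≠ 0) (hqc : q ∈ genCone v)
    (B : Finset (Finset ι × V)) (hB : ∀ b, b ∈ B ↔ IsBoxPoint v ω Λ q b) (h : V → ℕ)
    (hh : ∀ b ∈ B, η b.2 = h b.2) :
    (PowerSeries.mk fun t : ℕ => (Nat.card {x // x ∈ Λ ∧ x ∈ genCone v ∧ η x = t} : ℤ)) =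
      ∑ b ∈ B, PowerSeries.X ^ h b.2 *
        PowerSeries.mk 1 ^ Module.finrank ℝ (Submodule.span ℝ (Set.range v)) := by
  classical
  ext t
  have hcoeff : ∀ b ∈ B,
      PowerSeries.coeff t (PowerSeries.X ^ h b.2 * (PowerSeries.mk 1 : PowerSeries ℤ) ^
      Module.finrank ℝ (Submodule.span ℝ (Set.range v))) =
      ((if h b.2 ≤ t then b.1.finsuppAntidiag (t - h b.2) else ∅).card : ℤ) := fun b hb => by
    rw [PowerSeries.coeff_X_pow_mul', ← ((hB b).1 hb).lower.toIsBasisSet.card_eq,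
      ← Finset.prod_const]
    split_ifs
    · rw [PowerSeries.coeff_prod]
      simp
    · simp
  rw [PowerSeries.coeff_mk, map_sum, Finset.sum_congr rfl hcoeff, ← Nat.cast_sum,
    ← Finset.card_sigma, Nat.cast_inj]
  let f : (Σ _ : Finset ι × V, ι →₀ ℕ) → V := fun a => a.1.2 + ∑ i ∈ a.1.1, (a.2 i : ℝ) • v i
  have hmem : ∀ a ∈ B.sigma fun b =>
      if h b.2 ≤ t then b.1.finsuppAntidiag (t - h b.2) else ∅,
      IsBoxPoint v ω Λ q a.1 ∧ a.2.support ⊆ a.1.1 ∧ h a.1.2 + a.1.1.sum a.2 = t := by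
    rintro ⟨b, z⟩ ha
    rw [Finset.mem_sigma] at ha
    obtain ⟨hb, hz⟩ := ha
    dsimp only at hb hz
    split_ifs at hz with hle
    · rw [Finset.mem_finsuppAntidiag] at hz
      exact ⟨(hB b).1 hb, hz.2, by dsimp only; omega⟩
    · simp at hz
  rw [← Finset.card_image_of_injOn (f := f), ← Set.ncard_coe_finset, ← Nat.card_coe_set_eq]
  · refine Nat.card_congr (Equiv.setCongr ?_)
    ext x
    simp only [Finset.coe_image, Set.mem_image, Finset.mem_coe]
    constructor
    · rintro ⟨hxΛ, hxc, hxt⟩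
      obtain ⟨b, hb, z, hz, hx⟩ := exists_isBoxPoint_add (x := x) hη hω hΛ hq (by
        filter_upwards [self_mem_nhdsWithin] with ε hε
        exact add_mem_genCone hxc (smul_mem_genCone (le_of_lt hε) hqc)) hxΛ
        (genCone_subset_span hxc)
      have hsum : h b.2 + b.1.sum z = t := by
        have := congrArg η hx
        rw [map_add, hh b ((hB b).2 hb), hxt] at this
        simp only [map_sum, map_smul, hη, smul_eq_mul, mul_one] at this
        exact_mod_cast this
      refine ⟨⟨b, z⟩, Finset.mem_sigma.2 ⟨(hB b).2 hb, ?_⟩, hx⟩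
      dsimp only
      rw [if_pos (by omega), Finset.mem_finsuppAntidiag]
      exact ⟨by omega, hz⟩
    · rintro ⟨a, ha, rfl⟩
      obtain ⟨hb, hz, hsum⟩ := hmem a ha
      refine ⟨add_mem hb.mem_lattice (natCombination_mem_lattice hΛ _ _),
        add_mem_genCone hb.mem_genCone (sum_mem_genCone _ _ fun i _ =>
          smul_mem_genCone (Nat.cast_nonneg _) (self_mem_genCone v i)), ?_⟩
      simp only [f, map_add, map_sum, map_smul, hη, smul_eq_mul, mul_one]
      rw [hh _ ((hB _).2 hb), ← hsum]
      push_cast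
      rfl
  · rintro ⟨b, z⟩ ha ⟨b', z'⟩ ha' hf
    obtain ⟨hb, hz, -⟩ := hmem _ ha
    obtain ⟨hb', hz', -⟩ := hmem _ ha'
    obtain ⟨rfl, rfl⟩ := hb.add_injective hq (genCone_subset_span hqc) hb' hz hz' hf
    rfl

open Filter Topology in
/-- A lattice point of small height in the interior of the cone yields a box point of large
height. -/
lemma exists_isBoxPoint_height_ge {v : ι → V} {η : V →ₗ[ℝ] ℝ} (hη : ∀ i, η (v i) = 1)
    {ω : ι → ℝ} (hω : ∀ σ, IsBasisSet v σ → ∀ e ∉ σ, basisCost v ω σ (v e) ≠ ω e)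
    {Λ : AddSubgroup V} (hΛ : ∀ i, v i ∈ Λ) {q : V}
    (hq : ∀ σ, IsBasisSet v σ → ∀ i ∈ σ, coord v σ i q ≠ 0) {m : V} (hm : m ∈ Λ)
    (hms : m ∈ Submodule.span ℝ (Set.range v))
    (hmq : ∀ᶠ ε in 𝓝[>] (0 : ℝ), m + ε • (-q) ∈ genCone v) :
    ∃ b, IsBoxPoint v ω Λ q b ∧
      (Module.finrank ℝ (Submodule.span ℝ (Set.range v)) : ℝ) ≤ η b.2 + η m := by
  obtain ⟨b, hb, z, -, hx⟩ := exists_isBoxPoint_add hη hω hΛ (p := -q)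
    (fun σ hσ i hi => by simpa using hq σ hσ i hi) hmq hm hms
  have h1 : ∑ i ∈ b.1, v i ∈ Submodule.span ℝ (Set.range v) :=
    sum_mem fun i _ => Submodule.subset_span ⟨i, rfl⟩
  refine ⟨(b.1, ∑ i ∈ b.1, v i - b.2), ⟨hb.lower, sub_mem (sum_mem fun i _ => hΛ i) hb.mem_lattice,
    sub_mem h1 hb.mem_span, fun i hi => ?_⟩, ?_⟩
  · have := hb.lower.toIsBasisSet.coord_sum hi 1
    simp only [Pi.one_apply, one_smul] at this
    rw [map_sub, this]
    have := hb.inUnit i hi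
    rw [map_neg] at this
    exact this.one_sub
  · have h2 : η b.2 ≤ η m := by
      rw [← hx]
      simp only [map_add, map_sum, map_smul, hη, smul_eq_mul, mul_one]
      linarith [Finset.sum_nonneg fun i (_ : i ∈ b.1) => (Nat.cast_nonneg (z i) : (0 : ℝ) ≤ z i)]
    rw [← hb.lower.toIsBasisSet.card_eq]
    simp only [map_sub, map_sum, hη, Finset.sum_const, nsmul_eq_mul, mul_one]
    linarith

lemma coeff_one_sub_pow_mul_mk (n : ℕ) (f : ℕ → ℤ) (i : ℕ) :
    PowerSeries.coeff i ((1 - PowerSeries.X) ^ n * PowerSeries.mk f) =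
      ∑ j ∈ Finset.range (i + 1), (-1 : ℤ) ^ j * (n.choose j : ℤ) * f (i - j) := by
  have hj : ∀ j, PowerSeries.coeff j ((1 - PowerSeries.X : PowerSeries ℤ) ^ n) =
      (-1 : ℤ) ^ j * (n.choose j : ℤ) := fun j => by
    have h1 : (1 - PowerSeries.X : PowerSeries ℤ) ^ n =
        PowerSeries.rescale (-1) (((1 + Polynomial.X) ^ n : Polynomial ℤ) : PowerSeries ℤ) := by
      simp [sub_eq_add_neg, PowerSeries.rescale_X]
    rw [h1, PowerSeries.coeff_rescale, Polynomial.coeff_coe, Polynomial.coeff_one_add_X_pow]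
  rw [PowerSeries.coeff_mul, Finset.Nat.sum_antidiagonal_eq_sum_range_succ_mk]
  simp [hj]

/-- The `δ`-vector of a lattice cone is finitely supported and is nonzero in some large degree as
soon as the cone has an interior lattice point of small height. -/
theorem exists_delta_ne_zero {v : ι → V} {η : V →ₗ[ℝ] ℝ} (hη : ∀ i, η (v i) = 1)
    {Λ : AddSubgroup V} (hΛ : ∀ i, v i ∈ Λ) (hinteger : ∀ x ∈ Λ, ∃ k : ℤ, η x = k)
    (hfin : ∀ t : ℕ, {x | x ∈ Λ ∧ x ∈ genCone v ∧ η x = t}.Finite) {m : V} (hm : m ∈ Λ)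
    (hmc : m ∈ genCone v)
    (habs : ∀ u ∈ Submodule.span ℝ (Set.range v), ConeAbsorbs v m u) {n : ℕ}
    (hn : Module.finrank ℝ (Submodule.span ℝ (Set.range v)) = n) {δ : ℕ → ℤ}
    (hδ : ∀ i, δ i = ∑ j ∈ Finset.range (i + 1), (-1 : ℤ) ^ j * (n.choose j : ℤ) *
      (Nat.card {x // x ∈ Λ ∧ x ∈ genCone v ∧ η x = ((i - j : ℕ) : ℝ)} : ℤ)) :
    {i | δ i ≠ 0}.Finite ∧ ∃ i : ℕ, δ i ≠ 0 ∧ (n : ℝ) ≤ i + η m := by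
  classical
  obtain ⟨ω, hω⟩ := exists_generic_weight v
  obtain ⟨k, hk, hq⟩ := exists_generic_direction v
  set q := ∑ e, k e • v e
  have hqc : q ∈ genCone v := ⟨k, fun i => (hk i).le, rfl⟩
  have hBfin := IsBoxPoint.finite (ω := ω) (p := q) hη hinteger hfin
  have hB : ∀ b, b ∈ hBfin.toFinset ↔ IsBoxPoint v ω Λ q b := by simp
  have hex : ∀ x : V, ∃ k : ℕ, x ∈ Λ → x ∈ genCone v → η x = k := fun x => by
    by_cases h : x ∈ Λ ∧ x ∈ genCone v
    · obtain ⟨k, hk⟩ := exists_nat_height hη hinteger h.1 h.2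
      exact ⟨k, fun _ _ => hk⟩
    · exact ⟨0, fun h1 h2 => absurd ⟨h1, h2⟩ h⟩
  choose h hh using hex
  have hser := mk_card_lattice_eq_sum_isBoxPoint hη hω hΛ hq hqc hBfin.toFinset hB h
    fun b hb => hh _ ((hB b).1 hb).mem_lattice ((hB b).1 hb).mem_genCone
  have hδ' : ∀ i, δ i = ((hBfin.toFinset.filter fun b => h b.2 = i).card : ℤ) := fun i => by
    rw [hδ, ← coeff_one_sub_pow_mul_mk n
      (fun t => (Nat.card {x // x ∈ Λ ∧ x ∈ genCone v ∧ η x = t} : ℤ)), hser, hn,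
      ← Finset.sum_mul, mul_left_comm, ← mul_pow, mul_comm (1 - PowerSeries.X),
      PowerSeries.mk_one_mul_one_sub_eq_one, one_pow, mul_one, map_sum]
    simp [PowerSeries.coeff_X_pow, eq_comm]
  refine ⟨(hBfin.toFinset.image fun b => h b.2).finite_toSet.subset fun i hi => ?_, ?_⟩
  · have hi' : δ i ≠ 0 := hi
    rw [hδ', Nat.cast_ne_zero, Finset.card_ne_zero] at hi'
    obtain ⟨b, hb⟩ := hi'
    rw [Finset.mem_filter] at hb
    exact Finset.mem_coe.2 (Finset.mem_image.2 ⟨b, hb⟩)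
  · obtain ⟨b, hb, hle⟩ := exists_isBoxPoint_height_ge hη hω hΛ hq hm (genCone_subset_span hmc)
      ((habs q (genCone_subset_span hqc)).eventually hmc)
    refine ⟨h b.2, ?_, ?_⟩
    · rw [hδ', Nat.cast_ne_zero, Finset.card_ne_zero]
      exact ⟨b, Finset.mem_filter.2 ⟨(hB b).2 hb, rfl⟩⟩
    · rw [← hn, ← hh _ hb.mem_lattice hb.mem_genCone]
      exact hle

lemma ConeAbsorbs.of_add {v : ι → V} {m u w : V} (hm : m ∈ genCone v)
    (h : ConeAbsorbs v m (u + w)) (hw : w ∈ genCone v) : ConeAbsorbs v m u := by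
  simpa using h.add (coneAbsorbs_neg hm hw)

lemma coneAbsorbs_sum_self {v : ι → V} {α : Type*} {s : Finset α} (f : α → ι) {a : α}
    (ha : a ∈ s) : ConeAbsorbs v (∑ b ∈ s, v (f b)) (v (f a)) := by
  classical
  refine ⟨1, one_pos, ?_⟩
  rw [one_smul, ← Finset.add_sum_erase s _ ha, add_sub_cancel_left]
  exact sum_mem_genCone _ _ fun b _ => self_mem_genCone v _

/-- An interior point of the cone over a subfamily extends to an interior point of the whole cone,
at the cost of one generator for each missing dimension. -/
lemma exists_coneAbsorbs_span {v : ι → V} {η : V →ₗ[ℝ] ℝ} (hη : ∀ i, η (v i) = 1)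
    {Λ : AddSubgroup V} (hΛ : ∀ i, v i ∈ Λ) {m : V} (hm : m ∈ Λ) (hmc : m ∈ genCone v)
    {T : Set ι} (hT : ∀ e ∈ T, ConeAbsorbs v m (v e)) :
    ∃ m' ∈ Λ, m' ∈ genCone v ∧
      (∀ u ∈ Submodule.span ℝ (Set.range v), ConeAbsorbs v m' u) ∧
      η m' + Module.finrank ℝ (Submodule.span ℝ (v '' T)) =
        η m + Module.finrank ℝ (Submodule.span ℝ (Set.range v)) := by
  classical
  obtain ⟨B₀, hB₀T, -, hspan₀, hind₀⟩ :=
    exists_linearIndepOn_extension (linearIndepOn_empty ℝ v) (Set.empty_subset T)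
  obtain ⟨B, -, hB₀B, hspan, hind⟩ := exists_linearIndepOn_extension hind₀ (Set.subset_univ B₀)
  lift B₀ to Finset ι using B₀.toFinite
  lift B to Finset ι using B.toFinite
  have hs₀ : Submodule.span ℝ (v '' (B₀ : Set ι)) = Submodule.span ℝ (v '' T) :=
    le_antisymm (Submodule.span_mono (Set.image_mono hB₀T)) (Submodule.span_le.2 hspan₀)
  have hs : Submodule.span ℝ (v '' (B : Set ι)) = Submodule.span ℝ (Set.range v) :=
    le_antisymm (Submodule.span_mono (Set.image_subset_range _ _))
      (Submodule.span_le.2 (by rwa [Set.image_univ] at hspan))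
  have hsub : B₀ ⊆ B := Finset.coe_subset.1 hB₀B
  have hc := card_eq_finrank_span_of_linearIndepOn hind
  have hc₀ := card_eq_finrank_span_of_linearIndepOn hind₀
  rw [hs] at hc
  rw [hs₀] at hc₀
  have hmem : ∑ f ∈ B \ B₀, v f ∈ genCone v :=
    sum_mem_genCone _ _ fun f _ => self_mem_genCone v f
  have hmc' : m + ∑ f ∈ B \ B₀, v f ∈ genCone v := add_mem_genCone hmc hmem
  refine ⟨m + ∑ f ∈ B \ B₀, v f, add_mem hm (sum_mem fun f _ => hΛ f), hmc', fun u hu => ?_, ?_⟩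
  · rw [← hs] at hu
    refine coneAbsorbs_of_mem_span hmc' (fun e he => ?_) hu
    by_cases he₀ : e ∈ B₀
    · exact (hT e (hB₀T he₀)).add_left hmem
    · rw [add_comm]
      exact (coneAbsorbs_sum_self id (Finset.mem_sdiff.2 ⟨he, he₀⟩)).add_left hmc
  · have hcard := Finset.card_sdiff_add_card_eq_card hsub
    rw [← hc, ← hc₀, ← hcard]
    simp only [map_add, map_sum, hη, Finset.sum_const, nsmul_eq_mul, mul_one]
    push_cast
    ring

end ConeDecomposition

section EdgePolytope

lemma finrank_vectorSpan_add_one_of_height {V : Type*} [AddCommGroup V] [Module ℝ V]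
    [FiniteDimensional ℝ V] {s : Set V} (hs : s.Nonempty) {η : V →ₗ[ℝ] ℝ}
    (hη : ∀ x ∈ s, η x = 1) :
    Module.finrank ℝ (vectorSpan ℝ s) + 1 = Module.finrank ℝ (Submodule.span ℝ s) := by
  obtain ⟨p, hp⟩ := hs
  have hp0 : p ≠ 0 := fun h => by simpa [h] using hη p hp
  have hker : vectorSpan ℝ s ≤ LinearMap.ker η := by
    rw [vectorSpan_def, Submodule.span_le]
    rintro _ ⟨x, hx, y, hy, rfl⟩
    simp [hη x hx, hη y hy]
  have hinf : vectorSpan ℝ s ⊓ Submodule.span ℝ {p} = ⊥ := by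
    rw [eq_bot_iff]
    rintro x ⟨hx, hx'⟩
    obtain ⟨c, rfl⟩ := Submodule.mem_span_singleton.1 hx'
    have h0 : c = 0 := by simpa [hη p hp] using hker hx
    simp [h0]
  have hsup : vectorSpan ℝ s ⊔ Submodule.span ℝ {p} = Submodule.span ℝ s := by
    refine le_antisymm (sup_le ?_ (Submodule.span_mono (by simpa using hp))) ?_
    · rw [vectorSpan_def, Submodule.span_le]
      rintro _ ⟨x, hx, y, hy, rfl⟩
      exact sub_mem (Submodule.subset_span hx) (Submodule.subset_span hy)
    · rw [Submodule.span_le]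
      intro x hx
      have : x = (x -ᵥ p) + p := by simp
      rw [this]
      exact Submodule.add_mem_sup (vsub_mem_vectorSpan ℝ hx hp)
        (Submodule.mem_span_singleton_self p)
  have := Submodule.finrank_sup_add_finrank_inf_eq (vectorSpan ℝ s) (Submodule.span ℝ {p})
  rw [hsup, hinf, finrank_bot, finrank_span_singleton hp0] at this
  omega

variable {N : ℕ}

/-- The generators of the edge cone. -/
noncomputable def edgeVec (G : SimpleGraph (Fin N)) (e : G.edgeSet) : Fin N → ℝ :=
  rho (e : Sym2 (Fin N))

/-- Half of the coordinate sum; it takes the value `1` on every edge vector. -/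
noncomputable def height (N : ℕ) : (Fin N → ℝ) →ₗ[ℝ] ℝ :=
  (1 / 2 : ℝ) • ∑ i, LinearMap.proj i

lemma height_apply (x : Fin N → ℝ) : height N x = 1 / 2 * ∑ i, x i := by
  simp [height]

lemma rho_mk {a b : Fin N} (hab : a ≠ b) :
    rho s(a, b) = Pi.single a (1 : ℝ) + Pi.single b 1 := by
  ext k
  simp only [rho, Sym2.mem_iff, Pi.add_apply, Pi.single_apply]
  by_cases h1 : k = a
  · subst h1; simp [hab]
  · simp [h1]

lemma height_edgeVec (G : SimpleGraph (Fin N)) (e : G.edgeSet) : height N (edgeVec G e) = 1 := by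
  obtain ⟨e, he⟩ := e
  induction e with
  | _ a b =>
    rw [edgeVec, rho_mk (G.ne_of_adj he), height_apply]
    simp [Finset.sum_add_distrib]
    norm_num

/-- The integer vectors with even coordinate sum. -/
noncomputable def evenLattice (N : ℕ) : AddSubgroup (Fin N → ℝ) where
  carrier := {x | (∃ z : Fin N → ℤ, (fun i => (z i : ℝ)) = x) ∧ ∃ k : ℤ, height N x = k}
  zero_mem' := ⟨⟨0, by ext; simp⟩, 0, by simp⟩
  add_mem' := by
    rintro _ _ ⟨⟨z, rfl⟩, k, hk⟩ ⟨⟨w, rfl⟩, l, hl⟩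
    exact ⟨⟨z + w, by ext; simp⟩, k + l, by rw [map_add, hk, hl]; simp⟩
  neg_mem' := by
    rintro _ ⟨⟨z, rfl⟩, k, hk⟩
    exact ⟨⟨-z, by ext; simp⟩, -k, by rw [map_neg, hk]; simp⟩

lemma edgeVec_mem_evenLattice (G : SimpleGraph (Fin N)) (e : G.edgeSet) :
    edgeVec G e ∈ evenLattice N := by
  classical
  exact ⟨⟨fun i => if i ∈ (e : Sym2 (Fin N)) then 1 else 0, by ext; simp [edgeVec, rho]⟩, 1,
    by simp [height_edgeVec]⟩

lemma range_edgeVec (G : SimpleGraph (Fin N)) : Set.range (edgeVec G) = rho '' G.edgeSet := by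
  ext x
  simp [edgeVec]

lemma polyDim_edgePolytope_add_one (G : SimpleGraph (Fin N)) (hG : G.edgeSet.Nonempty) :
    polyDim (edgePolytope G) + 1 =
      Module.finrank ℝ (Submodule.span ℝ (Set.range (edgeVec G))) := by
  rw [polyDim, edgePolytope, affineSpan_convexHull, direction_affineSpan, range_edgeVec]
  refine finrank_vectorSpan_add_one_of_height (hG.image _) (η := height N) ?_
  rintro _ ⟨e, he, rfl⟩
  exact height_edgeVec G ⟨e, he⟩

variable (G : SimpleGraph (Fin N)) [Fintype G.edgeSet]

lemma mem_edgePolytope_iff {x : Fin N → ℝ} :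
    x ∈ edgePolytope G ↔ x ∈ genCone (edgeVec G) ∧ height N x = 1 := by
  rw [edgePolytope, ← range_edgeVec]
  constructor
  · intro hx
    refine convexHull_min (t := {x | x ∈ genCone (edgeVec G) ∧ height N x = 1}) ?_ ?_ hx
    · rintro _ ⟨e, rfl⟩
      classical
      exact ⟨self_mem_genCone _ e, height_edgeVec G e⟩
    · rintro x ⟨hx, hx'⟩ y ⟨hy, hy'⟩ a b ha hb hab
      refine ⟨add_mem_genCone (smul_mem_genCone ha hx) (smul_mem_genCone hb hy), ?_⟩
      simp [hx', hy', hab]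
  · rintro ⟨⟨c, hc, rfl⟩, hx⟩
    refine (convex_convexHull ℝ _).sum_mem (fun i _ => hc i) ?_
      fun i _ => subset_convexHull ℝ _ ⟨i, rfl⟩
    simpa [height_edgeVec] using hx

lemma mem_smul_edgePolytope_iff {t : ℕ} (ht : t ≠ 0) {x : Fin N → ℝ} :
    x ∈ (t : ℝ) • edgePolytope G ↔ x ∈ genCone (edgeVec G) ∧ height N x = t := by
  have ht' : (t : ℝ) ≠ 0 := Nat.cast_ne_zero.2 ht
  rw [Set.mem_smul_set_iff_inv_smul_mem₀ ht', mem_edgePolytope_iff, map_smul, smul_eq_mul]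
  constructor
  · rintro ⟨h1, h2⟩
    refine ⟨?_, by field_simp at h2; exact h2⟩
    simpa [smul_smul, ht'] using smul_mem_genCone (Nat.cast_nonneg (α := ℝ) t) h1
  · rintro ⟨h1, h2⟩
    exact ⟨smul_mem_genCone (by positivity) h1, by rw [h2, inv_mul_cancel₀ ht']⟩

lemma eq_zero_of_height_eq_zero {x : Fin N → ℝ} (hx : x ∈ genCone (edgeVec G))
    (h : height N x = 0) : x = 0 := by
  obtain ⟨c, hc, rfl⟩ := hx
  simp only [map_sum, map_smul, height_edgeVec, smul_eq_mul, mul_one] at h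
  rw [Finset.sum_eq_zero_iff_of_nonneg fun i _ => hc i] at h
  exact Finset.sum_eq_zero fun i hi => by rw [h i hi, zero_smul]

lemma ehr_edgePolytope (t : ℕ) : ehr (edgePolytope G) t =
    Nat.card {x // x ∈ evenLattice N ∧ x ∈ genCone (edgeVec G) ∧ height N x = t} := by
  rw [ehr]
  split_ifs with ht
  · subst ht
    symm
    rw [Nat.card_eq_one_iff_unique]
    refine ⟨⟨fun x y => Subtype.ext ?_⟩, ⟨0, zero_mem _, zero_mem_genCone _, by simp⟩⟩
    rw [eq_zero_of_height_eq_zero G x.2.2.1 (by simpa using x.2.2.2),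
      eq_zero_of_height_eq_zero G y.2.2.1 (by simpa using y.2.2.2)]
  · refine Nat.card_eq_of_bijective (fun x => ⟨fun i => (x.1 i : ℝ), ?_⟩) ⟨?_, ?_⟩
    · obtain ⟨h1, h2⟩ := (mem_smul_edgePolytope_iff G ht).1 x.2
      exact ⟨⟨⟨x.1, rfl⟩, t, by simpa using h2⟩, h1, h2⟩
    · intro x y h
      ext i
      simpa using congrFun (congrArg Subtype.val h) i
    · rintro ⟨_, ⟨⟨z, rfl⟩, -⟩, h1, h2⟩
      exact ⟨⟨z, (mem_smul_edgePolytope_iff G ht).2 ⟨h1, h2⟩⟩, rfl⟩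

lemma nonneg_of_mem_genCone_edgeVec {x : Fin N → ℝ} (hx : x ∈ genCone (edgeVec G)) (i : Fin N) :
    0 ≤ x i := by
  obtain ⟨c, hc, rfl⟩ := hx
  rw [Finset.sum_apply]
  refine Finset.sum_nonneg fun e _ => mul_nonneg (hc e) ?_
  unfold edgeVec rho
  split_ifs <;> norm_num

lemma finite_evenLattice_slice (t : ℕ) :
    {x | x ∈ evenLattice N ∧ x ∈ genCone (edgeVec G) ∧ height N x = t}.Finite := by
  refine ((Set.finite_Icc (0 : Fin N → ℤ) fun _ => 2 * t).image
    fun z i => (z i : ℝ)).subset ?_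
  rintro _ ⟨⟨⟨z, rfl⟩, -⟩, h1, h2⟩
  have h0 := nonneg_of_mem_genCone_edgeVec G h1
  refine ⟨z, ⟨fun i => by exact_mod_cast h0 i, fun i => ?_⟩, rfl⟩
  rw [height_apply] at h2
  have := Finset.single_le_sum (fun j _ => h0 j) (Finset.mem_univ i)
  have h3 : (z i : ℝ) ≤ 2 * t := by linarith
  exact_mod_cast h3

/-- An interior lattice point of the edge cone of small height bounds the degree from below. -/
theorem le_polyDeg_edgePolytope {m : Fin N → ℝ} (hG : G.edgeSet.Nonempty)
    (hm : m ∈ evenLattice N) (hmc : m ∈ genCone (edgeVec G))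
    (habs : ∀ u ∈ Submodule.span ℝ (Set.range (edgeVec G)), ConeAbsorbs (edgeVec G) m u) {d : ℕ}
    (hd : height N m + d ≤ Module.finrank ℝ (Submodule.span ℝ (Set.range (edgeVec G)))) :
    d ≤ polyDeg (edgePolytope G) := by
  classical
  obtain ⟨hfin, i, hi, hle⟩ := exists_delta_ne_zero (height_edgeVec G) (edgeVec_mem_evenLattice G)
    (fun x hx => hx.2) (finite_evenLattice_slice G) hm hmc habs
    (polyDim_edgePolytope_add_one G hG).symm (δ := deltaCoeff (edgePolytope G))
    (fun i => by simp only [deltaCoeff, ehr_edgePolytope])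
  rw [← polyDim_edgePolytope_add_one G hG] at hd
  have hdi : d ≤ i := by
    have : (d : ℝ) ≤ i := by linarith
    exact_mod_cast this
  exact hdi.trans (le_csSup hfin.bddAbove hi)

end EdgePolytope

section Hexagons

/-- The intersection pattern of two hexagons `a` and `b` with `a 0 = b 0`: it records `b j = a i`
by the value `i` at `j`, and by the value `6` at `j` that `b j` does not lie on `a`. -/
def hexPattern (p₁ p₂ p₃ p₄ p₅ : ℕ) : ℕ → ℕ
  | 0 => 0
  | 1 => p₁
  | 2 => p₂
  | 3 => p₃
  | 4 => p₄
  | _ => p₅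

/-- The `i`-th edge of `a` is an edge of `b`. -/
def patternCommonEdge (p : ℕ → ℕ) (i : ℕ) : Bool :=
  (List.range 6).any fun j =>
    (p j == i && p ((j + 1) % 6) == (i + 1) % 6) || (p j == (i + 1) % 6 && p ((j + 1) % 6) == i)

/-- Two hexagons share a vertex occurring at positions of different parity. -/
def patternOdd (p : ℕ → ℕ) : Bool :=
  (List.range 6).any fun j => p j != 6 && (p j + j) % 2 == 1

/-- The estimate relating the numbers of common vertices and common edges. -/
def patternBound (p : ℕ → ℕ) (r : ℕ) : Bool :=
  Nat.ble ((List.range 6).countP fun j => p j != 6)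
    (((List.range 6).countP fun i => i % 2 == r && patternCommonEdge p i) + 2 +
      bif patternOdd p then 1 else 0)

/-- Two vertices of `b` are joined by an edge of `a`. -/
def patternAdj (x y : ℕ) : Bool :=
  x != 6 && y != 6 && ((x + 1) % 6 == y || (y + 1) % 6 == x)

/-- The union of the two hexagons contains a `4`-cycle. -/
def patternSquare (p : ℕ → ℕ) : Bool :=
  (List.range 6).any fun j =>
    (p j != 6 && (p ((j + 1) % 6) == (p j + 3) % 6 || p ((j + 3) % 6) == (p j + 1) % 6 ||
      (p ((j + 2) % 6) == (p j + 2) % 6 && p ((j + 1) % 6) != (p j + 1) % 6))) ||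
    (p ((j + 2) % 6) != 6 && p j == (p ((j + 2) % 6) + 2) % 6 &&
      p ((j + 1) % 6) != (p ((j + 2) % 6) + 1) % 6) ||
    (patternAdj (p ((j + 1) % 6)) (p ((j + 3) % 6)) && patternAdj (p ((j + 4) % 6)) (p j))

/-- The possible values of an intersection pattern that extend the nonzero values in `l`. -/
def patternValues (l : List ℕ) : List ℕ :=
  [1, 2, 3, 4, 5, 6].filter fun x => x == 6 || !l.contains x

lemma hexPattern_cases : ∀ p₁ ∈ patternValues [], ∀ p₂ ∈ patternValues [p₁],
    ∀ p₃ ∈ patternValues [p₁, p₂], ∀ p₄ ∈ patternValues [p₁, p₂, p₃],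
    ∀ p₅ ∈ patternValues [p₁, p₂, p₃, p₄],
    (let p := hexPattern p₁ p₂ p₃ p₄ p₅
     patternBound p 0 || patternBound p 1 || patternSquare p ||
      (List.range 6).all (patternCommonEdge p)) = true := by
  decide +kernel

variable {V : Type*} {G : SimpleGraph V}

/-- A closed walk of length `6` with distinct vertices, indexed periodically. -/
structure IsHexagon (G : SimpleGraph V) (a : ℕ → V) : Prop where
  periodic : ∀ i, a (i + 6) = a i
  injOn : ∀ i < 6, ∀ j < 6, a i = a j → i = j
  adj : ∀ i, G.Adj (a i) (a (i + 1))

namespace IsHexagon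

variable {a b : ℕ → V}

lemma apply_mod (ha : IsHexagon G a) (i : ℕ) : a (i % 6) = a i := by
  have h : ∀ k r, a (r + 6 * k) = a r := fun k r => by
    induction k with
    | zero => simp
    | succ k ih => rw [Nat.mul_succ, ← add_assoc, ha.periodic, ih]
  conv_rhs => rw [← Nat.mod_add_div i 6, h]

lemma eq_iff (ha : IsHexagon G a) {i j : ℕ} : a i = a j ↔ i % 6 = j % 6 := by
  rw [← ha.apply_mod i, ← ha.apply_mod j]
  exact ⟨fun h => ha.injOn _ (Nat.mod_lt _ (by norm_num)) _ (Nat.mod_lt _ (by norm_num)) h,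
    fun h => by rw [h]⟩

lemma rotate (ha : IsHexagon G a) (k : ℕ) : IsHexagon G fun i => a (i + k) where
  periodic i := by rw [add_right_comm, ha.periodic]
  injOn i hi j hj h := by have := ha.eq_iff.1 h; omega
  adj i := by
    have := ha.adj (i + k)
    rwa [add_right_comm] at this

end IsHexagon

/-- `G` has no two distinct vertices with two distinct common neighbours. -/
def SquareFree (G : SimpleGraph V) : Prop :=
  ∀ u v w x, G.Adj u v → G.Adj v w → G.Adj w x → G.Adj x u → u ≠ w → v = x

open Classical in
/-- The positions of `b` at which its vertex lies on `a`. -/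
noncomputable def commonVertices (a b : ℕ → V) : Finset ℕ :=
  (Finset.range 6).filter fun j => ∃ i < 6, a i = b j

/-- The edge of `a` at position `i` is an edge of `b`. -/
def IsCommonEdge (a b : ℕ → V) (i : ℕ) : Prop :=
  ∃ j < 6, s(a i, a (i + 1)) = s(b j, b (j + 1))

open Classical in
/-- The positions of parity `r` at which the edge of `a` is an edge of `b`. -/
noncomputable def commonEdges (a b : ℕ → V) (r : ℕ) : Finset ℕ :=
  (Finset.range 6).filter fun i => i % 2 = r ∧ IsCommonEdge a b i

lemma card_filter_range_eq_countP (n : ℕ) (P : ℕ → Prop) {_ : DecidablePred P} (f : ℕ → Bool)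
    (h : ∀ i < n, P i ↔ f i = true) :
    ((Finset.range n).filter P).card = (List.range n).countP f := by
  rw [List.countP_eq_length_filter, ← List.toFinset_card_of_nodup (List.nodup_range.filter _)]
  congr 1
  ext i
  simp only [Finset.mem_filter, Finset.mem_range, List.mem_toFinset, List.mem_filter,
    List.mem_range]
  exact and_congr_right (h i)

section Pattern

variable {a b : ℕ → V} {p : ℕ → ℕ}

/-- `p` is the intersection pattern of `a` and `b`. -/
structure IsPattern (a b : ℕ → V) (p : ℕ → ℕ) : Prop where
  le : ∀ j < 6, p j ≤ 6
  eq_iff : ∀ j < 6, ∀ i < 6, p j = i ↔ a i = b j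

namespace IsPattern

lemma apply_eq (hp : IsPattern a b p) {j : ℕ} (hj : j < 6) (h : p j ≠ 6) :
    p j < 6 ∧ a (p j) = b j := by
  have hlt : p j < 6 := lt_of_le_of_ne (hp.le j hj) h
  exact ⟨hlt, (hp.eq_iff j hj _ hlt).1 rfl⟩

lemma eq_mod_iff (hp : IsPattern a b p) (ha : IsHexagon G a) (hb : IsHexagon G b) (j i : ℕ) :
    p (j % 6) = i % 6 ↔ a i = b j := by
  rw [hp.eq_iff _ (Nat.mod_lt _ (by norm_num)) _ (Nat.mod_lt _ (by norm_num)), ha.apply_mod,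
    hb.apply_mod]

lemma exists_apply_eq (hp : IsPattern a b p) (hb : IsHexagon G b) {j : ℕ} (h : p (j % 6) ≠ 6) :
    ∃ i < 6, p (j % 6) = i ∧ a i = b j := by
  obtain ⟨h1, h2⟩ := hp.apply_eq (Nat.mod_lt _ (by norm_num)) h
  exact ⟨_, h1, rfl, by rw [h2, hb.apply_mod]⟩

lemma commonEdge_iff (hp : IsPattern a b p) (ha : IsHexagon G a) (hb : IsHexagon G b) {i : ℕ}
    (hi : i < 6) : IsCommonEdge a b i ↔ patternCommonEdge p i = true := by
  simp only [IsCommonEdge, patternCommonEdge, List.any_eq_true, List.mem_range, Bool.or_eq_true,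
    Bool.and_eq_true, beq_iff_eq, Sym2.eq_iff]
  refine exists_congr fun j => and_congr_right fun hj => ?_
  rw [hp.eq_mod_iff ha hb, hp.eq_iff j hj i hi, hp.eq_iff j hj _ (Nat.mod_lt _ (by norm_num)),
    ha.apply_mod, ← Nat.mod_eq_of_lt hi, hp.eq_mod_iff ha hb, Nat.mod_eq_of_lt hi]
  tauto

lemma card_commonVertices (hp : IsPattern a b p) :
    (commonVertices a b).card = (List.range 6).countP fun j => p j != 6 := by
  refine card_filter_range_eq_countP _ _ _ fun j hj => ?_
  rw [bne_iff_ne]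
  constructor
  · rintro ⟨i, hi, h⟩ h6
    have := (hp.eq_iff j hj i hi).2 h
    omega
  · exact fun h => ⟨p j, hp.apply_eq hj h⟩

lemma card_commonEdges (hp : IsPattern a b p) (ha : IsHexagon G a) (hb : IsHexagon G b) (r : ℕ) :
    (commonEdges a b r).card =
      (List.range 6).countP fun i => i % 2 == r && patternCommonEdge p i := by
  refine card_filter_range_eq_countP _ _ _ fun i hi => ?_
  rw [Bool.and_eq_true, beq_iff_eq, hp.commonEdge_iff ha hb hi]

lemma bound (hp : IsPattern a b p) (ha : IsHexagon G a) (hb : IsHexagon G b) {r : ℕ}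
    (h : patternBound p r = true) :
    (commonVertices a b).card ≤ (commonEdges a b r).card + 2 ∨
      ((commonVertices a b).card ≤ (commonEdges a b r).card + 3 ∧
        ∃ i j, a i = b j ∧ (i + j) % 2 = 1) := by
  rw [patternBound, Nat.ble_eq, ← hp.card_commonVertices, ← hp.card_commonEdges ha hb] at h
  cases hodd : patternOdd p with
  | false => exact Or.inl (by simpa [hodd] using h)
  | true =>
    refine Or.inr ⟨by simpa [hodd] using h, ?_⟩
    simp only [patternOdd, List.any_eq_true, List.mem_range, Bool.and_eq_true, bne_iff_ne,
      beq_iff_eq] at hodd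
    obtain ⟨j, hj, h6, hpar⟩ := hodd
    exact ⟨p j, j, (hp.apply_eq hj h6).2, hpar⟩

lemma adj (hp : IsPattern a b p) (ha : IsHexagon G a) (hb : IsHexagon G b) {j k : ℕ}
    (h : patternAdj (p (j % 6)) (p (k % 6)) = true) : G.Adj (b j) (b k) := by
  simp only [patternAdj, Bool.and_eq_true, bne_iff_ne, Bool.or_eq_true, beq_iff_eq] at h
  obtain ⟨⟨h1, h2⟩, h⟩ := h
  obtain ⟨x, -, hx, hx'⟩ := hp.exists_apply_eq hb h1
  obtain ⟨y, -, hy, hy'⟩ := hp.exists_apply_eq hb h2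
  rw [← hx', ← hy']
  rcases h with h | h
  · rw [hx] at h
    rw [hy', ← (hp.eq_mod_iff ha hb k (x + 1)).1 h.symm]
    exact ha.adj x
  · rw [hy] at h
    rw [hx', ← (hp.eq_mod_iff ha hb j (y + 1)).1 h.symm]
    exact (ha.adj y).symm

lemma not_squareFree (hp : IsPattern a b p) (ha : IsHexagon G a) (hb : IsHexagon G b)
    (h : patternSquare p = true) : ¬ SquareFree G := by
  intro hsq
  simp only [patternSquare, List.any_eq_true, List.mem_range, Bool.or_eq_true, Bool.and_eq_true,
    bne_iff_ne, beq_iff_eq] at h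
  obtain ⟨j, hj, h⟩ := h
  have hjm : p j = p (j % 6) := by rw [Nat.mod_eq_of_lt hj]
  rcases h with (⟨h6, h⟩ | ⟨⟨h6, h1⟩, h2⟩) | ⟨h1, h2⟩
  · rw [hjm] at h6
    obtain ⟨i, hi, hpi, hab⟩ := hp.exists_apply_eq hb h6
    rw [hjm, hpi] at h
    simp only [ne_eq, hp.eq_mod_iff ha hb] at h
    rcases h with (h | h) | ⟨h, h'⟩
    · have := hsq (a i) (a (i + 1)) (a (i + 2)) (a (i + 3)) (ha.adj _) (ha.adj _) (ha.adj _)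
        (by rw [h, hab]; exact (hb.adj j).symm) (by rw [Ne, ha.eq_iff]; omega)
      rw [ha.eq_iff] at this
      omega
    · have := hsq (b j) (b (j + 1)) (b (j + 2)) (b (j + 3)) (hb.adj _) (hb.adj _) (hb.adj _)
        (by rw [← h, ← hab]; exact (ha.adj i).symm) (by rw [Ne, hb.eq_iff]; omega)
      rw [hb.eq_iff] at this
      omega
    · exact h' (hsq (a i) (a (i + 1)) (a (i + 2)) (b (j + 1)) (ha.adj _) (ha.adj _)
        (by rw [h]; exact (hb.adj _).symm) (by rw [hab]; exact (hb.adj _).symm)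
        (by rw [Ne, ha.eq_iff]; omega))
  · obtain ⟨i, hi, hpi, hab⟩ := hp.exists_apply_eq hb h6
    rw [hpi, hjm, hp.eq_mod_iff ha hb] at h1
    rw [hpi, Ne, hp.eq_mod_iff ha hb] at h2
    exact h2 (hsq (a i) (a (i + 1)) (a (i + 2)) (b (j + 1)) (ha.adj _) (ha.adj _)
        (by rw [h1]; exact hb.adj _) (by rw [hab]; exact hb.adj _)
        (by rw [Ne, ha.eq_iff]; omega))
  · rw [hjm] at h2
    have := hsq (b j) (b (j + 1)) (b (j + 3)) (b (j + 4)) (hb.adj _) (hp.adj ha hb h1) (hb.adj _)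
      (hp.adj ha hb h2) (by rw [Ne, hb.eq_iff]; omega)
    rw [hb.eq_iff] at this
    omega

end IsPattern

lemma exists_isPattern (ha : IsHexagon G a) (hb : IsHexagon G b) (h0 : a 0 = b 0) :
    ∃ p₁ ∈ patternValues [], ∃ p₂ ∈ patternValues [p₁], ∃ p₃ ∈ patternValues [p₁, p₂],
    ∃ p₄ ∈ patternValues [p₁, p₂, p₃], ∃ p₅ ∈ patternValues [p₁, p₂, p₃, p₄],
    IsPattern a b (hexPattern p₁ p₂ p₃ p₄ p₅) := by
  have hex : ∀ j, ∃ k ≤ 6, ∀ i < 6, k = i ↔ a i = b j := fun j => by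
    by_cases h : ∃ i < 6, a i = b j
    · obtain ⟨i, hi, h⟩ := h
      refine ⟨i, hi.le, fun i' hi' => ⟨fun e => e ▸ h,
        fun e => ha.injOn _ hi _ hi' (h.trans e.symm)⟩⟩
    · refine ⟨6, le_rfl, fun i hi => ⟨fun e => by omega, fun e => absurd ⟨i, hi, e⟩ h⟩⟩
  choose P hle hP using hex
  have hP0 : P 0 = 0 := (hP 0 0 (by norm_num)).2 h0
  have hinj : ∀ j < 6, ∀ k < 6, j ≠ k → P j ≠ 6 → P j ≠ P k := fun j hj k hk hne h6 e => by
    have hlt : P j < 6 := lt_of_le_of_ne (hle j) h6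
    have h1 := (hP j _ hlt).1 rfl
    have h2 := (hP k _ hlt).1 e.symm
    exact hne (hb.injOn j hj k hk (h1.symm.trans h2))
  have hpos : ∀ j < 6, j ≠ 0 → P j ∈ [1, 2, 3, 4, 5, 6] := fun j hj hj0 => by
    have h1 : P j ≠ 0 := fun e => hinj j hj 0 (by norm_num) hj0 (by omega) (by omega)
    have h2 := hle j
    simp only [List.mem_cons, List.not_mem_nil, or_false]
    omega
  have hmem : ∀ j < 6, j ≠ 0 → ∀ l : List ℕ, (∀ k ∈ l, k < 6 ∧ k ≠ j) →
      P j ∈ patternValues (l.map P) := fun j hj hj0 l hl => by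
    simp only [patternValues, List.mem_filter, Bool.or_eq_true, beq_iff_eq, Bool.not_eq_true',
      List.contains_eq_mem, decide_eq_false_iff_not]
    refine ⟨hpos j hj hj0, or_iff_not_imp_left.2 fun h6 hm => ?_⟩
    obtain ⟨k, hk, e⟩ := List.mem_map.1 hm
    exact hinj j hj k (hl k hk).1 (hl k hk).2.symm h6 e.symm
  have hpat : ∀ j < 6, hexPattern (P 1) (P 2) (P 3) (P 4) (P 5) j = P j := fun j hj => by
    interval_cases j
    · exact hP0.symm
    all_goals rfl
  refine ⟨P 1, hmem 1 (by norm_num) (by norm_num) [] (by simp), P 2,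
    hmem 2 (by norm_num) (by norm_num) [1] (by simp), P 3,
    hmem 3 (by norm_num) (by norm_num) [1, 2] (by simp), P 4,
    hmem 4 (by norm_num) (by norm_num) [1, 2, 3] (by simp), P 5,
    hmem 5 (by norm_num) (by norm_num) [1, 2, 3, 4] (by simp), ?_, ?_⟩
  · intro j hj
    rw [hpat j hj]
    exact hle j
  · intro j hj i hi
    rw [hpat j hj]
    exact hP j i hi

/-- In a graph without `4`-cycles, two distinct hexagons through a common vertex have few common
vertices compared with their common edges of one of the two parities. -/
lemma exists_parity_commonVertices_le (ha : IsHexagon G a) (hb : IsHexagon G b) (h0 : a 0 = b 0)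
    (hsq : SquareFree G) (hne : ¬ ∀ i < 6, IsCommonEdge a b i) :
    ∃ r < 2, (commonVertices a b).card ≤ (commonEdges a b r).card + 2 ∨
      ((commonVertices a b).card ≤ (commonEdges a b r).card + 3 ∧
        ∃ i j, a i = b j ∧ (i + j) % 2 = 1) := by
  obtain ⟨p₁, h₁, p₂, h₂, p₃, h₃, p₄, h₄, p₅, h₅, hp⟩ := exists_isPattern ha hb h0
  have := hexPattern_cases p₁ h₁ p₂ h₂ p₃ h₃ p₄ h₄ p₅ h₅
  simp only [Bool.or_eq_true] at this
  rcases this with ((h | h) | h) | h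
  · exact ⟨0, by norm_num, hp.bound ha hb h⟩
  · exact ⟨1, by norm_num, hp.bound ha hb h⟩
  · exact absurd hsq (hp.not_squareFree ha hb h)
  · refine absurd (fun i hi => (hp.commonEdge_iff ha hb hi).2 ?_) hne
    exact List.all_eq_true.1 h i (List.mem_range.2 hi)

end Pattern

end Hexagons

section HexagonCone

variable {N : ℕ} {G : SimpleGraph (Fin N)} {a b : ℕ → Fin N}

/-- The edge of a hexagon at position `i`. -/
def IsHexagon.edge (ha : IsHexagon G a) (i : ℕ) : G.edgeSet := ⟨s(a i, a (i + 1)), ha.adj i⟩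

lemma IsHexagon.edge_mod (ha : IsHexagon G a) (i : ℕ) : ha.edge (i % 6) = ha.edge i := by
  have h : a (i % 6 + 1) = a (i + 1) := ha.eq_iff.2 (by omega)
  simp only [IsHexagon.edge, ha.apply_mod, h]

lemma IsHexagon.edgeVec_edge (ha : IsHexagon G a) (i : ℕ) :
    edgeVec G (ha.edge i) = Pi.single (a i) 1 + Pi.single (a (i + 1)) 1 :=
  rho_mk (ha.adj i).ne

/-- The positions of parity `r` on a hexagon. -/
def parityClass (r : ℕ) : Finset ℕ := (Finset.range 6).filter fun i => i % 2 = r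

lemma mem_parityClass {r i : ℕ} : i ∈ parityClass r ↔ i < 6 ∧ i % 2 = r := by
  simp [parityClass]

lemma card_parityClass {r : ℕ} (hr : r < 2) : (parityClass r).card = 3 := by
  interval_cases r <;> decide

/-- Both perfect matchings of a hexagon have the same sum. -/
lemma IsHexagon.sum_edgeVec (ha : IsHexagon G a) {r : ℕ} (hr : r < 2) :
    ∑ i ∈ parityClass r, edgeVec G (ha.edge i) = ∑ i ∈ Finset.range 6, Pi.single (a i) 1 := by
  have h6 : a 6 = a 0 := ha.periodic 0
  interval_cases r <;>
    simp [parityClass, Finset.sum_filter, Finset.sum_range_succ, ha.edgeVec_edge, h6] <;> abel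

lemma IsHexagon.single_sub_mem_span (ha : IsHexagon G a) {T : Set G.edgeSet}
    (hT : ∀ i, ha.edge i ∈ T) (i : ℕ) :
    (Pi.single (a i) 1 - (-1 : ℝ) ^ i • Pi.single (a 0) 1 : Fin N → ℝ) ∈
      Submodule.span ℝ (edgeVec G '' T) := by
  induction i with
  | zero => simp
  | succ i ih =>
    have h : edgeVec G (ha.edge i) ∈ Submodule.span ℝ (edgeVec G '' T) :=
      Submodule.subset_span ⟨_, hT i, rfl⟩
    rw [ha.edgeVec_edge] at h
    convert sub_mem h ih using 1
    rw [pow_succ, mul_neg_one, neg_smul]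
    abel

lemma IsHexagon.single_mem_of_le (ha : IsHexagon G a) {T : Set G.edgeSet}
    (hT : ∀ i, ha.edge i ∈ T) {W : Submodule ℝ (Fin N → ℝ)}
    (hW : Submodule.span ℝ (edgeVec G '' T) ≤ W) (h0 : Pi.single (a 0) 1 ∈ W) (i : ℕ) :
    Pi.single (a i) 1 ∈ W := by
  have := add_mem (hW (ha.single_sub_mem_span hT i)) (W.smul_mem ((-1) ^ i) h0)
  rwa [sub_add_cancel] at this

lemma card_le_finrank_of_single_mem {W : Submodule ℝ (Fin N → ℝ)} {X : Finset (Fin N)}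
    (h : ∀ k ∈ X, Pi.single k 1 ∈ W) : X.card ≤ Module.finrank ℝ W := by
  have hind : LinearIndepOn ℝ (fun k : Fin N => (Pi.single k 1 : Fin N → ℝ)) (X : Set (Fin N)) := by
    have := (Pi.basisFun ℝ (Fin N)).linearIndependent.linearIndepOn (s := (X : Set (Fin N)))
    convert this using 1
    ext k : 1
    simp
  rw [card_eq_finrank_span_of_linearIndepOn hind]
  refine Submodule.finrank_mono (Submodule.span_le.2 ?_)
  rintro _ ⟨k, hk, rfl⟩
  exact h k hk

lemma mem_commonVertices {j : ℕ} : j ∈ commonVertices a b ↔ j < 6 ∧ ∃ i < 6, a i = b j := by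
  simp [commonVertices]

lemma card_image_union_add_card_commonVertices (ha : IsHexagon G a) (hb : IsHexagon G b) :
    ((Finset.range 6).image a ∪ (Finset.range 6).image b).card + (commonVertices a b).card =
      12 := by
  have hia : Set.InjOn a (Finset.range 6) := fun i hi j hj h =>
    ha.injOn i (by simpa using hi) j (by simpa using hj) h
  have hib : Set.InjOn b (Finset.range 6) := fun i hi j hj h =>
    hb.injOn i (by simpa using hi) j (by simpa using hj) h
  have hsub : (commonVertices a b : Set ℕ) ⊆ Finset.range 6 :=
    Finset.coe_subset.2 fun j hj => Finset.mem_range.2 (mem_commonVertices.1 hj).1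
  have hinter : (Finset.range 6).image a ∩ (Finset.range 6).image b =
      (commonVertices a b).image b := by
    ext k
    simp only [mem_commonVertices, Finset.mem_inter, Finset.mem_image, Finset.mem_range]
    constructor
    · rintro ⟨⟨i, hi, rfl⟩, j, hj, h⟩
      exact ⟨j, ⟨hj, i, hi, h.symm⟩, h⟩
    · rintro ⟨j, ⟨hj, i, hi, h⟩, rfl⟩
      exact ⟨⟨i, hi, h⟩, j, hj, rfl⟩
  rw [← Finset.card_image_of_injOn (hib.mono hsub), ← hinter, Finset.card_union_add_card_inter,
    Finset.card_image_of_injOn hia, Finset.card_image_of_injOn hib, Finset.card_range]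

/-- The edges of two hexagons. -/
def hexagonEdges (ha : IsHexagon G a) (hb : IsHexagon G b) : Set G.edgeSet :=
  Set.range ha.edge ∪ Set.range hb.edge

lemma twelve_le_finrank_add_card (ha : IsHexagon G a) (hb : IsHexagon G b)
    {W : Submodule ℝ (Fin N → ℝ)}
    (hW : Submodule.span ℝ (edgeVec G '' hexagonEdges ha hb) ≤ W)
    (h0 : Pi.single (a 0) 1 ∈ W) (h0' : Pi.single (b 0) 1 ∈ W) :
    12 ≤ Module.finrank ℝ W + (commonVertices a b).card := by
  rw [← card_image_union_add_card_commonVertices ha hb]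
  refine Nat.add_le_add_right (card_le_finrank_of_single_mem fun k hk => ?_) _
  rw [Finset.mem_union, Finset.mem_image, Finset.mem_image] at hk
  rcases hk with ⟨i, -, rfl⟩ | ⟨i, -, rfl⟩
  · exact ha.single_mem_of_le (fun i => Or.inl ⟨i, rfl⟩) hW h0 i
  · exact hb.single_mem_of_le (fun i => Or.inr ⟨i, rfl⟩) hW h0' i

lemma finrank_sup_span_singleton_le (U : Submodule ℝ (Fin N → ℝ)) (x : Fin N → ℝ) :
    Module.finrank ℝ ↥(U ⊔ Submodule.span ℝ {x}) ≤ Module.finrank ℝ U + 1 := by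
  refine (Submodule.finrank_add_le_finrank_add_finrank _ _).trans (Nat.add_le_add_left ?_ _)
  simpa using finrank_span_le_card (R := ℝ) ({x} : Set (Fin N → ℝ))

lemma single_mem_span_of_odd (ha : IsHexagon G a) (hb : IsHexagon G b) (h0 : a 0 = b 0) {i j : ℕ}
    (hij : a i = b j) (hodd : (i + j) % 2 = 1) :
    Pi.single (a 0) 1 ∈ Submodule.span ℝ (edgeVec G '' hexagonEdges ha hb) := by
  have h1 := ha.single_sub_mem_span (T := hexagonEdges ha hb) (fun i => Or.inl ⟨i, rfl⟩) i
  have h2 := hb.single_sub_mem_span (T := hexagonEdges ha hb) (fun i => Or.inr ⟨i, rfl⟩) j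
  have h3 := sub_mem h1 h2
  rw [hij, ← h0, sub_sub_sub_cancel_left, ← sub_smul] at h3
  refine (Submodule.smul_mem_iff _ ?_).1 h3
  rcases Nat.even_or_odd i with hi | hi
  · rw [hi.neg_one_pow, Odd.neg_one_pow (Nat.odd_iff.2 (by have := Nat.even_iff.1 hi; omega))]
    norm_num
  · rw [hi.neg_one_pow, Even.neg_one_pow (Nat.even_iff.2 (by have := Nat.odd_iff.1 hi; omega))]
    norm_num

variable [Fintype G.edgeSet]

lemma IsHexagon.coneAbsorbs_edge (ha : IsHexagon G a) {m : Fin N → ℝ}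
    (hm : m ∈ genCone (edgeVec G)) {r : ℕ} (hr : r < 2)
    (h : ∀ i ∈ parityClass r, ConeAbsorbs (edgeVec G) m (edgeVec G (ha.edge i))) (i : ℕ) :
    ConeAbsorbs (edgeVec G) m (edgeVec G (ha.edge i)) := by
  rw [← ha.edge_mod]
  have hi : i % 6 < 6 := Nat.mod_lt _ (by norm_num)
  by_cases hir : i % 6 % 2 = r
  · exact h _ (mem_parityClass.2 ⟨hi, hir⟩)
  have hmem : i % 6 ∈ parityClass (1 - r) := mem_parityClass.2 ⟨hi, by omega⟩
  refine ConeAbsorbs.of_add hm (w := ∑ j ∈ (parityClass (1 - r)).erase (i % 6),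
    edgeVec G (ha.edge j)) ?_ (sum_mem_genCone _ _ fun j _ => ?_)
  · rw [Finset.add_sum_erase _ (fun j => edgeVec G (ha.edge j)) hmem,
      ha.sum_edgeVec (show 1 - r < 2 by omega), ← ha.sum_edgeVec hr]
    refine coneAbsorbs_of_mem_span hm (T := ha.edge '' (parityClass r : Set ℕ)) ?_
      (sum_mem fun j hj => Submodule.subset_span ⟨_, ⟨j, hj, rfl⟩, rfl⟩)
    rintro _ ⟨j, hj, rfl⟩
    exact h j hj
  · classical
    exact self_mem_genCone _ _

/-- A point of small height in the interior of the cone over the edges of two hexagons. -/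
lemma exists_coneAbsorbs_hexagonEdges (ha : IsHexagon G a) (hb : IsHexagon G b) {r : ℕ}
    (hr : r < 2) : ∃ m ∈ evenLattice N, m ∈ genCone (edgeVec G) ∧
      (∀ e ∈ hexagonEdges ha hb, ConeAbsorbs (edgeVec G) m (edgeVec G e)) ∧
      height N m + (commonEdges a b r).card = 6 := by
  classical
  have hsub : commonEdges a b r ⊆ parityClass r := fun i hi => by
    simp only [commonEdges, Finset.mem_filter, Finset.mem_range] at hi
    exact mem_parityClass.2 ⟨hi.1, hi.2.1⟩
  have hcone : ∀ {c : ℕ → Fin N} (hc : IsHexagon G c) (s : Finset ℕ),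
      ∑ i ∈ s, edgeVec G (hc.edge i) ∈ genCone (edgeVec G) := fun hc s =>
    sum_mem_genCone _ _ fun i _ => self_mem_genCone _ _
  have hlat : ∀ {c : ℕ → Fin N} (hc : IsHexagon G c) (s : Finset ℕ),
      ∑ i ∈ s, edgeVec G (hc.edge i) ∈ evenLattice N := fun hc s =>
    sum_mem fun i _ => edgeVec_mem_evenLattice G _
  set mb := ∑ j ∈ parityClass 0, edgeVec G (hb.edge j)
  set ma := ∑ i ∈ parityClass r \ commonEdges a b r, edgeVec G (ha.edge i)
  have hmc : mb + ma ∈ genCone (edgeVec G) := add_mem_genCone (hcone hb _) (hcone ha _)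
  have habs_b : ∀ j, ConeAbsorbs (edgeVec G) (mb + ma) (edgeVec G (hb.edge j)) :=
    hb.coneAbsorbs_edge hmc (r := 0) (by norm_num) fun j hj =>
      (coneAbsorbs_sum_self hb.edge hj).add_left (hcone ha _)
  have habs_a : ∀ i, ConeAbsorbs (edgeVec G) (mb + ma) (edgeVec G (ha.edge i)) := by
    refine ha.coneAbsorbs_edge hmc hr fun i hi => ?_
    by_cases hF : i ∈ commonEdges a b r
    · simp only [commonEdges, Finset.mem_filter] at hF
      obtain ⟨j, -, hj⟩ := hF.2.2
      have : ha.edge i = hb.edge j := Subtype.ext hj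
      rw [this]
      exact habs_b j
    · rw [add_comm]
      exact (coneAbsorbs_sum_self ha.edge (Finset.mem_sdiff.2 ⟨hi, hF⟩)).add_left (hcone hb _)
  refine ⟨mb + ma, add_mem (hlat hb _) (hlat ha _), hmc, ?_, ?_⟩
  · rintro _ (⟨i, rfl⟩ | ⟨j, rfl⟩)
    · exact habs_a i
    · exact habs_b j
  · have hcard := Finset.card_sdiff_add_card_eq_card hsub
    rw [card_parityClass hr] at hcard
    have hcard' : ((parityClass r \ commonEdges a b r).card : ℝ) + (commonEdges a b r).card =
        3 := by
      exact_mod_cast hcard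
    simp only [mb, ma, map_add, map_sum, height_edgeVec, Finset.sum_const, nsmul_eq_mul, mul_one,
      card_parityClass (show 0 < 2 by norm_num)]
    push_cast
    linarith

lemma three_le_polyDeg_of_finrank (ha : IsHexagon G a) (hb : IsHexagon G b) {r : ℕ} (hr : r < 2)
    (h : 9 ≤ Module.finrank ℝ (Submodule.span ℝ (edgeVec G '' hexagonEdges ha hb)) +
      (commonEdges a b r).card) : 3 ≤ polyDeg (edgePolytope G) := by
  classical
  obtain ⟨m, hm, hmc, habs, hheight⟩ := exists_coneAbsorbs_hexagonEdges ha hb hr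
  obtain ⟨m', hm', hmc', habs', hheight'⟩ :=
    exists_coneAbsorbs_span (height_edgeVec G) (edgeVec_mem_evenLattice G) hm hmc habs
  refine le_polyDeg_edgePolytope G ⟨_, (ha.edge 0).2⟩ hm' hmc' habs' ?_
  have h' : (9 : ℝ) ≤ Module.finrank ℝ (Submodule.span ℝ (edgeVec G '' hexagonEdges ha hb)) +
      (commonEdges a b r).card := by exact_mod_cast h
  push_cast
  linarith

/-- Two distinct hexagons in a graph without `4`-cycles force degree at least `3`. -/
theorem three_le_polyDeg_of_hexagons (ha : IsHexagon G a) (hb : IsHexagon G b)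
    (hsq : SquareFree G) (hne : ¬ ∀ i, ∃ j, s(a i, a (i + 1)) = s(b j, b (j + 1))) :
    3 ≤ polyDeg (edgePolytope G) := by
  by_cases hcommon : ∃ i j, a i = b j
  · obtain ⟨k, l, hkl⟩ := hcommon
    have ha' := ha.rotate k
    have hb' := hb.rotate l
    have h0 : a (0 + k) = b (0 + l) := by simpa using hkl
    have hne' : ¬ ∀ i < 6, IsCommonEdge (fun i => a (i + k)) (fun i => b (i + l)) i := by
      refine fun h => hne fun i => ?_
      obtain ⟨j, -, hj⟩ := h ((i + 5 * k) % 6) (Nat.mod_lt _ (by norm_num))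
      have h1 : a ((i + 5 * k) % 6 + k) = a i := ha.eq_iff.2 (by omega)
      have h2 : a ((i + 5 * k) % 6 + 1 + k) = a (i + 1) := ha.eq_iff.2 (by omega)
      refine ⟨j + l, ?_⟩
      dsimp only at hj
      rwa [h1, h2, add_right_comm j 1 l] at hj
    obtain ⟨r, hr, h⟩ := exists_parity_commonVertices_le ha' hb' h0 hsq hne'
    refine three_le_polyDeg_of_finrank ha' hb' hr ?_
    rcases h with h | ⟨h, i, j, hij, hodd⟩
    · let U := Submodule.span ℝ (edgeVec G '' hexagonEdges ha' hb')
      let W := U ⊔ Submodule.span ℝ {Pi.single (a (0 + k)) 1}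
      have hmem : Pi.single (a (0 + k)) 1 ∈ W :=
        Submodule.mem_sup_right (Submodule.mem_span_singleton_self _)
      have h1 := twelve_le_finrank_add_card ha' hb' (W := W) le_sup_left hmem (by rwa [← h0])
      have h2 : Module.finrank ℝ W ≤ Module.finrank ℝ U + 1 := finrank_sup_span_singleton_le _ _
      change 9 ≤ Module.finrank ℝ U + _
      omega
    · have hmem := single_mem_span_of_odd ha' hb' h0 hij hodd
      have := twelve_le_finrank_add_card ha' hb' le_rfl hmem (by rwa [← h0])
      omega
  · have hempty : commonVertices a b = ∅ :=
      Finset.eq_empty_of_forall_notMem fun j hj =>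
        let ⟨i, _, h⟩ := (mem_commonVertices.1 hj).2
        hcommon ⟨i, j, h⟩
    refine three_le_polyDeg_of_finrank ha hb (r := 0) (by norm_num) ?_
    let U := Submodule.span ℝ (edgeVec G '' hexagonEdges ha hb)
    let W := U ⊔ Submodule.span ℝ {Pi.single (a 0) 1}
    let W' := W ⊔ Submodule.span ℝ {Pi.single (b 0) 1}
    have h1 := twelve_le_finrank_add_card ha hb (W := W') (le_sup_left.trans le_sup_left)
      (Submodule.mem_sup_left (Submodule.mem_sup_right (Submodule.mem_span_singleton_self _)))
      (Submodule.mem_sup_right (Submodule.mem_span_singleton_self _))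
    have h2 : Module.finrank ℝ W ≤ Module.finrank ℝ U + 1 := finrank_sup_span_singleton_le _ _
    have h3 : Module.finrank ℝ W' ≤ Module.finrank ℝ W + 1 := finrank_sup_span_singleton_le _ _
    rw [hempty, Finset.card_empty] at h1
    change 9 ≤ Module.finrank ℝ U + _
    omega

end HexagonCone

section Cycles

variable {V : Type*} {G : SimpleGraph V}

lemma isHexagon_getVert {u : V} {c : G.Walk u u} (hc : c.IsCycle) (hlen : c.length = 6) :
    IsHexagon G fun i => c.getVert (i % 6) where
  periodic i := by simp
  injOn i hi j hj h := by
    rw [Nat.mod_eq_of_lt hi, Nat.mod_eq_of_lt hj] at h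
    exact hc.getVert_injOn' (by simp [hlen]; omega) (by simp [hlen]; omega) h
  adj i := by
    have h6 : c.getVert 6 = c.getVert 0 := by
      rw [← hlen, SimpleGraph.Walk.getVert_length, SimpleGraph.Walk.getVert_zero]
    have hi : i % 6 < 6 := Nat.mod_lt _ (by norm_num)
    have hadj := c.adj_getVert_succ (i := i % 6) (by omega)
    rcases Nat.lt_or_ge (i % 6) 5 with h | h
    · rwa [show i % 6 + 1 = (i + 1) % 6 by omega] at hadj
    · rw [show i % 6 + 1 = 6 by omega, h6] at hadj
      rwa [show (i + 1) % 6 = 0 by omega]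

lemma mem_edges_iff_exists_getVert_mod {u : V} {c : G.Walk u u} (hlen : c.length = 6)
    (e : Sym2 V) :
    e ∈ c.edges ↔ ∃ i, s(c.getVert (i % 6), c.getVert ((i + 1) % 6)) = e := by
  have h6 : c.getVert 6 = c.getVert 0 := by
    rw [← hlen, SimpleGraph.Walk.getVert_length, SimpleGraph.Walk.getVert_zero]
  have hsucc : ∀ i, c.getVert ((i + 1) % 6) = c.getVert (i % 6 + 1) := fun i => by
    rcases Nat.lt_or_ge (i % 6) 5 with h | h
    · rw [show i % 6 + 1 = (i + 1) % 6 by omega]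
    · have : i % 6 < 6 := Nat.mod_lt _ (by norm_num)
      rw [show i % 6 + 1 = 6 by omega, h6, show (i + 1) % 6 = 0 by omega]
  induction e with
  | _ x y =>
    rw [c.mk_mem_edges_iff_exists, hlen]
    simp only [hsucc]
    constructor
    · rintro ⟨i, hi, h⟩
      exact ⟨i, by rwa [Nat.mod_eq_of_lt hi]⟩
    · rintro ⟨i, h⟩
      exact ⟨i % 6, Nat.mod_lt _ (by norm_num), h⟩

lemma squareFree_of_no_four_cycle
    (h4 : ¬ ∃ (u : V) (c : G.Walk u u), c.IsCycle ∧ c.length = 4) : SquareFree G := by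
  intro u v w x huv hvw hwx hxu huw
  by_contra hvx
  refine h4 ⟨u, .cons huv (.cons hvw (.cons hwx (.cons hxu .nil))), ?_, by simp⟩
  rw [SimpleGraph.Walk.cons_isCycle_iff]
  simp [SimpleGraph.Walk.cons_isPath_iff, huv.ne, huv.ne', hvw.ne, hwx.ne, hxu.ne, hxu.ne', huw,
    Ne.symm huw, hvx]

lemma edges_eq_of_subset {u w : V} {c₁ : G.Walk u u} {c₂ : G.Walk w w} (hc₁ : c₁.IsCycle)
    (hlen : c₂.length ≤ c₁.length) (h : ∀ e ∈ c₁.edges, e ∈ c₂.edges) :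
    {e | e ∈ c₁.edges} = {e | e ∈ c₂.edges} := by
  classical
  have hsub : c₁.edges.toFinset ⊆ c₂.edges.toFinset := fun e he => by
    rw [List.mem_toFinset] at he ⊢
    exact h e he
  have heq := Finset.eq_of_subset_of_card_le hsub (by
    rw [List.toFinset_card_of_nodup hc₁.edges_nodup, SimpleGraph.Walk.length_edges]
    exact (List.toFinset_card_le _).trans (by rwa [SimpleGraph.Walk.length_edges]))
  ext e
  simpa using Finset.ext_iff.1 heq e

end Cycles

/-- If a finite connected simple graph `G` has two distinct
`6`-cycles, no `4`-cycle, and no even cycle of length `≥ 8`, then `deg(P_G) ≥ 3`. -/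
theorem polyDeg_ge_three_of_two_six_cycles
    {N : ℕ} (G : SimpleGraph (Fin N)) (hG : G.Connected)
    {v w : Fin N} (c₁ : G.Walk v v) (c₂ : G.Walk w w)
    (hc₁ : c₁.IsCycle) (hc₂ : c₂.IsCycle)
    (hlen₁ : c₁.length = 6) (hlen₂ : c₂.length = 6)
    (hne : {e | e ∈ c₁.edges} ≠ {e | e ∈ c₂.edges})
    (h4 : ¬ ∃ (u : Fin N) (c : G.Walk u u), c.IsCycle ∧ c.length = 4)
    (h8 : ¬ ∃ (u : Fin N) (c : G.Walk u u), c.IsCycle ∧ Even c.length ∧ 8 ≤ c.length) :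
    3 ≤ polyDeg (edgePolytope G) := by
  classical
  refine three_le_polyDeg_of_hexagons (isHexagon_getVert hc₁ hlen₁) (isHexagon_getVert hc₂ hlen₂)
    (squareFree_of_no_four_cycle h4) fun h => hne ?_
  refine edges_eq_of_subset hc₁ (by rw [hlen₁, hlen₂]) fun e he => ?_
  obtain ⟨i, rfl⟩ := (mem_edges_iff_exists_getVert_mod hlen₁ e).1 he
  obtain ⟨j, hj⟩ := h i
  exact (mem_edges_iff_exists_getVert_mod hlen₂ _).2 ⟨j, hj.symm⟩
end

section
/- Let G be a finite connected simple graph whose edge ring K[G] has a 3-linear resolution. Then the toric ideal I_G is generated by binomials of degree 3 arising from even closed walks of length 6, and the minimal number of generators of I_G is at most 2. -/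
open MvPolynomial Pointwise

/-- The binomial `f_Γ = x_{i_1} x_{i_3} x_{i_5} - x_{i_2} x_{i_4} x_{i_6}` attached to
a closed walk `Γ = (v 0, v 1, …, v 6)` of length `6` (with `v 6 = v 0`). -/
noncomputable def walkBinom (K : Type*) [Field K] {V : Type*} (G : SimpleGraph V)
    (v : ℕ → V) (h : ∀ k, k < 6 → G.Adj (v k) (v (k + 1))) :
    MvPolynomial G.edgeSet K :=
  X (⟨s(v 0, v 1), G.mem_edgeSet.2 (h 0 (by norm_num))⟩ : G.edgeSet) *
      X ⟨s(v 2, v 3), G.mem_edgeSet.2 (h 2 (by norm_num))⟩ *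
      X ⟨s(v 4, v 5), G.mem_edgeSet.2 (h 4 (by norm_num))⟩ -
    X ⟨s(v 1, v 2), G.mem_edgeSet.2 (h 1 (by norm_num))⟩ *
      X ⟨s(v 3, v 4), G.mem_edgeSet.2 (h 3 (by norm_num))⟩ *
      X ⟨s(v 5, v 6), G.mem_edgeSet.2 (h 5 (by norm_num))⟩

/-- A graph without cycles of length four. -/
def FourCycleFree {V : Type*} (G : SimpleGraph V) : Prop :=
  ∀ a b c d, G.Adj a b → G.Adj b c → G.Adj c d → G.Adj d a → a = c ∨ b = d

/-- `w` is a symmetric weight function on the edges of `G` whose sum at each vertex `x`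
is `α x`. -/
structure IsEdgeWeighting {V : Type*} [Fintype V] (G : SimpleGraph V) (w : V → V → ℕ)
    (α : V → ℕ) : Prop where
  symm : ∀ x y, w x y = w y x
  adj : ∀ x y, w x y ≠ 0 → G.Adj x y
  sum_eq : ∀ x, ∑ y, w x y = α x

/-- A closed walk of length six with consecutive edges distinct and with opposite edges not
traversed in the same direction: a hexagon, or two triangles sharing a vertex. -/
structure IsAlternatingHexagon {V : Type*} (G : SimpleGraph V) (p : Fin 6 → V) : Prop where
  adj : ∀ i, G.Adj (p i) (p (i + 1))
  ne_two : ∀ i, p i ≠ p (i + 2)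
  ne_three : ∀ i, p i = p (i + 3) → p (i + 1) ≠ p (i + 4)

/-- The number of visits of the closed walk `p` at the vertex `x`. -/
def visits {V : Type*} [DecidableEq V] (p : Fin 6 → V) (x : V) : ℕ :=
  ∑ i, if p i = x then 1 else 0

theorem IsEdgeWeighting.zero_of_left {V : Type*} [Fintype V] {G : SimpleGraph V}
    {w : V → V → ℕ} {α : V → ℕ}
    (hw : IsEdgeWeighting G w α) {x : V} (y : V) (hx : α x = 0) : w x y = 0 := by
  have := hw.sum_eq x
  rw [hx, Finset.sum_eq_zero_iff] at this
  exact this y (Finset.mem_univ _)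

theorem IsEdgeWeighting.le {V : Type*} [Fintype V] {G : SimpleGraph V}
    {w : V → V → ℕ} {α : V → ℕ}
    (hw : IsEdgeWeighting G w α) (x y : V) : w x y ≤ α x := by
  rw [← hw.sum_eq x]
  exact Finset.single_le_sum (f := fun y => w x y) (fun _ _ => Nat.zero_le _)
    (Finset.mem_univ y)

theorem IsEdgeWeighting.sum_range_eq {V : Type*} [Fintype V] {G : SimpleGraph V}
    {w : V → V → ℕ} {α : V → ℕ}
    (hw : IsEdgeWeighting G w α) {n : ℕ} {q : Fin n → V} (hq : Function.Injective q)
    (hα : ∀ x, x ∉ Set.range q → α x = 0) (x : V) : ∑ i, w x (q i) = α x := by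
  rw [← hw.sum_eq x]
  refine Fintype.sum_of_injective q hq _ _ (fun y hy => ?_) fun _ => rfl
  rw [hw.symm]
  exact hw.zero_of_left x (hα y hy)

theorem visits_rotate {V : Type*} [DecidableEq V] (p : Fin 6 → V) (k : Fin 6) (x : V) :
    visits (fun i => p (i + k)) x = visits p x :=
  Equiv.sum_comp (Equiv.addRight k) fun i => if p i = x then 1 else 0

/-- The degree vector of the walk `p` enlarged by an edge. -/
def visitsAdd {V : Type*} [DecidableEq V] (p : Fin 6 → V) (z z' x : V) : ℕ :=
  visits p x + (if z = x then 1 else 0) + if z' = x then 1 else 0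

theorem visitsAdd_comm {V : Type*} [DecidableEq V] (p : Fin 6 → V) (z z' : V) :
    visitsAdd p z z' = visitsAdd p z' z := by
  funext x
  simp only [visitsAdd]
  omega

theorem visitsAdd_rotate {V : Type*} [DecidableEq V] (p : Fin 6 → V) (k : Fin 6) (z z' : V) :
    visitsAdd (fun i => p (i + k)) z z' = visitsAdd p z z' := by
  funext x
  simp only [visitsAdd, visits_rotate]

theorem visits_pos_iff {V : Type*} [DecidableEq V] {p : Fin 6 → V} {x : V} :
    visits p x ≠ 0 ↔ x ∈ Set.range p := by
  simp [visits]

theorem visits_apply_of_injective {V : Type*} [DecidableEq V] {p : Fin 6 → V}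
    (hp : Function.Injective p) (i : Fin 6) : visits p (p i) = 1 := by
  simp [visits, hp.eq_iff]

theorem visitsAdd_apply_of_injective {V : Type*} [DecidableEq V] {p : Fin 6 → V}
    (hp : Function.Injective p) (i j k : Fin 6) :
    visitsAdd p (p i) (p j) (p k) = 1 + (if i = k then 1 else 0) + if j = k then 1 else 0 := by
  simp [visitsAdd, visits_apply_of_injective hp, hp.eq_iff]

theorem IsAlternatingHexagon.rotate {V : Type*} {G : SimpleGraph V} {p : Fin 6 → V}
    (h : IsAlternatingHexagon G p) (k : Fin 6) :
    IsAlternatingHexagon G fun i => p (i + k) where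
  adj i := by simpa only [add_right_comm] using h.adj (i + k)
  ne_two i := by simpa only [add_right_comm] using h.ne_two (i + k)
  ne_three i := by simpa only [add_right_comm] using h.ne_three (i + k)

theorem not_adj_opposite {V : Type*} {G : SimpleGraph V} {p : Fin 6 → V}
    (hG : FourCycleFree G) (h : IsAlternatingHexagon G p) (i : Fin 6) :
    ¬ G.Adj (p i) (p (i + 3)) := by
  intro hadj
  have h0 := h.adj i
  have h1 := h.adj (i + 1)
  have h2 := h.adj (i + 2)
  have e1 : i + 1 + 1 = i + 2 := by omega
  have e2 : i + 2 + 1 = i + 3 := by omega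
  have e3 : i + 1 + 2 = i + 3 := by omega
  rw [e1] at h1
  rw [e2] at h2
  rcases hG _ _ _ _ h0 h1 h2 hadj.symm with h' | h'
  · exact h.ne_two i h'
  · exact h.ne_two (i + 1) (e3 ▸ h')

theorem visitsAdd_eq_zero {V : Type*} [DecidableEq V] {p : Fin 6 → V} {z z' x : V}
    (hx : x ∉ Set.range p) (hz : z ≠ x) (hz' : z' ≠ x) : visitsAdd p z z' x = 0 := by
  simp [visitsAdd, hz, hz', not_not.1 (visits_pos_iff.not.2 hx)]

theorem hexagon_sum_eq {V : Type*} [Fintype V] [DecidableEq V] {G : SimpleGraph V}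
    {p : Fin 6 → V} (hp : Function.Injective p) {w : V → V → ℕ} {i j : Fin 6}
    (hw : IsEdgeWeighting G w (visitsAdd p (p i) (p j))) (k : Fin 6) :
    ∑ l, w (p k) (p l) = 1 + (if i = k then 1 else 0) + if j = k then 1 else 0 := by
  rw [← visitsAdd_apply_of_injective hp]
  exact hw.sum_range_eq hp (fun x hx => visitsAdd_eq_zero hx (fun h => hx ⟨i, h⟩)
    fun h => hx ⟨j, h⟩) _

/-- In a hexagon without four-cycles, a side of the hexagon has positive weight in every
weighting with the degrees of the hexagon enlarged by this side. -/
theorem hexagon_weight_side {V : Type*} [Fintype V] [DecidableEq V] {G : SimpleGraph V}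
    {p : Fin 6 → V} (hG : FourCycleFree G) (h : IsAlternatingHexagon G p)
    (hp : Function.Injective p) {w : V → V → ℕ}
    (hw : IsEdgeWeighting G w (visitsAdd p (p 0) (p 1))) : w (p 0) (p 1) ≠ 0 := by
  intro h01
  have a12 := h.adj 1
  have a34 := h.adj 3
  have a50 := h.adj 5
  have a01 := h.adj 0
  have n03 := not_adj_opposite hG h 0
  have n14 := not_adj_opposite hG h 1
  have l05 := hw.le (p 5) (p 0)
  have l12 := hw.le (p 2) (p 1)
  have r0 := hexagon_sum_eq hp hw 0
  have r1 := hexagon_sum_eq hp hw 1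
  rw [visitsAdd_apply_of_injective hp] at l05 l12
  simp only [Fin.sum_univ_six] at r0 r1
  simp at a12 a34 a50 a01 n03 n14 l05 l12 r0 r1
  have hs := hw.symm
  have ha := hw.adj
  have z00 : w (p 0) (p 0) = 0 := by_contra fun hc => (ha _ _ hc).ne rfl
  have z11 : w (p 1) (p 1) = 0 := by_contra fun hc => (ha _ _ hc).ne rfl
  have z03 : w (p 0) (p 3) = 0 := by_contra fun hc => n03 (ha _ _ hc)
  have z14 : w (p 1) (p 4) = 0 := by_contra fun hc => n14 (ha _ _ hc)
  have c1 : w (p 0) (p 2) ≠ 0 ∨ w (p 0) (p 4) ≠ 0 := by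
    have := hs (p 0) (p 5)
    omega
  have c2 : w (p 1) (p 3) ≠ 0 ∨ w (p 1) (p 5) ≠ 0 := by
    have := hs (p 1) (p 2)
    have := hs (p 1) (p 0)
    omega
  have d12 := h.adj 2
  simp at d12
  rcases c1 with c1 | c1 <;> rcases c2 with c2 | c2 <;> replace c1 := ha _ _ c1 <;>
    replace c2 := ha _ _ c2
  · rcases hG _ _ _ _ c1 d12 c2.symm a01.symm with h' | h' <;> exact absurd h' (hp.ne (by decide))
  · rcases hG _ _ _ _ c1 a12.symm c2 a50 with h' | h' <;> exact absurd h' (hp.ne (by decide))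
  · rcases hG _ _ _ _ c1 a34.symm c2.symm a01.symm with h' | h' <;>
      exact absurd h' (hp.ne (by decide))
  · have a45 := h.adj 4
    simp at a45
    rcases hG _ _ _ _ c1 a45 c2.symm a01.symm with h' | h' <;>
      exact absurd h' (hp.ne (by decide))

/-- In a hexagon without four-cycles, a short chord has positive weight in every weighting
with the degrees of the hexagon enlarged by this chord. -/
theorem hexagon_weight_chord {V : Type*} [Fintype V] [DecidableEq V] {G : SimpleGraph V}
    {p : Fin 6 → V} (hG : FourCycleFree G) (h : IsAlternatingHexagon G p)
    (hp : Function.Injective p) (h02 : G.Adj (p 0) (p 2)) {w : V → V → ℕ}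
    (hw : IsEdgeWeighting G w (visitsAdd p (p 0) (p 2))) : w (p 0) (p 2) ≠ 0 := by
  intro z02
  have a01 := h.adj 0
  have a12 := h.adj 1
  have a23 := h.adj 2
  have a34 := h.adj 3
  have a45 := h.adj 4
  have a50 := h.adj 5
  have n03 := not_adj_opposite hG h 0
  have n25 := not_adj_opposite hG h 2
  have l1 := hexagon_sum_eq hp hw 1
  have l3 := hw.le (p 3) (p 2)
  have l5 := hw.le (p 5) (p 0)
  have r0 := hexagon_sum_eq hp hw 0
  have r2 := hexagon_sum_eq hp hw 2
  rw [visitsAdd_apply_of_injective hp] at l3 l5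
  simp only [Fin.sum_univ_six] at r0 r2 l1
  simp at a01 a12 a23 a34 a45 a50 n03 n25 l1 l3 l5 r0 r2
  have hs := hw.symm
  have ha := hw.adj
  have z00 : w (p 0) (p 0) = 0 := by_contra fun hc => (ha _ _ hc).ne rfl
  have z22 : w (p 2) (p 2) = 0 := by_contra fun hc => (ha _ _ hc).ne rfl
  have z03 : w (p 0) (p 3) = 0 := by_contra fun hc => n03 (ha _ _ hc)
  have z25 : w (p 2) (p 5) = 0 := by_contra fun hc => n25 (ha _ _ hc)
  have z04 : w (p 0) (p 4) = 0 := by_contra fun hc => by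
    rcases hG _ _ _ _ h02 a23 a34 (ha _ _ hc).symm with h' | h' <;>
      exact absurd h' (hp.ne (by decide))
  have z24 : w (p 2) (p 4) = 0 := by_contra fun hc => by
    rcases hG _ _ _ _ h02 (ha _ _ hc) a45 a50 with h' | h' <;>
      exact absurd h' (hp.ne (by decide))
  have := hs (p 0) (p 1)
  have := hs (p 2) (p 1)
  have := hs (p 2) (p 3)
  have := hs (p 0) (p 5)
  have := hs (p 2) (p 0)
  omega

/-- A weighting with the degrees of a hexagon enlarged by an edge between its vertices is
positive on that edge. -/
theorem hexagon_weight_inner {V : Type*} [Fintype V] [DecidableEq V] {G : SimpleGraph V}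
    {p : Fin 6 → V} (hG : FourCycleFree G) (h : IsAlternatingHexagon G p)
    (hp : Function.Injective p) {i j : Fin 6} (hij : G.Adj (p i) (p j)) {w : V → V → ℕ}
    (hw : IsEdgeWeighting G w (visitsAdd p (p i) (p j))) : w (p i) (p j) ≠ 0 := by
  have hp' (k : Fin 6) : Function.Injective fun i => p (i + k) :=
    hp.comp (add_left_injective k)
  have hcase : ∀ i j : Fin 6,
      j = i ∨ j = 1 + i ∨ j = 2 + i ∨ j = i + 3 ∨ i = 2 + j ∨ i = 1 + j := by decide
  rcases hcase i j with rfl | rfl | rfl | rfl | rfl | rfl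
  · exact absurd rfl hij.ne
  · simpa using hexagon_weight_side hG (h.rotate i) (hp' i) (w := w)
      (by simpa [visitsAdd_rotate] using hw)
  · simpa using hexagon_weight_chord hG (h.rotate i) (hp' i) (w := w) (by simpa using hij)
      (by simpa [visitsAdd_rotate] using hw)
  · exact absurd hij (not_adj_opposite hG h _)
  · rw [hw.symm]
    simpa using hexagon_weight_chord hG (h.rotate j) (hp' j) (w := w) (by simpa using hij.symm)
      (by simpa [visitsAdd_rotate, visitsAdd_comm] using hw)
  · rw [hw.symm]
    simpa using hexagon_weight_side hG (h.rotate j) (hp' j) (w := w)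
      (by simpa [visitsAdd_rotate, visitsAdd_comm] using hw)

theorem hexagon_outer_sum_eq {V : Type*} [Fintype V] [DecidableEq V] {G : SimpleGraph V}
    {p : Fin 6 → V} (hp : Function.Injective p) {y : V} (hy : y ∉ Set.range p)
    {w : V → V → ℕ} {i : Fin 6} (hw : IsEdgeWeighting G w (visitsAdd p y (p i))) (x : V) :
    w x y + ∑ l, w x (p l) = visitsAdd p y (p i) x := by
  have := hw.sum_range_eq (q := Fin.cons y p) (Fin.cons_injective_iff.2 ⟨hy, hp⟩)
    (fun x hx => by
      rw [Fin.range_cons, Set.mem_insert_iff, not_or] at hx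
      exact visitsAdd_eq_zero hx.2 (Ne.symm hx.1) fun h => hx.2 ⟨i, h⟩) x
  rwa [Fin.sum_univ_succ] at this

theorem visitsAdd_outer_apply {V : Type*} [DecidableEq V] {p : Fin 6 → V}
    (hp : Function.Injective p) {y : V} (hy : y ∉ Set.range p) (i j : Fin 6) :
    visitsAdd p y (p i) (p j) = 1 + if i = j then 1 else 0 := by
  have : y ≠ p j := fun h => hy ⟨j, h.symm⟩
  simp [visitsAdd, visits_apply_of_injective hp, hp.eq_iff, this]

theorem not_adj_of_common_neighbor {V : Type*} {G : SimpleGraph V} {p : Fin 6 → V}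
    (hG : FourCycleFree G) (h : IsAlternatingHexagon G p) {y : V} (hy : y ∉ Set.range p)
    {i j : Fin 6} (hij : j = i + 2 ∨ i = j + 2) (hi : G.Adj y (p i)) : ¬ G.Adj y (p j) := by
  intro hj
  have key (k : Fin 6) (h1 : G.Adj y (p k)) (h2 : G.Adj y (p (k + 2))) : False := by
    have h3 := h.adj (k + 1)
    rw [show k + 1 + 1 = k + 2 by omega] at h3
    rcases hG _ _ _ _ h1 (h.adj k) h3 h2.symm with h' | h'
    · exact hy ⟨_, h'.symm⟩
    · exact h.ne_two k h'
  rcases hij with rfl | rfl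
  · exact key _ hi hj
  · exact key _ hj hi

/-- A vertex outside a hexagon adjacent to two opposite vertices, and a weighting of the hexagon
enlarged by one of the edges which vanishes on this edge, force a chord. -/
theorem hexagon_chord_of_opposite {V : Type*} [Fintype V] [DecidableEq V] {G : SimpleGraph V}
    {p : Fin 6 → V} (hG : FourCycleFree G) (h : IsAlternatingHexagon G p)
    (hp : Function.Injective p) {y : V} (hy : y ∉ Set.range p)
    (h0 : G.Adj y (p 0)) (h3 : G.Adj y (p 3)) {w : V → V → ℕ}
    (hw : IsEdgeWeighting G w (visitsAdd p y (p 0))) (hz : w y (p 0) = 0) :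
    G.Adj (p 2) (p 4) := by
  have ha := hw.adj
  have hs := hw.symm
  have vanish {a b : V} (hab : ¬ G.Adj a b) : w a b = 0 := by_contra fun hc => hab (ha _ _ hc)
  have a23 := h.adj 2
  have a34 := h.adj 3
  simp at a23 a34
  have y1 := vanish (not_adj_of_common_neighbor hG h hy (j := 1) (by decide) h3)
  have y2 := vanish (not_adj_of_common_neighbor hG h hy (j := 2) (by decide) h0)
  have y4 := vanish (not_adj_of_common_neighbor hG h hy (j := 4) (by decide) h0)
  have y5 := vanish (not_adj_of_common_neighbor hG h hy (j := 5) (by decide) h3)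
  have yy := vanish (G.irrefl (v := y))
  have z00 := vanish (G.irrefl (v := p 0))
  have z22 := vanish (G.irrefl (v := p 2))
  have z02 : w (p 0) (p 2) = 0 := vanish fun hc => by
    rcases hG _ _ _ _ h0 hc a23 h3.symm with h' | h'
    · exact hy ⟨_, h'.symm⟩
    · exact absurd h' (hp.ne (by decide))
  have z04 : w (p 0) (p 4) = 0 := vanish fun hc => by
    rcases hG _ _ _ _ h0 hc a34.symm h3.symm with h' | h'
    · exact hy ⟨_, h'.symm⟩
    · exact absurd h' (hp.ne (by decide))
  have z03 : w (p 0) (p 3) = 0 := vanish (not_adj_opposite hG h 0)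
  have z25 : w (p 2) (p 5) = 0 := vanish (not_adj_opposite hG h 2)
  have hrow (k : Fin 6) := hexagon_outer_sum_eq hp hy hw (p k)
  have ry := hexagon_outer_sum_eq hp hy hw y
  rw [visitsAdd_comm, visitsAdd, not_not.1 (visits_pos_iff.not.2 hy)] at ry
  have n0 : p 0 ≠ y := fun h => hy ⟨_, h⟩
  simp only [visitsAdd_outer_apply hp hy, Fin.sum_univ_six] at hrow
  have r0 := hrow 0
  have r1 := hrow 1
  have r2 := hrow 2
  have r3 := hrow 3
  have r5 := hrow 5
  simp [Fin.sum_univ_six, n0] at r0 r1 r2 r3 r5 ry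
  refine ha _ _ fun z24 => ?_
  have := hs (p 0) y
  have := hs (p 2) y
  have := hs (p 3) y
  have := hs (p 0) (p 1)
  have := hs (p 0) (p 2)
  have := hs (p 0) (p 5)
  have := hs (p 1) (p 2)
  have := hs (p 2) (p 3)
  omega

/-- A vertex outside a hexagon adjacent to two consecutive vertices, and a weighting of the
hexagon enlarged by one of the edges which vanishes on this edge, force a chord. -/
theorem hexagon_chord_of_consecutive {V : Type*} [Fintype V] [DecidableEq V]
    {G : SimpleGraph V} {p : Fin 6 → V} (hG : FourCycleFree G) (h : IsAlternatingHexagon G p)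
    (hp : Function.Injective p) {y : V} (hy : y ∉ Set.range p)
    (h0 : G.Adj y (p 0)) (h1 : G.Adj y (p 1)) {w : V → V → ℕ}
    (hw : IsEdgeWeighting G w (visitsAdd p y (p 0))) (hz : w y (p 0) = 0) :
    G.Adj (p 0) (p 4) := by
  have ha := hw.adj
  have hs := hw.symm
  have vanish {a b : V} (hab : ¬ G.Adj a b) : w a b = 0 := by_contra fun hc => hab (ha _ _ hc)
  have a12 := h.adj 1
  simp at a12
  have y2 := vanish (not_adj_of_common_neighbor hG h hy (j := 2) (by decide) h0)
  have y3 := vanish (not_adj_of_common_neighbor hG h hy (j := 3) (by decide) h1)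
  have y4 := vanish (not_adj_of_common_neighbor hG h hy (j := 4) (by decide) h0)
  have y5 := vanish (not_adj_of_common_neighbor hG h hy (j := 5) (by decide) h1)
  have yy := vanish (G.irrefl (v := y))
  have z00 := vanish (G.irrefl (v := p 0))
  have z02 : w (p 0) (p 2) = 0 := vanish fun hc => by
    rcases hG _ _ _ _ h0 hc a12.symm h1.symm with h' | h'
    · exact hy ⟨_, h'.symm⟩
    · exact absurd h' (hp.ne (by decide))
  have z03 : w (p 0) (p 3) = 0 := vanish (not_adj_opposite hG h 0)
  have ry := hexagon_outer_sum_eq hp hy hw y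
  rw [visitsAdd_comm, visitsAdd, not_not.1 (visits_pos_iff.not.2 hy)] at ry
  have n0 : p 0 ≠ y := fun h => hy ⟨_, h⟩
  have r0 := hexagon_outer_sum_eq hp hy hw (p 0)
  have r1 := hexagon_outer_sum_eq hp hy hw (p 1)
  have l5 := hw.le (p 5) (p 0)
  rw [visitsAdd_outer_apply hp hy] at r0 r1 l5
  simp [Fin.sum_univ_six, n0] at r0 r1 ry l5
  refine ha _ _ fun z04 => ?_
  have := hs (p 0) y
  have := hs (p 1) y
  have := hs (p 0) (p 1)
  have := hs (p 0) (p 5)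
  omega

theorem IsAlternatingHexagon.reflect {V : Type*} {G : SimpleGraph V} {p : Fin 6 → V}
    (h : IsAlternatingHexagon G p) : IsAlternatingHexagon G fun i => p (1 - i) where
  adj i := by
    have := (h.adj (1 - (i + 1))).symm
    rwa [show 1 - (i + 1) + 1 = 1 - i by omega] at this
  ne_two i := by
    have := (h.ne_two (1 - (i + 2))).symm
    rwa [show 1 - (i + 2) + 2 = 1 - i by omega] at this
  ne_three i := by
    have := h.ne_three (1 - (i + 1))
    rw [show 1 - (i + 1) + 1 = 1 - i by omega, show 1 - (i + 1) + 3 = 1 - (i + 4) by omega,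
      show 1 - (i + 1) + 4 = 1 - (i + 3) by omega] at this
    exact fun h1 h2 => this h2 h1

theorem visitsAdd_reflect {V : Type*} [DecidableEq V] (p : Fin 6 → V) (z z' : V) :
    visitsAdd (fun i => p (1 - i)) z z' = visitsAdd p z z' := by
  funext x
  have : visits (fun i => p (1 - i)) x = visits p x :=
    Equiv.sum_comp (Equiv.subLeft (1 : Fin 6)) fun i => if p i = x then 1 else 0
  simp only [visitsAdd, this]

/-- The two edges joining an outer vertex to a hexagon without four-cycles cannot both be
avoided by weightings of the hexagon enlarged by the respective edge. -/
theorem hexagon_weight_outer {V : Type*} [Fintype V] [DecidableEq V] {G : SimpleGraph V}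
    {p : Fin 6 → V} (hG : FourCycleFree G) (h : IsAlternatingHexagon G p)
    (hp : Function.Injective p) {y : V} (hy : y ∉ Set.range p) {i j : Fin 6} (hij : i ≠ j)
    (hi : G.Adj y (p i)) (hj : G.Adj y (p j)) {w w' : V → V → ℕ}
    (hw : IsEdgeWeighting G w (visitsAdd p y (p i))) (hz : w y (p i) = 0)
    (hw' : IsEdgeWeighting G w' (visitsAdd p y (p j))) (hz' : w' y (p j) = 0) : False := by
  have hp' (k : Fin 6) : Function.Injective fun i => p (i + k) :=
    hp.comp (add_left_injective k)
  have hy' (k : Fin 6) : y ∉ Set.range fun i => p (i + k) := by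
    rintro ⟨l, hl⟩
    exact hy ⟨_, hl⟩
  have consecutive : ∀ {q : Fin 6 → V}, IsAlternatingHexagon G q → Function.Injective q →
      y ∉ Set.range q → G.Adj y (q 0) → G.Adj y (q 1) → ∀ {u u' : V → V → ℕ},
      IsEdgeWeighting G u (visitsAdd q y (q 0)) → u y (q 0) = 0 →
      IsEdgeWeighting G u' (visitsAdd q y (q 1)) → u' y (q 1) = 0 → False := by
    intro q hq hqi hyq h0 h1 u u' hu hu0 hu' hu0'
    have c1 := hexagon_chord_of_consecutive hG hq hqi hyq h0 h1 hu hu0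
    have c2 := hexagon_chord_of_consecutive hG hq.reflect
      (hqi.comp (sub_right_injective (b := (1 : Fin 6))))
      (fun ⟨l, hl⟩ => hyq ⟨_, hl⟩) h1 h0 (by rw [visitsAdd_reflect]; exact hu') hu0'
    have a34 := hq.adj 3
    have a01 := hq.adj 0
    simp at a34 a01 c2
    rcases hG _ _ _ _ c1 a34.symm c2.symm a01.symm with h' | h' <;>
      exact absurd h' (hqi.ne (by decide))
  have hcase : ∀ i j : Fin 6,
      j = i ∨ j = 1 + i ∨ (j = i + 2 ∨ i = j + 2) ∨ j = 3 + i ∨ i = 1 + j := by decide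
  rcases hcase i j with rfl | rfl | hd | rfl | rfl
  · exact hij rfl
  · refine consecutive (h.rotate i) (hp' i) (hy' i) (u := w) (u' := w') ?_ ?_ ?_ ?_ ?_ ?_ <;>
      simpa [visitsAdd_rotate]
  · exact not_adj_of_common_neighbor hG h hy hd hi hj
  · have c1 := hexagon_chord_of_opposite hG (h.rotate i) (hp' i) (hy' i) (w := w)
      (by simpa using hi) (by simpa using hj) (by simpa [visitsAdd_rotate] using hw)
      (by simpa using hz)
    have e : 3 + (3 + i) = i := by omega
    have c2 := hexagon_chord_of_opposite hG (h.rotate (3 + i)) (hp' _) (hy' _) (w := w')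
      (by simpa using hj) (by simpa [e] using hi) (by simpa [visitsAdd_rotate] using hw')
      (by simpa using hz')
    have a1 := (h.rotate i).adj 1
    have a4 := (h.rotate i).adj 4
    simp at a1 a4
    rw [show 2 + (3 + i) = 5 + i by omega, show 4 + (3 + i) = 1 + i by omega] at c2
    rcases hG _ _ _ _ a1 c1 a4 c2 with h' | h' <;>
      exact absurd h' (hp.ne ((add_left_injective i).ne (by decide)))
  · refine consecutive (h.rotate j) (hp' j) (hy' j) (u := w') (u' := w) ?_ ?_ ?_ ?_ ?_ ?_ <;>
      simpa [visitsAdd_rotate]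

/-- The five vertices of two triangles sharing the vertex `p 0 = p 3`. -/
def bowtieVertex {V : Type*} (p : Fin 6 → V) : Fin 5 → V :=
  ![p 0, p 1, p 2, p 4, p 5]

theorem bowtieVertex_injective {V : Type*} {G : SimpleGraph V} {p : Fin 6 → V}
    (h : IsAlternatingHexagon G p) (h03 : p 0 = p 3) :
    Function.Injective (bowtieVertex p) := by
  have a := h.adj
  have n := h.ne_two
  have m := h.ne_three
  have a0 := (a 0).ne
  have a1 := (a 1).ne
  have a3 := (a 3).ne
  have a4 := (a 4).ne
  have a5 := (a 5).ne
  have n0 := n 0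
  have n2 := n 2
  have n3 := n 3
  have n5 := n 5
  have m0 := m 0
  have m2 := m 2
  simp at a0 a1 a3 a4 a5 n0 n2 n3 n5 m0 m2
  intro i j hij
  fin_cases i <;> fin_cases j <;> simp [bowtieVertex] at hij ⊢ <;> grind

theorem range_bowtieVertex {V : Type*} {p : Fin 6 → V} (h03 : p 0 = p 3) :
    Set.range (bowtieVertex p) = Set.range p := by
  ext x
  simp only [Set.mem_range, Fin.exists_fin_succ, bowtieVertex]
  simp
  grind

theorem bowtie_adj {V : Type*} {G : SimpleGraph V} {p : Fin 6 → V}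
    (h : IsAlternatingHexagon G p) (h03 : p 0 = p 3) :
    (∀ i, i ≠ 0 → G.Adj (bowtieVertex p 0) (bowtieVertex p i)) ∧
      G.Adj (bowtieVertex p 1) (bowtieVertex p 2) ∧
      G.Adj (bowtieVertex p 3) (bowtieVertex p 4) := by
  have a0 := h.adj 0
  have a1 := h.adj 1
  have a2 := h.adj 2
  have a3 := h.adj 3
  have a4 := h.adj 4
  have a5 := h.adj 5
  simp at a0 a1 a2 a3 a4 a5
  rw [← h03] at a2 a3
  refine ⟨fun i hi => ?_, a1, a4⟩
  fin_cases i
  · exact absurd rfl hi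
  · exact a0
  · exact a2.symm
  · exact a3
  · exact a5.symm

theorem bowtie_common_neighbor {V : Type*} {G : SimpleGraph V} {p : Fin 6 → V}
    (h : IsAlternatingHexagon G p) (h03 : p 0 = p 3) {i j : Fin 5} (hij : i ≠ j) :
    ∃ k, G.Adj (bowtieVertex p i) (bowtieVertex p k) ∧
      G.Adj (bowtieVertex p k) (bowtieVertex p j) := by
  obtain ⟨h0, h12, h34⟩ := bowtie_adj h h03
  have key (l : Fin 5) (hl : l ≠ 0) : ∃ k, G.Adj (bowtieVertex p 0) (bowtieVertex p k) ∧
      G.Adj (bowtieVertex p k) (bowtieVertex p l) := by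
    fin_cases l
    · exact absurd rfl hl
    · exact ⟨2, h0 2 (by decide), h12.symm⟩
    · exact ⟨1, h0 1 (by decide), h12⟩
    · exact ⟨4, h0 4 (by decide), h34.symm⟩
    · exact ⟨3, h0 3 (by decide), h34⟩
  by_cases hi : i = 0
  · subst hi
    exact key j hij.symm
  by_cases hj : j = 0
  · subst hj
    obtain ⟨k, h1, h2⟩ := key i hi
    exact ⟨k, h2.symm, h1.symm⟩
  · exact ⟨0, (h0 i hi).symm, h0 j hj⟩

theorem bowtie_not_adj {V : Type*} {G : SimpleGraph V} {p : Fin 6 → V} (hG : FourCycleFree G)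
    (h : IsAlternatingHexagon G p) (h03 : p 0 = p 3) {i j : Fin 5}
    (hi : i = 1 ∨ i = 2) (hj : j = 3 ∨ j = 4) :
    ¬ G.Adj (bowtieVertex p i) (bowtieVertex p j) := by
  intro hij
  obtain ⟨h0, -, h34⟩ := bowtie_adj h h03
  have hinj := bowtieVertex_injective h h03
  have key (k : Fin 5) (hk0 : k ≠ 0) (hjk : G.Adj (bowtieVertex p j) (bowtieVertex p k))
      (hik : i ≠ k) (hj0 : j ≠ 0) (hi0 : i ≠ 0) : False := by
    rcases hG _ _ _ _ hij hjk (h0 k hk0).symm (h0 i hi0) with h' | h'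
    · exact hik (hinj h')
    · exact hj0 (hinj h')
  rcases hj with rfl | rfl
  · exact key 4 (by decide) h34 (by omega) (by decide) (by omega)
  · exact key 3 (by decide) h34.symm (by omega) (by decide) (by omega)

theorem visits_bowtieVertex {V : Type*} [DecidableEq V] {G : SimpleGraph V} {p : Fin 6 → V}
    (h : IsAlternatingHexagon G p) (h03 : p 0 = p 3) (i : Fin 5) :
    visits p (bowtieVertex p i) = if i = 0 then 2 else 1 := by
  have hinj := @(bowtieVertex_injective h h03).eq_iff
  have : visits p (bowtieVertex p i) = (if (0 : Fin 5) = i then 1 else 0) +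
      (if 1 = i then 1 else 0) + (if 2 = i then 1 else 0) + (if 0 = i then 1 else 0) +
      (if 3 = i then 1 else 0) + (if 4 = i then 1 else 0) := by
    simp only [← hinj, visits, Fin.sum_univ_six]
    simp only [bowtieVertex, h03]
    rfl
  rw [this]
  fin_cases i <;> rfl

/-- A weighting with the degrees of two triangles sharing a vertex enlarged by an edge between
their vertices is positive on that edge. -/
theorem bowtie_weight_inner {V : Type*} [Fintype V] [DecidableEq V] {G : SimpleGraph V}
    {p : Fin 6 → V} (hG : FourCycleFree G) (h : IsAlternatingHexagon G p) (h03 : p 0 = p 3)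
    {i j : Fin 5} (hij : G.Adj (bowtieVertex p i) (bowtieVertex p j)) {w : V → V → ℕ}
    (hw : IsEdgeWeighting G w (visitsAdd p (bowtieVertex p i) (bowtieVertex p j))) :
    w (bowtieVertex p i) (bowtieVertex p j) ≠ 0 := by
  have hinj := bowtieVertex_injective h h03
  have hrow (k : Fin 5) : ∑ l, w (bowtieVertex p k) (bowtieVertex p l) =
      (if k = 0 then 2 else 1) + (if i = k then 1 else 0) + if j = k then 1 else 0 := by
    rw [hw.sum_range_eq hinj fun x hx => visitsAdd_eq_zero (range_bowtieVertex h03 ▸ hx)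
      (fun h => hx ⟨i, h⟩) fun h => hx ⟨j, h⟩]
    simp only [visitsAdd, visits_bowtieVertex h h03, hinj.eq_iff]
  have vanish {a b : V} (hab : ¬ G.Adj a b) : w a b = 0 :=
    by_contra fun hc => hab (hw.adj _ _ hc)
  have cross (a b : Fin 5) (ha : a = 1 ∨ a = 2) (hb : b = 3 ∨ b = 4) :=
    vanish (bowtie_not_adj hG h h03 ha hb)
  have loop (a : Fin 5) := vanish (G.irrefl (v := bowtieVertex p a))
  have c13 := cross 1 3 (by decide) (by decide)
  have c14 := cross 1 4 (by decide) (by decide)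
  have c23 := cross 2 3 (by decide) (by decide)
  have c24 := cross 2 4 (by decide) (by decide)
  have hs (a b : Fin 5) := hw.symm (bowtieVertex p a) (bowtieVertex p b)
  have r0 := hrow 0
  have r1 := hrow 1
  have r2 := hrow 2
  have r3 := hrow 3
  have r4 := hrow 4
  simp only [Fin.sum_univ_five, loop, hs 1 0, hs 2 0, hs 3 0, hs 4 0, hs 2 1, hs 3 1, hs 4 1,
    hs 3 2, hs 4 2, hs 4 3, c13, c14, c23, c24] at r0 r1 r2 r3 r4
  have hne : i ≠ j := fun h => hij.ne (h ▸ rfl)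
  have hcase : ∀ i j : Fin 5, i ≠ j → ((i = 1 ∨ i = 2) ∧ (j = 3 ∨ j = 4)) ∨
      ((j = 1 ∨ j = 2) ∧ (i = 3 ∨ i = 4)) ∨ (i = 0 ∨ j = 0) ∨ (i = 1 ∧ j = 2) ∨
      (i = 2 ∧ j = 1) ∨ (i = 3 ∧ j = 4) ∨ (i = 4 ∧ j = 3) := by decide
  intro hz
  have hz' := hz
  rw [hw.symm] at hz'
  rcases hcase i j hne with ⟨hi, hj⟩ | ⟨hj, hi⟩ | hcase
  · exact bowtie_not_adj hG h h03 hi hj hij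
  · exact bowtie_not_adj hG h h03 hj hi hij.symm
  · clear hrow hw hij hG cross vanish hs loop
    fin_cases i <;> fin_cases j <;> simp at hcase hne <;> simp at r0 r1 r2 r3 r4 hz hz' <;> omega

/-- A vertex outside two triangles sharing a vertex has at most one neighbor on them. -/
theorem bowtie_outer_unique {V : Type*} {G : SimpleGraph V} {p : Fin 6 → V}
    (hG : FourCycleFree G) (h : IsAlternatingHexagon G p) (h03 : p 0 = p 3) {y : V}
    (hy : y ∉ Set.range p) {i j : Fin 5} (hi : G.Adj y (bowtieVertex p i))
    (hj : G.Adj y (bowtieVertex p j)) : i = j := by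
  by_contra hij
  obtain ⟨k, h1, h2⟩ := bowtie_common_neighbor h h03 hij
  rcases hG _ _ _ _ hi h1 h2 hj.symm with h' | h'
  · exact hy (range_bowtieVertex h03 ▸ ⟨k, h'.symm⟩)
  · exact hij (bowtieVertex_injective h h03 h')

theorem injective_or_bowtie {V : Type*} {G : SimpleGraph V} {p : Fin 6 → V}
    (h : IsAlternatingHexagon G p) : Function.Injective p ∨ ∃ k, p (0 + k) = p (3 + k) := by
  by_contra! hcon
  obtain ⟨hinj, hne⟩ := hcon
  refine hinj fun i j hij => ?_
  have hcase : ∀ i j : Fin 6, i = j ∨ j = i + 1 ∨ j = i + 2 ∨ j = 3 + i ∨ i = j + 2 ∨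
      i = j + 1 := by decide
  rcases hcase i j with rfl | rfl | rfl | rfl | rfl | rfl
  · rfl
  · exact absurd hij (h.adj i).ne
  · exact absurd hij (h.ne_two i)
  · exact absurd (by rwa [zero_add]) (hne i)
  · exact absurd hij.symm (h.ne_two j)
  · exact absurd hij.symm (h.adj j).ne

theorem weight_inner {V : Type*} [Fintype V] [DecidableEq V] {G : SimpleGraph V}
    {p : Fin 6 → V} (hG : FourCycleFree G) (h : IsAlternatingHexagon G p) {z z' : V}
    (hz : z ∈ Set.range p) (hz' : z' ∈ Set.range p) (hzz : G.Adj z z') {w : V → V → ℕ}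
    (hw : IsEdgeWeighting G w (visitsAdd p z z')) : w z z' ≠ 0 := by
  rcases injective_or_bowtie h with hp | ⟨k, hk⟩
  · obtain ⟨i, rfl⟩ := hz
    obtain ⟨j, rfl⟩ := hz'
    exact hexagon_weight_inner hG h hp hzz hw
  · have hr : Set.range (bowtieVertex fun i => p (i + k)) = Set.range p := by
      rw [range_bowtieVertex hk]
      exact (Equiv.addRight k).surjective.range_comp p
    rw [← hr] at hz hz'
    obtain ⟨i, rfl⟩ := hz
    obtain ⟨j, rfl⟩ := hz'
    exact bowtie_weight_inner hG (h.rotate k) hk hzz (by rwa [visitsAdd_rotate])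

theorem weight_outer {V : Type*} [Fintype V] [DecidableEq V] {G : SimpleGraph V}
    {p : Fin 6 → V} (hG : FourCycleFree G) (h : IsAlternatingHexagon G p) {y z z' : V}
    (hy : y ∉ Set.range p) (hz : z ∈ Set.range p) (hz' : z' ∈ Set.range p) (hne : z ≠ z')
    (hyz : G.Adj y z) (hyz' : G.Adj y z') {w w' : V → V → ℕ}
    (hw : IsEdgeWeighting G w (visitsAdd p y z)) (hw0 : w y z = 0)
    (hw' : IsEdgeWeighting G w' (visitsAdd p y z')) (hw0' : w' y z' = 0) : False := by
  rcases injective_or_bowtie h with hp | ⟨k, hk⟩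
  · obtain ⟨i, rfl⟩ := hz
    obtain ⟨j, rfl⟩ := hz'
    exact hexagon_weight_outer hG h hp hy (fun h => hne (congrArg p h)) hyz hyz' hw hw0 hw' hw0'
  · have hr : Set.range (fun i => p (i + k)) = Set.range p :=
      (Equiv.addRight k).surjective.range_comp p
    rw [← hr, ← range_bowtieVertex hk] at hz hz'
    obtain ⟨i, rfl⟩ := hz
    obtain ⟨j, rfl⟩ := hz'
    exact hne (congrArg _ (bowtie_outer_unique hG (h.rotate k) hk (hr ▸ hy) hyz hyz'))

/-- The exponent of the monomial attached to an edge. -/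
noncomputable def edgeExponent {V : Type*} (e : Sym2 V) : Option V →₀ ℕ :=
  Sym2.lift ⟨fun i j => Finsupp.single (some i) 1 + Finsupp.single (some j) 1 +
    Finsupp.single none 1, fun i j => by
    simp only [add_comm (Finsupp.single (some i) 1)]⟩ e

/-- The exponent of the image of the monomial with exponent `d` in the edge ring. -/
noncomputable def weight {V : Type*} {G : SimpleGraph V} :
    (G.edgeSet →₀ ℕ) →ₗ[ℕ] Option V →₀ ℕ :=
  Finsupp.linearCombination ℕ fun e : G.edgeSet => edgeExponent (e : Sym2 V)

theorem weight_single {V : Type*} {G : SimpleGraph V} (e : G.edgeSet) :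
    weight (Finsupp.single e 1) = edgeExponent (e : Sym2 V) := by
  simp [weight]

theorem edgeMonom_eq_monomial (K : Type*) [Field K] {V : Type*} (e : Sym2 V) :
    edgeMonom K e = monomial (edgeExponent e) 1 := by
  induction e with
  | h i j => simp [edgeMonom, edgeExponent, X, monomial_mul]

theorem edgeExponent_mk_some {V : Type*} [DecidableEq V] (i j x : V) :
    edgeExponent s(i, j) (some x) = (if i = x then 1 else 0) + if j = x then 1 else 0 := by
  simp [edgeExponent, Finsupp.single_apply]

theorem edgeExponent_none {V : Type*} (e : Sym2 V) : edgeExponent e none = 1 := by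
  induction e with
  | h i j => simp [edgeExponent]

theorem edgeExponent_injective {V : Type*} :
    Function.Injective (edgeExponent : Sym2 V → Option V →₀ ℕ) := by
  classical
  intro e f h
  refine Sym2.ext fun x => ?_
  have hx := DFunLike.congr_fun h (some x)
  induction e with
  | h i j =>
    induction f with
    | h k l =>
      rw [edgeExponent_mk_some, edgeExponent_mk_some] at hx
      simp only [Sym2.mem_iff]
      grind

theorem weight_none {V : Type*} {G : SimpleGraph V} (d : G.edgeSet →₀ ℕ) :
    weight d none = d.degree := by
  induction d using Finsupp.induction_linear with
  | zero => simp
  | add f g hf hg => simp [hf, hg]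
  | single e n =>
    rw [← mul_one n, ← smul_eq_mul, ← Finsupp.smul_single, map_smul, weight_single]
    simp [edgeExponent_none]

theorem degree_eq_of_weight_eq {V : Type*} {G : SimpleGraph V} {d d' : G.edgeSet →₀ ℕ}
    (h : weight d = weight d') : d.degree = d'.degree := by
  rw [← weight_none, h, weight_none]

theorem aeval_monomial_eq (K : Type*) [Field K] {V : Type*} {G : SimpleGraph V}
    (d : G.edgeSet →₀ ℕ) (c : K) :
    aeval (fun e : G.edgeSet => edgeMonom K (e : Sym2 V)) (monomial d c) =
      monomial (weight d) c := by
  simp only [edgeMonom_eq_monomial, aeval_monomial, monomial_pow, one_pow, weight,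
    Finsupp.linearCombination_apply]
  rw [monomial_finsupp_sum_index, algebraMap_eq]

theorem sub_mem_toricIdeal (K : Type*) [Field K] {V : Type*} {G : SimpleGraph V}
    {d d' : G.edgeSet →₀ ℕ} (h : weight d = weight d') :
    monomial d 1 - monomial d' 1 ∈ toricIdeal K G := by
  rw [toricIdeal, RingHom.mem_ker, map_sub]
  exact sub_eq_zero.2 ((aeval_monomial_eq K d 1).trans
    ((congrArg (fun t => monomial t 1) h).trans (aeval_monomial_eq K d' 1).symm))

theorem exists_weight_eq_of_mem_toricIdeal {K : Type*} [Field K] {V : Type*}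
    {G : SimpleGraph V} {f : MvPolynomial G.edgeSet K} (hf : f ∈ toricIdeal K G)
    {d : G.edgeSet →₀ ℕ} (hd : d ∈ f.support) :
    ∃ d' ∈ f.support, d' ≠ d ∧ weight d = weight d' := by
  classical
  by_contra! hcon
  have h0 : aeval (fun e : G.edgeSet => edgeMonom K (e : Sym2 V)) f = 0 := hf
  rw [f.as_sum, map_sum] at h0
  have h1 := congrArg (coeff (weight d)) h0
  simp only [aeval_monomial_eq, coeff_sum, coeff_monomial, coeff_zero] at h1
  rw [Finset.sum_eq_single d] at h1
  · simp only [if_true] at h1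
    exact mem_support_iff.1 hd h1
  · intro d' hd' hne
    exact if_neg fun h => hcon d' hd' hne h.symm
  · exact fun h => absurd hd h

/-- An ideal containing the binomials of the toric ideal in degree `n` contains its homogeneous
elements of degree `n`. -/
theorem mem_of_binomials_mem {K : Type*} [Field K] {V : Type*} {G : SimpleGraph V} {n : ℕ}
    {J : Ideal (MvPolynomial G.edgeSet K)}
    (hJ : ∀ d d' : G.edgeSet →₀ ℕ, d.degree = n → weight d = weight d' →
      monomial d 1 - monomial d' 1 ∈ J)
    {f : MvPolynomial G.edgeSet K} (hf : f ∈ toricIdeal K G) (hn : f.IsHomogeneous n) :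
    f ∈ J := by
  classical
  induction hc : f.support.card using Nat.strong_induction_on generalizing f with
  | _ c ih =>
    by_cases hf0 : f = 0
    · exact hf0 ▸ J.zero_mem
    obtain ⟨d, hd⟩ := support_nonempty.2 hf0
    obtain ⟨d', hd', hne, hw⟩ := exists_weight_eq_of_mem_toricIdeal hf hd
    have hdeg : d.degree = n := by
      rw [Finsupp.degree_eq_weight_one]; exact hn (mem_support_iff.1 hd)
    have hdeg' : d'.degree = n := degree_eq_of_weight_eq hw ▸ hdeg
    set b : MvPolynomial G.edgeSet K := C (coeff d f) * (monomial d 1 - monomial d' 1) with hb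
    have hbJ : b ∈ J := J.mul_mem_left _ (hJ d d' hdeg hw)
    have hbI : b ∈ toricIdeal K G := Ideal.mul_mem_left _ _ (sub_mem_toricIdeal K hw)
    have hbn : b.IsHomogeneous n := by
      rw [← zero_add n]
      exact (isHomogeneous_C _ _).mul
        ((isHomogeneous_monomial _ hdeg).sub (isHomogeneous_monomial _ hdeg'))
    have hcoeff (m) : coeff m b = coeff d f * ((if d = m then 1 else 0) -
        if d' = m then 1 else 0) := by
      rw [hb, coeff_C_mul, coeff_sub, coeff_monomial, coeff_monomial]
    have hsub : (f - b).support ⊂ f.support := by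
      refine (Finset.ssubset_iff_of_subset fun m hm => ?_).2 ⟨d, hd, ?_⟩
      · by_contra hmf
        have h1 : d ≠ m := fun h => hmf (h ▸ hd)
        have h2 : d' ≠ m := fun h => hmf (h ▸ hd')
        rw [mem_support_iff, coeff_sub, hcoeff, notMem_support_iff.1 hmf] at hm
        simp [h1, h2] at hm
      · rw [notMem_support_iff, coeff_sub, hcoeff]
        simp [hne]
    have := ih _ (hc ▸ Finset.card_lt_card hsub) (sub_mem hf hbI) (hn.sub hbn) rfl
    simpa using J.add_mem this hbJ

theorem LinearMap.apply_eq_sum_single {R M : Type*} [CommRing R] [AddCommGroup M] [Module R M]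
    {n : ℕ} (φ : (Fin n →₀ R) →ₗ[R] M) (x : Fin n →₀ R) :
    φ x = ∑ j, x j • φ (Finsupp.single j 1) := by
  conv_lhs => rw [← Finsupp.univ_sum_single x, map_sum]
  refine Finset.sum_congr rfl fun j _ => ?_
  rw [← map_smul, Finsupp.smul_single, smul_eq_mul, mul_one]

theorem HasLinearResolution.le_degree {σ K : Type*} [Field K] {q : ℕ}
    {I : Ideal (MvPolynomial σ K)} (h : HasLinearResolution q I) {f : MvPolynomial σ K}
    (hf : f ∈ I) {d : σ →₀ ℕ} (hd : d ∈ f.support) : q ≤ d.degree := by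
  obtain ⟨b, φ₀, φ, hr, -, -, hF, -⟩ := h
  rw [← hr] at hf
  obtain ⟨x, rfl⟩ := hf
  suffices φ₀ x ∈ idealOfVars σ K ^ q from (mem_pow_idealOfVars_iff q _).1 this d hd
  rw [LinearMap.apply_eq_sum_single]
  refine Submodule.sum_mem _ fun j _ => Ideal.mul_mem_left _ _ ?_
  refine (mem_pow_idealOfVars_iff q _).2 fun m hm => ?_
  rw [Finsupp.degree_eq_weight_one]
  exact (hF j (mem_support_iff.1 hm)).ge

theorem coeff_mul_of_isHomogeneous {σ K : Type*} [Field K] {n : ℕ} {F : MvPolynomial σ K}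
    (hF : F.IsHomogeneous n) (x : MvPolynomial σ K) {d : σ →₀ ℕ} (hd : d.degree = n) :
    coeff d (x * F) = coeff 0 x * coeff d F := by
  classical
  rw [coeff_mul]
  refine Finset.sum_eq_single (0, d) (fun m hm hne => ?_) fun h => ?_
  · rw [Finset.HasAntidiagonal.mem_antidiagonal] at hm
    by_contra h0
    have hm2 : m.2.degree = n := by
      rw [Finsupp.degree_eq_weight_one]; exact hF (right_ne_zero_of_mul h0)
    have hm1 : m.1 = 0 := by
      have := congrArg Finsupp.degree hm
      rw [map_add, hd, hm2] at this
      exact (Finsupp.degree_eq_zero_iff _).1 (by omega)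
    refine hne (Prod.ext hm1 ?_)
    rw [← hm, hm1, zero_add]
  · exact absurd (Finset.HasAntidiagonal.mem_antidiagonal.2 (zero_add d)) h

/-- A homogeneous combination of homogeneous elements of the same degree has constant
coefficients. -/
theorem sum_mul_eq_sum_C_mul {σ K : Type*} [Field K] {n b : ℕ}
    {F : Fin b → MvPolynomial σ K} (hF : ∀ j, (F j).IsHomogeneous n)
    (x : Fin b → MvPolynomial σ K) (hx : (∑ j, x j * F j).IsHomogeneous n) :
    ∑ j, x j * F j = ∑ j, C (coeff 0 (x j)) * F j := by
  have hC : (∑ j, C (coeff 0 (x j)) * F j).IsHomogeneous n :=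
    IsHomogeneous.sum _ _ _ fun j _ => by
      simpa using (isHomogeneous_C σ (coeff 0 (x j))).mul (hF j)
  ext d
  by_cases hd : d.degree = n
  · simp only [coeff_sum, coeff_mul_of_isHomogeneous (hF _) _ hd, coeff_zero_C]
  · rw [Finsupp.degree_eq_weight_one] at hd
    by_cases h1 : coeff d (∑ j, x j * F j) = 0
    · by_cases h2 : coeff d (∑ j, C (coeff 0 (x j)) * F j) = 0
      · rw [h1, h2]
      · exact absurd (hC h2) hd
    · exact absurd (hx h1) hd

/-- Let `f` and `g` be elements of degree `q` of an ideal with `q`-linear resolution, such that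
the monomial `u` occurs in `f` with coefficient `1` but not in `g`. Then each monomial of `g` is
divisible by a variable `e` occurring in a linear form `l` such that `l * f` is a combination,
with linear coefficients, of elements of the ideal not involving `u`. -/
theorem HasLinearResolution.exists_linear_mul_eq {σ K : Type*} [Field K] {q : ℕ}
    {I : Ideal (MvPolynomial σ K)} (h : HasLinearResolution q I) {f g : MvPolynomial σ K}
    (hf : f ∈ I) (hfq : f.IsHomogeneous q) (hg : g ∈ I) (hgq : g.IsHomogeneous q)
    {u : σ →₀ ℕ} (hfu : coeff u f = 1) (hgu : coeff u g = 0) {u' : σ →₀ ℕ}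
    (hu' : u' ∈ g.support) :
    ∃ (e : σ) (l : MvPolynomial σ K) (b : ℕ) (L D : Fin b → MvPolynomial σ K),
      u' e ≠ 0 ∧ coeff (Finsupp.single e 1) l ≠ 0 ∧
      (∀ j, (L j).IsHomogeneous 1) ∧ (∀ j, D j ∈ I) ∧ (∀ j, coeff u (D j) = 0) ∧
      l * f = ∑ j, L j * D j := by
  classical
  obtain ⟨b, φ₀, φ, hr, hk, -, hF, hL⟩ := h
  set F : Fin (b 0) → MvPolynomial σ K := fun j => φ₀ (Finsupp.single j 1) with hFdef
  have hφ (x) : φ₀ x = ∑ j, x j * F j := φ₀.apply_eq_sum_single x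
  have hFI (j) : F j ∈ I := hr ▸ LinearMap.mem_range_self φ₀ _
  have hrep {p : MvPolynomial σ K} (hp : p ∈ I) (hpq : p.IsHomogeneous q) :
      ∃ a : Fin (b 0) → K, p = ∑ j, C (a j) * F j := by
    rw [← hr] at hp
    obtain ⟨x, rfl⟩ := hp
    rw [hφ] at hpq ⊢
    exact ⟨_, sum_mul_eq_sum_C_mul hF _ hpq⟩
  obtain ⟨a, ha⟩ := hrep hf hfq
  obtain ⟨a', ha'⟩ := hrep hg hgq
  set c : Fin (b 0) → K := fun j => coeff u (F j) with hc
  have hac : ∑ j, c j * a j = 1 := by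
    rw [← hfu, ha, coeff_sum]
    exact Finset.sum_congr rfl fun j _ => by rw [coeff_C_mul, mul_comm]
  have hac' : ∑ j, c j * a' j = 0 := by
    rw [← hgu, ha', coeff_sum]
    exact Finset.sum_congr rfl fun j _ => by rw [coeff_C_mul, mul_comm]
  set s : Fin (b 0) →₀ MvPolynomial σ K :=
    Finsupp.equivFunOnFinite.symm fun j => C (a j) * g - C (a' j) * f with hs
  have hs' (j) : s j = C (a j) * g - C (a' j) * f := rfl
  have hsker : s ∈ LinearMap.ker φ₀ := by
    rw [LinearMap.mem_ker, hφ]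
    simp only [hs', sub_mul, Finset.sum_sub_distrib]
    have h1 : ∑ j, C (a j) * g * F j = g * f := by
      conv_rhs => rw [ha, Finset.mul_sum]
      exact Finset.sum_congr rfl fun j _ => by ring
    have h2 : ∑ j, C (a' j) * f * F j = f * g := by
      conv_rhs => rw [ha', Finset.mul_sum]
      exact Finset.sum_congr rfl fun j _ => by ring
    rw [h1, h2]; ring
  have hsum : ∑ j, C (c j) * s j = g := by
    have : ∑ j, C (c j) * s j = C (∑ j, c j * a j) * g - C (∑ j, c j * a' j) * f := by
      simp only [hs', map_sum, map_mul, Finset.sum_mul, ← Finset.sum_sub_distrib]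
      exact Finset.sum_congr rfl fun j _ => by ring
    rw [this, hac, hac']; simp
  rw [hk] at hsker
  obtain ⟨p, hp⟩ := hsker
  set l : Fin (b 1) → MvPolynomial σ K :=
    fun k => ∑ j, C (c j) * φ 0 (Finsupp.single k 1) j with hl
  have hlq (k) : (l k).IsHomogeneous 1 := IsHomogeneous.sum _ _ _ fun j _ => by
    simpa using (isHomogeneous_C σ (c j)).mul (hL 0 k j)
  have hgl : g = ∑ k, p k * l k := by
    rw [← hsum, ← hp, LinearMap.apply_eq_sum_single]
    simp only [hl, Finsupp.coe_finsetSum, Finset.sum_apply, Finsupp.smul_apply, smul_eq_mul,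
      Finset.mul_sum]
    rw [Finset.sum_comm]
    exact Finset.sum_congr rfl fun k _ => Finset.sum_congr rfl fun j _ => by ring
  obtain ⟨k, hk0⟩ : ∃ k, coeff u' (p k * l k) ≠ 0 := by
    by_contra! hcon
    rw [mem_support_iff, hgl, coeff_sum] at hu'
    exact hu' (Finset.sum_eq_zero fun k _ => hcon k)
  rw [coeff_mul] at hk0
  obtain ⟨m, hm, hm0⟩ := Finset.exists_ne_zero_of_sum_ne_zero hk0
  rw [Finset.HasAntidiagonal.mem_antidiagonal] at hm
  have hm1 : m.2.degree = 1 := by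
    rw [Finsupp.degree_eq_weight_one]; exact hlq k (right_ne_zero_of_mul hm0)
  obtain ⟨e, he⟩ : ∃ e, Finsupp.single e 1 = m.2 :=
    Finsupp.range_single_one.superset hm1
  refine ⟨e, l k, b 0, fun j => - φ 0 (Finsupp.single k 1) j, fun j => F j - C (c j) * f, ?_, ?_,
    fun j => (hL 0 k j).neg, fun j => I.sub_mem (hFI j) (I.mul_mem_left _ hf),
    fun j => ?_, ?_⟩
  · rw [← hm, ← he]; simp
  · rw [he]; exact right_ne_zero_of_mul hm0
  · rw [coeff_sub, coeff_C_mul, hfu, mul_one, sub_self]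
  · have h0 : ∑ j, φ 0 (Finsupp.single k 1) j * F j = 0 := by
      rw [← hφ, ← LinearMap.mem_ker, hk]
      exact LinearMap.mem_range_self _ _
    simp only [mul_sub, Finset.sum_sub_distrib, neg_mul, Finset.sum_neg_distrib, h0, hl,
      Finset.sum_mul]
    simp only [neg_zero, zero_sub, neg_neg]
    exact Finset.sum_congr rfl fun j _ => by ring

/-- The edges of `G` satisfy no toric relation of degree at most two. -/
def NoQuadraticRelation {V : Type*} (G : SimpleGraph V) : Prop :=
  ∀ d d' : G.edgeSet →₀ ℕ, d.degree ≤ 2 → weight d = weight d' → d = d'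

theorem NoQuadraticRelation.of_hasLinearResolution {K : Type*} [Field K] {V : Type*}
    {G : SimpleGraph V} (h : HasLinearResolution 3 (toricIdeal K G)) :
    NoQuadraticRelation G := by
  classical
  intro d d' hd hw
  by_contra hne
  have hmem : d ∈ (monomial d 1 - monomial d' 1 : MvPolynomial G.edgeSet K).support := by
    simp [coeff_monomial, Ne.symm hne]
  have := h.le_degree (sub_mem_toricIdeal K hw) hmem
  omega

theorem weight_injOn_degree_one {V : Type*} {G : SimpleGraph V} {e e' : G.edgeSet}
    (h : weight (Finsupp.single e 1) = weight (Finsupp.single e' 1)) : e = e' := by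
  rw [weight_single, weight_single] at h
  exact Subtype.ext (edgeExponent_injective h)

theorem exists_eq_single_add {σ : Type*} {d : σ →₀ ℕ} {e : σ} (h : d e ≠ 0) :
    ∃ d', d = Finsupp.single e 1 + d' := by
  refine ⟨d - Finsupp.single e 1, (add_tsub_cancel_of_le ?_).symm⟩
  rw [Finsupp.single_le_iff]
  omega

/-- Distinct cubic monomials of the same weight have no common variable. -/
theorem NoQuadraticRelation.disjoint {V : Type*} {G : SimpleGraph V}
    (h : NoQuadraticRelation G) {d d' : G.edgeSet →₀ ℕ} (hd : d.degree = 3)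
    (hw : weight d = weight d') (hne : d ≠ d') {e : G.edgeSet} (he : d e ≠ 0) : d' e = 0 := by
  by_contra he'
  obtain ⟨c, rfl⟩ := exists_eq_single_add he
  obtain ⟨c', rfl⟩ := exists_eq_single_add he'
  rw [map_add, map_add] at hw
  rw [map_add, Finsupp.degree_single] at hd
  exact hne (congrArg _ (h c c' (by omega) (add_left_cancel hw)))

theorem NoQuadraticRelation.fourCycleFree {V : Type*} {G : SimpleGraph V}
    (h : NoQuadraticRelation G) : FourCycleFree G := by
  classical
  intro a b c d hab hbc hcd hda
  rw [← G.mem_edgeSet] at hab hbc hcd hda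
  have key := h (Finsupp.single ⟨s(a, b), hab⟩ 1 + Finsupp.single ⟨s(c, d), hcd⟩ 1)
    (Finsupp.single ⟨s(b, c), hbc⟩ 1 + Finsupp.single ⟨s(d, a), hda⟩ 1) (by simp) (by
      simp only [map_add, weight_single, edgeExponent, Sym2.lift_mk]
      abel)
  have h1 := DFunLike.congr_fun key ⟨s(a, b), hab⟩
  simp only [Finsupp.add_apply, Finsupp.single_apply, if_true, Subtype.mk.injEq] at h1
  have h2 : s(b, c) = s(a, b) ∨ s(d, a) = s(a, b) := by
    by_contra! hcon
    rw [if_neg hcon.1, if_neg hcon.2] at h1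
    omega
  simp only [Sym2.eq_iff] at h2
  have := (G.mem_edgeSet.1 hab).ne
  grind

theorem exists_eq_single_add_of_weight_ne_zero {V : Type*} {G : SimpleGraph V}
    {d : G.edgeSet →₀ ℕ} {a : V} (h : weight d (some a) ≠ 0) :
    ∃ (y : V) (hy : G.Adj a y) (d' : G.edgeSet →₀ ℕ),
      d = Finsupp.single ⟨s(a, y), hy⟩ 1 + d' := by
  classical
  rw [weight, Finsupp.linearCombination_apply, Finsupp.sum, Finsupp.finsetSum_apply] at h
  obtain ⟨⟨e, he⟩, hed, hne⟩ := Finset.exists_ne_zero_of_sum_ne_zero h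
  rw [Finsupp.mem_support_iff] at hed
  have hae : a ∈ e := by
    induction e with
    | h i j =>
      rw [Finsupp.smul_apply, edgeExponent_mk_some] at hne
      rw [Sym2.mem_iff]
      grind
  obtain ⟨y, rfl⟩ := hae
  exact ⟨y, he, exists_eq_single_add hed⟩

/-- The edges of a closed walk of length six. -/
def walkEdge {V : Type*} {G : SimpleGraph V} {p : Fin 6 → V}
    (h : ∀ i, G.Adj (p i) (p (i + 1))) (i : Fin 6) : G.edgeSet :=
  ⟨s(p i, p (i + 1)), h i⟩

theorem edgeExponent_mk {V : Type*} (a b : V) :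
    edgeExponent s(a, b) = Finsupp.single (some a) 1 + Finsupp.single (some b) 1 +
      Finsupp.single none 1 := rfl

/-- A cubic relation comes from a closed walk of length six. -/
theorem NoQuadraticRelation.exists_walk {V : Type*} {G : SimpleGraph V}
    (h : NoQuadraticRelation G) {u v : G.edgeSet →₀ ℕ} (hu : u.degree = 3)
    (hw : weight u = weight v) (hne : u ≠ v) :
    ∃ (p : Fin 6 → V) (hp : ∀ i, G.Adj (p i) (p (i + 1))),
      u = Finsupp.single (walkEdge hp 0) 1 + Finsupp.single (walkEdge hp 2) 1 +
        Finsupp.single (walkEdge hp 4) 1 ∧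
      v = Finsupp.single (walkEdge hp 1) 1 + Finsupp.single (walkEdge hp 3) 1 +
        Finsupp.single (walkEdge hp 5) 1 := by
  classical
  have hdisj {e : G.edgeSet} (he : u e ≠ 0) : v e = 0 := h.disjoint hu hw hne he
  have hv : v.degree = 3 := degree_eq_of_weight_eq hw ▸ hu
  obtain ⟨⟨e, he⟩, hue⟩ : ∃ e, u e ≠ 0 := by
    by_contra! h0
    have : u = 0 := Finsupp.ext h0
    simp [this] at hu
  obtain ⟨u₁, hu₁⟩ := exists_eq_single_add hue
  induction e with
  | h a b =>
  have hwb : weight v (some b) ≠ 0 := by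
    rw [← hw, hu₁, map_add, weight_single, Finsupp.add_apply, edgeExponent_mk_some]
    simp
  obtain ⟨c, hbc, v₁, hv₁⟩ := exists_eq_single_add_of_weight_ne_zero hwb
  have hca : c ≠ a := by
    rintro rfl
    have h1 := hdisj hue
    rw [hv₁] at h1
    simp [Sym2.eq_swap] at h1
  have e₁ : Finsupp.single (some a) 1 + weight u₁ = Finsupp.single (some c) 1 + weight v₁ := by
    ext t
    have h' := DFunLike.congr_fun hw t
    simp only [hu₁, hv₁, map_add, weight_single, edgeExponent_mk, Finsupp.add_apply] at h' ⊢
    omega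
  have hwc : weight u₁ (some c) ≠ 0 := by
    have := DFunLike.congr_fun e₁ (some c)
    simp [hca.symm] at this
    omega
  obtain ⟨d, hcd, u₂, hu₂⟩ := exists_eq_single_add_of_weight_ne_zero hwc
  have e₂ : Finsupp.single (some a) 1 + Finsupp.single (some d) 1 + Finsupp.single none 1 +
      weight u₂ = weight v₁ := by
    ext t
    have h' := DFunLike.congr_fun e₁ t
    simp only [hu₂, map_add, weight_single, edgeExponent_mk, Finsupp.add_apply] at h' ⊢
    omega
  have hwd : weight v₁ (some d) ≠ 0 := by
    rw [← e₂]; simp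
  obtain ⟨e, hde, v₂, hv₂⟩ := exists_eq_single_add_of_weight_ne_zero hwd
  have e₃ : Finsupp.single (some a) 1 + weight u₂ = Finsupp.single (some e) 1 + weight v₂ := by
    ext t
    have h' := DFunLike.congr_fun e₂ t
    simp only [hv₂, map_add, weight_single, edgeExponent_mk, Finsupp.add_apply] at h' ⊢
    omega
  have hu₂1 : u₂.degree = 1 := by
    rw [hu₁, hu₂] at hu
    simp at hu
    omega
  have hv₂1 : v₂.degree = 1 := by
    rw [hv₁, hv₂] at hv
    simp at hv
    omega
  have hea : e ≠ a := by
    rintro rfl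
    have huv₂ := h u₂ v₂ (by omega) (add_left_cancel e₃)
    obtain ⟨x, hx⟩ : ∃ x, Finsupp.single x 1 = u₂ := Finsupp.range_single_one.superset hu₂1
    have hux : u x ≠ 0 := by
      rw [hu₁, hu₂, ← hx]; simp
    have hvx := hdisj hux
    rw [hv₁, hv₂, ← huv₂, ← hx] at hvx
    simp at hvx
  have hwe : weight u₂ (some e) ≠ 0 := by
    have := DFunLike.congr_fun e₃ (some e)
    simp [hea.symm] at this
    omega
  obtain ⟨f, hef, u₃, hu₃⟩ := exists_eq_single_add_of_weight_ne_zero hwe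
  have hu₃0 : u₃ = 0 := by
    rw [hu₃] at hu₂1
    simpa [Finsupp.degree_eq_zero_iff] using hu₂1
  have e₄ : Finsupp.single (some a) 1 + Finsupp.single (some f) 1 + Finsupp.single none 1 =
      weight v₂ := by
    ext t
    have h' := DFunLike.congr_fun e₃ t
    simp only [hu₃, hu₃0, map_zero, Finsupp.coe_zero, Pi.zero_apply, map_add, weight_single,
      edgeExponent_mk, Finsupp.add_apply] at h' ⊢
    omega
  have hwf : weight v₂ (some f) ≠ 0 := by
    rw [← e₄]; simp
  obtain ⟨g, hfg, v₃, hv₃⟩ := exists_eq_single_add_of_weight_ne_zero hwf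
  have hv₃0 : v₃ = 0 := by
    rw [hv₃] at hv₂1
    simpa [Finsupp.degree_eq_zero_iff] using hv₂1
  have hga : g = a := by
    have h' := DFunLike.congr_fun e₄ (some g)
    simp [hv₃, hv₃0, weight_single, edgeExponent_mk, Finsupp.single_apply] at h'
    grind
  subst hga
  refine ⟨![g, b, c, d, e, f], ?_, ?_, ?_⟩
  · intro i
    fin_cases i
    exacts [he, hbc, hcd, hde, hef, hfg]
  · rw [hu₁, hu₂, hu₃, hu₃0, add_zero, ← add_assoc]
    rfl
  · rw [hv₁, hv₂, hv₃, hv₃0, add_zero, ← add_assoc]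
    rfl

theorem walkEdge_ne_of_parity {V : Type*} {G : SimpleGraph V} {u v : G.edgeSet →₀ ℕ}
    (hdisj : ∀ e, u e ≠ 0 → v e = 0) {p : Fin 6 → V} (hp : ∀ i, G.Adj (p i) (p (i + 1)))
    (hu : u = Finsupp.single (walkEdge hp 0) 1 + Finsupp.single (walkEdge hp 2) 1 +
      Finsupp.single (walkEdge hp 4) 1)
    (hv : v = Finsupp.single (walkEdge hp 1) 1 + Finsupp.single (walkEdge hp 3) 1 +
      Finsupp.single (walkEdge hp 5) 1) (i j : Fin 6) (hi : i.val % 2 ≠ j.val % 2) :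
    walkEdge hp i ≠ walkEdge hp j := by
  have hui (i : Fin 6) (hi : i.val % 2 = 0) : u (walkEdge hp i) ≠ 0 := by
    subst hu
    fin_cases i <;> simp at hi ⊢
  have hvi (i : Fin 6) (hi : i.val % 2 = 1) : v (walkEdge hp i) ≠ 0 := by
    subst hv
    fin_cases i <;> simp at hi ⊢
  intro heq
  rcases Nat.mod_two_eq_zero_or_one i.val with h0 | h1
  · exact hvi j (by omega) (heq ▸ hdisj _ (hui i h0))
  · exact hvi i h1 (heq ▸ hdisj _ (hui j (by omega)))

theorem isAlternatingHexagon_of_disjoint {V : Type*} {G : SimpleGraph V} {u v : G.edgeSet →₀ ℕ}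
    (hdisj : ∀ e, u e ≠ 0 → v e = 0) {p : Fin 6 → V} (hp : ∀ i, G.Adj (p i) (p (i + 1)))
    (hu : u = Finsupp.single (walkEdge hp 0) 1 + Finsupp.single (walkEdge hp 2) 1 +
      Finsupp.single (walkEdge hp 4) 1)
    (hv : v = Finsupp.single (walkEdge hp 1) 1 + Finsupp.single (walkEdge hp 3) 1 +
      Finsupp.single (walkEdge hp 5) 1) : IsAlternatingHexagon G p where
  adj := hp
  ne_two i h := by
    refine walkEdge_ne_of_parity hdisj hp hu hv i (i + 1) (by clear h; revert i; decide) ?_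
    refine Subtype.ext ?_
    simp only [walkEdge]
    rw [h, Sym2.eq_swap, add_assoc]
    rfl
  ne_three i h h' := by
    refine walkEdge_ne_of_parity hdisj hp hu hv i (i + 3) (by clear h h'; revert i; decide) ?_
    refine Subtype.ext ?_
    simp only [walkEdge]
    rw [h, h', add_assoc]
    rfl

theorem weight_eq_visits {V : Type*} [DecidableEq V] {G : SimpleGraph V} {u : G.edgeSet →₀ ℕ}
    {p : Fin 6 → V} (hp : ∀ i, G.Adj (p i) (p (i + 1)))
    (hu : u = Finsupp.single (walkEdge hp 0) 1 + Finsupp.single (walkEdge hp 2) 1 +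
      Finsupp.single (walkEdge hp 4) 1) (x : V) : weight u (some x) = visits p x := by
  simp only [hu, map_add, weight_single, Finsupp.add_apply, walkEdge, edgeExponent_mk_some,
    visits, Fin.sum_univ_six, zero_add, show (2 + 1 : Fin 6) = 3 from rfl,
    show (4 + 1 : Fin 6) = 5 from rfl]
  ring

open Classical in
/-- The exponent `d`, seen as a symmetric function of pairs of vertices. -/
noncomputable def edgeMult {V : Type*} {G : SimpleGraph V} (d : G.edgeSet →₀ ℕ) (x y : V) : ℕ :=
  if h : s(x, y) ∈ G.edgeSet then d ⟨s(x, y), h⟩ else 0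

theorem edgeMult_add {V : Type*} {G : SimpleGraph V} (d d' : G.edgeSet →₀ ℕ) (x y : V) :
    edgeMult (d + d') x y = edgeMult d x y + edgeMult d' x y := by
  unfold edgeMult
  split_ifs <;> simp

theorem edgeMult_single {V : Type*} [DecidableEq V] {G : SimpleGraph V} (e : G.edgeSet) (n : ℕ)
    (x y : V) :
    edgeMult (Finsupp.single e n) x y = if (e : Sym2 V) = s(x, y) then n else 0 := by
  classical
  unfold edgeMult
  split_ifs with h1 h2 h2
  · simp [← h2]
  · rw [Finsupp.single_apply, if_neg fun h => h2 (congrArg Subtype.val h)]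
  · exact absurd (h2 ▸ e.2) h1
  · rfl

theorem sum_edgeMult {V : Type*} [Fintype V] {G : SimpleGraph V} (d : G.edgeSet →₀ ℕ) (x : V) :
    ∑ y, edgeMult d x y = weight d (some x) := by
  classical
  induction d using Finsupp.induction_linear with
  | zero => simp [edgeMult]
  | add f g hf hg => simp [edgeMult_add, Finset.sum_add_distrib, hf, hg]
  | single e n =>
    rw [← mul_one n, ← smul_eq_mul, ← Finsupp.smul_single, map_smul, weight_single,
      Finsupp.smul_single]
    obtain ⟨e, he⟩ := e
    simp only [edgeMult_single, Finsupp.smul_apply, smul_eq_mul, mul_one]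
    induction e with
    | h i j =>
      have hij : i ≠ j := (G.mem_edgeSet.1 he).ne
      rw [edgeExponent_mk_some]
      by_cases hi : i = x
      · subst hi
        simp [hij.symm]
      · by_cases hj : j = x
        · subst hj
          simp [hij, Sym2.eq_swap (a := i)]
        · simp [hi, hj]

theorem isEdgeWeighting_edgeMult {V : Type*} [Fintype V] {G : SimpleGraph V}
    (d : G.edgeSet →₀ ℕ) : IsEdgeWeighting G (edgeMult d) fun x => weight d (some x) where
  symm x y := by
    classical
    exact congrArg (fun e => if h : e ∈ G.edgeSet then d ⟨e, h⟩ else 0) Sym2.eq_swap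
  adj x y h := by
    by_contra hxy
    exact h (dif_neg hxy)
  sum_eq := sum_edgeMult d

theorem weight_ne_zero_of_mem {V : Type*} {G : SimpleGraph V} {d : G.edgeSet →₀ ℕ}
    {e : G.edgeSet} (he : d e ≠ 0) {z : V} (hz : z ∈ (e : Sym2 V)) : weight d (some z) ≠ 0 := by
  classical
  obtain ⟨d', rfl⟩ := exists_eq_single_add he
  obtain ⟨e, h⟩ := e
  obtain ⟨y, rfl⟩ := hz
  simp [weight_single, edgeExponent_mk_some]

/-- The variable `e` can be exchanged against a variable of `u` such that the resulting monomial
is part of a toric relation. -/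
def IsExchange {V : Type*} {G : SimpleGraph V} (u : G.edgeSet →₀ ℕ) (e : G.edgeSet) : Prop :=
  ∃ (e₁ : G.edgeSet) (w w' : G.edgeSet →₀ ℕ), e₁ ≠ e ∧
    Finsupp.single e₁ 1 + w = u + Finsupp.single e 1 ∧ w ≠ w' ∧ weight w = weight w'

theorem HasLinearResolution.exists_isExchange {K : Type*} [Field K] {V : Type*}
    {G : SimpleGraph V} (h : HasLinearResolution 3 (toricIdeal K G)) {u v : G.edgeSet →₀ ℕ}
    (hu : u.degree = 3) (hw : weight u = weight v) (hne : u ≠ v)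
    {g : MvPolynomial G.edgeSet K} (hg : g ∈ toricIdeal K G) (hg3 : g.IsHomogeneous 3)
    (hgu : coeff u g = 0) {u' : G.edgeSet →₀ ℕ} (hu' : u' ∈ g.support) :
    ∃ e, u' e ≠ 0 ∧ IsExchange u e := by
  classical
  have hv : v.degree = 3 := degree_eq_of_weight_eq hw ▸ hu
  have hdisj := fun e => (NoQuadraticRelation.of_hasLinearResolution h).disjoint hu hw hne (e := e)
  obtain ⟨e, l, b, L, D, he, hle, hL, hD, hDu, hsum⟩ := h.exists_linear_mul_eq
    (sub_mem_toricIdeal K hw)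
    ((isHomogeneous_monomial 1 hu).sub (isHomogeneous_monomial 1 hv)) hg hg3
    (by simp [coeff_monomial, hne.symm]) hgu hu'
  refine ⟨e, he, ?_⟩
  have hvle : ¬ v ≤ Finsupp.single e 1 + u := by
    intro hle
    have : v ≤ Finsupp.single e 1 := fun x => by
      by_cases hx : u x = 0
      · simpa [hx] using hle x
      · simp [hdisj x hx]
    have := Finsupp.degree_mono this
    rw [hv, Finsupp.degree_single] at this
    omega
  have hcoeff : coeff (Finsupp.single e 1 + u) (∑ j, L j * D j) ≠ 0 := by
    rw [← hsum, mul_sub, coeff_sub, coeff_mul_monomial, coeff_mul_monomial', if_neg hvle]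
    simpa using hle
  rw [coeff_sum] at hcoeff
  obtain ⟨j, -, hj⟩ := Finset.exists_ne_zero_of_sum_ne_zero hcoeff
  rw [coeff_mul] at hj
  obtain ⟨⟨m₁, w⟩, hm, hm0⟩ := Finset.exists_ne_zero_of_sum_ne_zero hj
  rw [Finset.HasAntidiagonal.mem_antidiagonal] at hm
  have hm1 : m₁.degree = 1 := by
    rw [Finsupp.degree_eq_weight_one]; exact hL j (left_ne_zero_of_mul hm0)
  obtain ⟨e₁, rfl⟩ : ∃ e₁, Finsupp.single e₁ 1 = m₁ := Finsupp.range_single_one.superset hm1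
  obtain ⟨w', -, hww', hweq⟩ := exists_weight_eq_of_mem_toricIdeal (hD j)
    (mem_support_iff.2 (right_ne_zero_of_mul hm0))
  refine ⟨e₁, w, w', ?_, hm.trans (add_comm _ _), hww'.symm, hweq⟩
  rintro rfl
  have : w = u := add_left_cancel hm
  subst this
  exact right_ne_zero_of_mul hm0 (hDu j)

theorem NoQuadraticRelation.exists_weighting_of_isExchange {V : Type*} [Fintype V]
    [DecidableEq V] {G : SimpleGraph V} (h : NoQuadraticRelation G) {u : G.edgeSet →₀ ℕ}
    (hu : u.degree = 3) {p : Fin 6 → V} (hup : ∀ x, weight u (some x) = visits p x) {z z' : V}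
    {he : s(z, z') ∈ G.edgeSet} (hex : IsExchange u ⟨s(z, z'), he⟩) :
    ∃ w, IsEdgeWeighting G w (visitsAdd p z z') ∧ w z z' = 0 := by
  obtain ⟨e₁, w, w', he₁, hsum, hne, hw⟩ := hex
  have hwdeg : w.degree = 3 := by
    have := congrArg Finsupp.degree hsum
    simp [hu] at this
    omega
  have hwe : w ⟨s(z, z'), he⟩ ≠ 0 := by
    have := DFunLike.congr_fun hsum ⟨s(z, z'), he⟩
    simp [he₁] at this
    omega
  refine ⟨edgeMult (Finsupp.single e₁ 1 + w'), ?_, ?_⟩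
  · convert isEdgeWeighting_edgeMult (Finsupp.single e₁ 1 + w') using 1
    funext x
    rw [map_add, ← hw, ← map_add, hsum, map_add, weight_single, Finsupp.add_apply, hup,
      edgeExponent_mk_some, ← add_assoc]
    rfl
  · rw [edgeMult, dif_pos he, Finsupp.add_apply, h.disjoint hwdeg hw hne hwe]
    simp [he₁]

theorem HasLinearResolution.exists_next_exchange {K : Type*} [Field K] {V : Type*}
    [DecidableEq V]
    {G : SimpleGraph V} (h : HasLinearResolution 3 (toricIdeal K G)) {u v : G.edgeSet →₀ ℕ}
    (hu : u.degree = 3) (hw : weight u = weight v) (hne : u ≠ v) {p : Fin 6 → V}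
    (hup : ∀ x, weight u (some x) = visits p x) {e : G.edgeSet} (hex : IsExchange u e) :
    ∃ e' : G.edgeSet, IsExchange u e' ∧ e' ≠ e ∧
      ∀ z ∈ (e' : Sym2 V), z ∈ Set.range p ∨ z ∈ (e : Sym2 V) := by
  have hlow := NoQuadraticRelation.of_hasLinearResolution h
  obtain ⟨e₁, w, w', he₁, hsum, hww', hweq⟩ := hex
  have hwdeg : w.degree = 3 := by
    have := congrArg Finsupp.degree hsum
    simp [hu] at this
    omega
  have hwdeg' : w'.degree = 3 := degree_eq_of_weight_eq hweq ▸ hwdeg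
  have hwe : w e ≠ 0 := by
    have := DFunLike.congr_fun hsum e
    simp [he₁] at this
    omega
  have hwu : w ≠ u := by
    rintro rfl
    rw [add_comm] at hsum
    exact he₁ (Finsupp.single_left_injective one_ne_zero (add_left_cancel hsum))
  have hwu' : w' ≠ u := by
    rintro rfl
    have := congrArg weight hsum
    rw [map_add, map_add, hweq, add_comm] at this
    exact he₁ (weight_injOn_degree_one (add_left_cancel this))
  obtain ⟨e', he', hex'⟩ := h.exists_isExchange hu hw hne (sub_mem_toricIdeal K hweq)
    ((isHomogeneous_monomial 1 hwdeg).sub (isHomogeneous_monomial 1 hwdeg'))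
    (by simp [coeff_monomial, hwu, hwu']) (u' := w') (by simp [coeff_monomial, hww'])
  refine ⟨e', hex', ?_, fun z hz => ?_⟩
  · rintro rfl
    exact he' (hlow.disjoint hwdeg hweq hww' hwe)
  · have hz1 := weight_ne_zero_of_mem he' hz
    rw [← hweq] at hz1
    have hz2 := DFunLike.congr_fun (congrArg weight hsum) (some z)
    rw [map_add, map_add, Finsupp.add_apply, Finsupp.add_apply, hup, weight_single (e := e)] at hz2
    by_contra! hcon
    have hv : visits p z = 0 := by
      by_contra h0
      exact hcon.1 ((visits_pos_iff).1 h0)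
    have hz3 : edgeExponent (e : Sym2 V) (some z) = 0 := by
      have hze := hcon.2
      generalize (e : Sym2 V) = t at hze
      induction t with
      | h i j =>
        rw [edgeExponent_mk_some]
        simp only [Sym2.mem_iff] at hze
        grind
    omega

theorem HasLinearResolution.not_isExchange {K : Type*} [Field K] {V : Type*} [Fintype V]
    {G : SimpleGraph V} (h : HasLinearResolution 3 (toricIdeal K G)) {u v : G.edgeSet →₀ ℕ}
    (hu : u.degree = 3) (hw : weight u = weight v) (hne : u ≠ v) (e : G.edgeSet) :
    ¬ IsExchange u e := by
  classical
  have hlow := NoQuadraticRelation.of_hasLinearResolution h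
  have hfour := hlow.fourCycleFree
  obtain ⟨p, hp, hup, hvp⟩ := hlow.exists_walk hu hw hne
  have hhex := isAlternatingHexagon_of_disjoint (fun _ => hlow.disjoint hu hw hne) hp hup hvp
  have hvis := weight_eq_visits hp hup
  have hnext := fun e => h.exists_next_exchange hu hw hne hvis (e := e)
  have hinner (e : G.edgeSet) (hex : IsExchange u e) :
      ∃ y ∈ (e : Sym2 V), y ∉ Set.range p := by
    by_contra! hcon
    obtain ⟨e, he⟩ := e
    induction e with
    | h z z' =>
      obtain ⟨w, hwt, hw0⟩ := hlow.exists_weighting_of_isExchange hu hvis hex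
      exact weight_inner hfour hhex (hcon z (by simp)) (hcon z' (by simp)) he hwt hw0
  have houter (e : G.edgeSet) (hex : IsExchange u e) : ∀ z ∈ (e : Sym2 V), z ∉ Set.range p := by
    intro z hz hzp
    obtain ⟨y, hy, hyp⟩ := hinner e hex
    obtain ⟨e', hex', hee', hsub⟩ := hnext e hex
    obtain ⟨y', hy', hyp'⟩ := hinner e' hex'
    obtain ⟨e, he⟩ := e
    obtain ⟨e', he'⟩ := e'
    have hyz : y ≠ z := fun h => hyp (h ▸ hzp)
    obtain rfl : e = s(y, z) := ((Sym2.mem_and_mem_iff hyz).1 ⟨hy, hz⟩)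
    obtain rfl : y' = y := by
      have := (hsub y' hy').resolve_left hyp'
      rcases Sym2.mem_iff.1 this with rfl | rfl
      · rfl
      · exact absurd hzp hyp'
    obtain ⟨z', rfl⟩ := hy'
    have hyz' : y' ≠ z' := (G.mem_edgeSet.1 he').ne
    have hzz' : z ≠ z' := by
      rintro rfl
      exact hee' rfl
    have hzp' : z' ∈ Set.range p := by
      refine (hsub z' (by simp)).resolve_right fun h => ?_
      rcases Sym2.mem_iff.1 h with rfl | rfl
      · exact hyz' rfl
      · exact hzz' rfl
    obtain ⟨w, hwt, hw0⟩ := hlow.exists_weighting_of_isExchange hu hvis hex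
    obtain ⟨w', hwt', hw0'⟩ := hlow.exists_weighting_of_isExchange hu hvis hex'
    exact weight_outer hfour hhex hyp hzp hzp' hzz' he he' hwt hw0 hwt' hw0'
  intro hex
  obtain ⟨e', hex', hee', hsub⟩ := hnext e hex
  refine hee' (Subtype.ext ?_)
  obtain ⟨e', he'⟩ := e'
  induction e' with
  | h a b =>
    have ha := (hsub a (by simp)).resolve_left (houter _ hex' a (by simp))
    have hb := (hsub b (by simp)).resolve_left (houter _ hex' b (by simp))
    exact ((Sym2.mem_and_mem_iff (G.mem_edgeSet.1 he').ne).1 ⟨ha, hb⟩).symm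

theorem HasLinearResolution.le_of_forall_isHomogeneous {σ K : Type*} [Field K] {q : ℕ}
    {I J : Ideal (MvPolynomial σ K)} (h : HasLinearResolution q I)
    (hJ : ∀ f ∈ I, f.IsHomogeneous q → f ∈ J) : I ≤ J := by
  obtain ⟨b, φ₀, φ, hr, -, -, hF, -⟩ := h
  intro f hf
  rw [← hr] at hf
  obtain ⟨x, rfl⟩ := hf
  rw [LinearMap.apply_eq_sum_single]
  exact Submodule.sum_mem _ fun j _ =>
    J.mul_mem_left _ (hJ _ (hr ▸ LinearMap.mem_range_self φ₀ _) (hF j))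

theorem walkBinom_mem_toricIdeal (K : Type*) [Field K] {V : Type*} {G : SimpleGraph V}
    {v : ℕ → V} (h : ∀ k, k < 6 → G.Adj (v k) (v (k + 1))) (hv : v 6 = v 0) :
    walkBinom K G v h ∈ toricIdeal K G := by
  simp only [walkBinom, X, monomial_mul, mul_one]
  refine sub_mem_toricIdeal K ?_
  simp only [map_add, weight_single, edgeExponent_mk, hv]
  abel

theorem HasLinearResolution.toricIdeal_eq_span_walkBinom {K : Type*} [Field K] {V : Type*}
    {G : SimpleGraph V} (h : HasLinearResolution 3 (toricIdeal K G)) :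
    toricIdeal K G = Ideal.span
      {f : MvPolynomial G.edgeSet K |
        ∃ (v : ℕ → V) (h : ∀ k, k < 6 → G.Adj (v k) (v (k + 1))),
          v 6 = v 0 ∧ f = walkBinom K G v h} := by
  refine le_antisymm (h.le_of_forall_isHomogeneous fun f hf hf3 => ?_) (Ideal.span_le.2 ?_)
  · refine mem_of_binomials_mem (fun d d' hd hw => ?_) hf hf3
    by_cases hne : d = d'
    · rw [hne, sub_self]
      exact zero_mem _
    obtain ⟨p, hp, rfl, rfl⟩ :=
      (NoQuadraticRelation.of_hasLinearResolution h).exists_walk hd hw hne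
    refine Ideal.subset_span ⟨fun k => p (Fin.ofNat 6 k), fun k hk => ?_, rfl, ?_⟩
    · interval_cases k
      exacts [hp 0, hp 1, hp 2, hp 3, hp 4, hp 5]
    · simp only [walkBinom, X, monomial_mul, mul_one]
      rfl
  · rintro _ ⟨v, hv, h6, rfl⟩
    exact walkBinom_mem_toricIdeal K hv h6

theorem HasLinearResolution.exists_toricIdeal_eq_span_singleton {K : Type*} [Field K] {V : Type*}
    [Fintype V] {G : SimpleGraph V} (h : HasLinearResolution 3 (toricIdeal K G)) :
    ∃ f, toricIdeal K G = Ideal.span {f} := by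
  classical
  by_cases hrel : ∃ u v : G.edgeSet →₀ ℕ, u.degree = 3 ∧ weight u = weight v ∧ u ≠ v
  · obtain ⟨u, v, hu, hw, hne⟩ := hrel
    have hv : v.degree = 3 := degree_eq_of_weight_eq hw ▸ hu
    set f : MvPolynomial G.edgeSet K := monomial u 1 - monomial v 1 with hf
    have hfI : f ∈ toricIdeal K G := sub_mem_toricIdeal K hw
    have hfu : coeff u f = 1 := by simp [hf, coeff_monomial, hne.symm]
    have hf3 : f.IsHomogeneous 3 :=
      (isHomogeneous_monomial 1 hu).sub (isHomogeneous_monomial 1 hv)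
    refine ⟨f, le_antisymm (h.le_of_forall_isHomogeneous fun g hg hg3 => ?_) ?_⟩
    · have hzero : g - C (coeff u g) * f = 0 := by
        rw [← support_eq_empty]
        refine Finset.eq_empty_of_forall_notMem fun u' hu' => ?_
        obtain ⟨e, -, hex⟩ := h.exists_isExchange hu hw hne
          (sub_mem hg (Ideal.mul_mem_left _ _ hfI))
          (hg3.sub (by simpa using (isHomogeneous_C _ (coeff u g)).mul hf3))
          (by rw [coeff_sub, coeff_C_mul, hfu, mul_one, sub_self]) hu'
        exact h.not_isExchange hu hw hne e hex
      rw [sub_eq_zero.1 hzero]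
      exact Ideal.mul_mem_left _ _ (Ideal.mem_span_singleton_self f)
    · rwa [Ideal.span_singleton_le_iff_mem]
  · push Not at hrel
    refine ⟨0, le_antisymm (h.le_of_forall_isHomogeneous fun g hg hg3 => ?_) (by simp)⟩
    refine mem_of_binomials_mem (fun d d' hd hw => ?_) hg hg3
    rw [hrel d d' hd hw, sub_self]
    exact zero_mem _

/-- If the edge ring `K[G]` of a finite connected simple graph has a
`3`-linear resolution, then the toric ideal `I_G` is generated by the degree-`3`
binomials `f_Γ` arising from even closed walks `Γ` of length `6`, and `I_G` is
generated by at most two elements. -/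
theorem toricIdeal_of_three_linear_resolution
    {N : ℕ} (K : Type*) [Field K] (G : SimpleGraph (Fin N)) (hG : G.Connected)
    (h3 : HasLinearResolution 3 (toricIdeal K G)) :
    toricIdeal K G = Ideal.span
      {f : MvPolynomial G.edgeSet K |
        ∃ (v : ℕ → Fin N) (h : ∀ k, k < 6 → G.Adj (v k) (v (k + 1))),
          v 6 = v 0 ∧ f = walkBinom K G v h} ∧
    ∃ f g : MvPolynomial G.edgeSet K,
      toricIdeal K G = Ideal.span {f, g} := by
  obtain ⟨f, hf⟩ := h3.exists_toricIdeal_eq_span_singleton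
  exact ⟨h3.toricIdeal_eq_span_walkBinom, f, f, by rw [hf, Set.pair_eq_singleton]⟩
end
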